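/- arXiv:2103.02924 — 5 statements merged into one kernel-verified Lean document; each statement's English description precedes it below -/
import Mathlib

section
/- Let val be the optimal value of the GMP over the simplex Δ_{n−1} with f_0, f_1, ..., f_m homogeneous polynomials of degree d and b_1, ..., b_m ∈ ℝ, and assume the GMP is feasible and a dual optimal solution (ȳ, t) ∈ ℝ^m × ℝ_{≥0} exists. Set f_{m+1} := (x_1 + ... + x_n)^d (which equals 1 on Δ_{n−1}), ȳ_{m+1} := −t, y_0 := 1 and y_i := −ȳ_i for i ∈ {1,...,m+1}. Then for every integer r > d(d−1)/2 + 1, 0 ≤ val − f_LP^(r) ≤ ( Σ_{i=0}^{m+1} B(y_i f_i) + t ) · d(d−1) / ( 2(r−1) − d(d−1) ). -/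
open MeasureTheory MvPolynomial

/-- For a homogeneous polynomial `f = ∑_{|α| = d} f_α x^α` of degree `d`,
`B(f) = max_{|α| = d} (α₁!⋯αₙ!/d!)·f_α`. -/
noncomputable def Bcoef {n : ℕ} (d : ℕ) (f : MvPolynomial (Fin n) ℝ) : ℝ :=
  sSup {c : ℝ | ∃ α : Fin n →₀ ℕ, (∑ i, α i) = d ∧
    c = ((∏ i, Nat.factorial (α i) : ℕ) : ℝ) / (Nat.factorial d : ℝ) * coeff α f}


theorem aux_strong_dual {K : Type*} [TopologicalSpace K] [CompactSpace K] [T2Space K]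
    [MeasurableSpace K] [BorelSpace K] {m : ℕ} (g0 : C(K, ℝ)) (g : Fin m → C(K, ℝ))
    (b : Fin m → ℝ) (μ0 : FiniteMeasure K) (hμ0 : μ0.mass ≤ 1)
    (hb : ∀ i, ∫ x, g i x ∂(μ0 : Measure K) = b i) (c : ℝ)
    (hc : ∀ μ : FiniteMeasure K, μ.mass ≤ 1 → (∀ i, ∫ x, g i x ∂(μ : Measure K) = b i) →
      c < ∫ x, g0 x ∂(μ : Measure K)) :
    ∃ (y : Fin m → ℝ) (s : ℝ), 0 ≤ s ∧ (∀ x, 0 ≤ g0 x - ∑ i, y i * g i x + s) ∧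
      c ≤ ∑ i, y i * b i - s := by
  have hint : ∀ (h : C(K, ℝ)) (μ : FiniteMeasure K), Integrable h (μ : Measure K) := by
    intro h μ
    exact h.continuous.integrable_of_hasCompactSupport (HasCompactSupport.of_compactSpace h)
  let G : FiniteMeasure K → ℝ × (Fin m → ℝ) := fun μ =>
    (∫ x, g0 x ∂(μ : Measure K), fun i => ∫ x, g i x ∂(μ : Measure K))
  have hG : Continuous G := by
    refine Continuous.prodMk ?_ (continuous_pi fun i => ?_)
    · exact FiniteMeasure.continuous_integral_continuousMap g0
    · exact FiniteMeasure.continuous_integral_continuousMap (g i)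
  have hlin : ∀ (h : C(K, ℝ)) (a a' : NNReal) (μ ν : FiniteMeasure K),
      ∫ x, h x ∂((a • μ + a' • ν : FiniteMeasure K) : Measure K) =
        a * ∫ x, h x ∂(μ : Measure K) + a' * ∫ x, h x ∂(ν : Measure K) := by
    intro h a a' μ ν
    rw [FiniteMeasure.toMeasure_add, integral_add_measure (hint h _) (hint h _),
      FiniteMeasure.toMeasure_smul, FiniteMeasure.toMeasure_smul,
      integral_smul_nnreal_measure, integral_smul_nnreal_measure]
    rfl
  let T : Set (FiniteMeasure K) := {μ | μ.mass ≤ 1}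
  have hT : IsCompact (G '' T) :=
    (isCompact_setOfPred_finiteMeasure_le_of_compactSpace K 1).image hG
  have hconv : Convex ℝ (G '' T) := by
    rintro _ ⟨μ, hμ, rfl⟩ _ ⟨ν, hν, rfl⟩ a a' ha ha' haa
    lift a to NNReal using ha
    lift a' to NNReal using ha'
    refine ⟨a • μ + a' • ν, ?_, ?_⟩
    · have h1 : a + a' = 1 := by exact_mod_cast haa
      have : (a • μ + a' • ν).mass = a * μ.mass + a' * ν.mass := by
        simp [FiniteMeasure.mass]
      show (a • μ + a' • ν).mass ≤ 1
      rw [this]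
      calc a * μ.mass + a' * ν.mass ≤ a * 1 + a' * 1 := by
            gcongr
            · exact hμ
            · exact hν
        _ = 1 := by simpa using h1
    · simp only [G, hlin]
      ext <;> simp
  let R : Set (ℝ × (Fin m → ℝ)) := Set.Iic c ×ˢ {b}
  have hR : Convex ℝ R := (convex_Iic c).prod (convex_singleton b)
  have hRc : IsClosed R := isClosed_Iic.prod isClosed_singleton
  have hdisj : Disjoint (G '' T) R := by
    rw [Set.disjoint_left]
    rintro _ ⟨μ, hμ, rfl⟩ ⟨h1, h2⟩
    have := hc μ hμ (fun i => congrFun h2 i)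
    exact absurd this (not_lt.mpr h1)
  obtain ⟨φ, u, v, h1, huv, h2⟩ := geometric_hahn_banach_compact_closed hconv hT hR hRc hdisj
  set l0 : ℝ := φ (1, 0) with hl0
  set l : Fin m → ℝ := fun i => φ (0, Pi.single i 1) with hl
  have hφ : ∀ z0 z, φ (z0, z) = l0 * z0 + ∑ i, l i * z i := by
    intro z0 z
    have : ((z0, z) : ℝ × (Fin m → ℝ)) = z0 • ((1 : ℝ), (0 : Fin m → ℝ)) +
        ∑ i, z i • ((0 : ℝ), (Pi.single i 1 : Fin m → ℝ)) := by
      ext j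
      · simp [Prod.fst_sum]
      · simp [Prod.snd_sum, Finset.sum_apply, Pi.single_apply]
    rw [this, map_add, map_smul, map_sum]
    simp only [map_smul, smul_eq_mul, hl0, hl]
    simp only [mul_comm]
  have hu0 : 0 < u := by
    have := h1 (G 0) ⟨0, by simp [T, FiniteMeasure.mass], rfl⟩
    have h0 : G 0 = 0 := by simp [G]; rfl
    rw [h0] at this
    simpa using this
  have hray : ∀ z0 ≤ c, v < l0 * z0 + ∑ i, l i * b i := by
    intro z0 hz
    rw [← hφ]
    exact h2 _ ⟨hz, rfl⟩
  have hl0neg : l0 < 0 := by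
    by_contra hcon
    push Not at hcon
    have hm := h1 (G μ0) ⟨μ0, hμ0, rfl⟩
    have : G μ0 = (∫ x, g0 x ∂(μ0 : Measure K), b) := by
      simp only [G]; congr 1; ext i; exact hb i
    rw [this, hφ] at hm
    have h3 := hray (min c (∫ x, g0 x ∂(μ0 : Measure K))) (min_le_left _ _)
    have h4 := mul_le_mul_of_nonneg_left (min_le_right c (∫ x, g0 x ∂(μ0 : Measure K))) hcon
    linarith
  have hpos : 0 < -l0 := by linarith
  refine ⟨fun i => l i / (-l0), u / (-l0), by positivity, ?_, ?_⟩
  · intro x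
    let δ : FiniteMeasure K := ⟨Measure.dirac x, inferInstance⟩
    have hd := h1 (G δ) ⟨δ, by
      show (Measure.dirac x Set.univ).toNNReal ≤ 1
      simp, rfl⟩
    have hGd : G δ = (g0 x, fun i => g i x) := by
      have : ∀ h : C(K, ℝ), ∫ z, h z ∂(Measure.dirac x) = h x := fun h =>
        integral_dirac' _ _ h.continuous.stronglyMeasurable
      simp only [G, δ, FiniteMeasure.toMeasure_mk, this]
    rw [hGd, hφ] at hd
    have : g0 x - ∑ i, l i / (-l0) * g i x + u / (-l0) =
        (u - (l0 * g0 x + ∑ i, l i * g i x)) / (-l0) := by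
      have : ∑ i, l i / (-l0) * g i x = (∑ i, l i * g i x) / (-l0) := by
        rw [Finset.sum_div]; congr 1; ext i; ring
      have hne : l0 ≠ 0 := hl0neg.ne
      rw [this]; field_simp; ring
    rw [this]
    apply div_nonneg _ hpos.le
    linarith
  · have h3 := hray c le_rfl
    have : ∑ i, l i / (-l0) * b i = (∑ i, l i * b i) / (-l0) := by
      rw [Finset.sum_div]; congr 1; ext i; ring
    rw [this, ← sub_div, le_div_iff₀ hpos]
    linarith


theorem aux_deg {n : ℕ} (α : Fin n →₀ ℕ) : α.degree = ∑ i, α i := by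
  rw [Finsupp.degree_eq_sum]

theorem aux_expand {n e : ℕ} {q : MvPolynomial (Fin n) ℝ} (hq : q.IsHomogeneous e) :
    q = ∑ β ∈ Finset.finsuppAntidiag Finset.univ e, coeff β q • monomial β (1 : ℝ) := by
  ext γ
  rw [coeff_sum]
  simp only [coeff_smul, coeff_monomial, smul_eq_mul, mul_ite, mul_one, mul_zero]
  rw [Finset.sum_ite_eq']
  split_ifs with h
  · rfl
  · apply hq.coeff_eq_zero
    rw [aux_deg]
    intro h'
    exact h (by simp [h'])

theorem aux_eval_smul {n e : ℕ} {q : MvPolynomial (Fin n) ℝ} (hq : q.IsHomogeneous e)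
    (s : ℝ) (x : Fin n → ℝ) : eval (fun i => s * x i) q = s ^ e * eval x q := by
  rw [aux_expand hq, map_sum, map_sum, Finset.mul_sum]
  refine Finset.sum_congr rfl fun β hβ => ?_
  have hβ' : ∑ i, β i = e := by simpa using hβ
  rw [smul_eval, smul_eval, eval_monomial, eval_monomial,
    Finsupp.prod_fintype _ _ (by simp), Finsupp.prod_fintype _ _ (by simp)]
  simp only [mul_pow, Finset.prod_mul_distrib, Finset.prod_pow_eq_pow_sum, hβ']
  ring

theorem aux_multinomial {n : ℕ} (β : Fin n →₀ ℕ) :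
    (∏ i, Nat.factorial (β i)) * β.multinomial = Nat.factorial (∑ i, β i) := by
  rw [Finsupp.multinomial_eq_of_support_subset (Finset.subset_univ _)]
  exact Nat.multinomial_spec _ _

theorem aux_coeff {n k : ℕ} (β : Fin n →₀ ℕ) (h : ∑ i, β i = k) :
    coeff β ((∑ i, X i : MvPolynomial (Fin n) ℝ) ^ k) = β.multinomial := by
  rw [coeff_sum_X_pow_of_fintype, if_pos]
  rw [Finsupp.sum_fintype _ _ (by simp)]
  exact h

theorem aux_homS {n k : ℕ} : ((∑ i, X i : MvPolynomial (Fin n) ℝ) ^ k).IsHomogeneous k := by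
  have := (IsHomogeneous.sum Finset.univ (fun i : Fin n => (X i : MvPolynomial (Fin n) ℝ)) 1
    (fun i _ => isHomogeneous_X ℝ i)).pow k
  simpa using this

theorem aux_step {n r : ℕ} (L : MvPolynomial (Fin n) ℝ →ₗ[ℝ] ℝ)
    (hL : ∀ α : Fin n →₀ ℕ, (∑ i, α i) + 1 ≤ r →
      L (monomial α 1) = L (monomial α 1 * ∑ i, X i))
    (α : Fin n →₀ ℕ) (k : ℕ) (hk : (∑ i, α i) + k ≤ r) :
    L (monomial α 1) = L (monomial α 1 * (∑ i, X i) ^ k) := by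
  induction k with
  | zero => simp
  | succ k ih =>
    rw [ih (by omega), pow_succ, ← mul_assoc]
    have hq : (monomial α (1 : ℝ) * (∑ i, X i) ^ k : MvPolynomial (Fin n) ℝ).IsHomogeneous
        ((∑ i, α i) + k) := (isHomogeneous_monomial _ (aux_deg α)).mul aux_homS
    generalize (monomial α (1 : ℝ) * (∑ i, X i) ^ k : MvPolynomial (Fin n) ℝ) = q at hq
    rw [aux_expand hq, Finset.sum_mul, map_sum, map_sum]
    refine Finset.sum_congr rfl fun β hβ => ?_
    have hβ' : ∑ i, β i = (∑ i, α i) + k := by simpa using hβ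
    rw [smul_mul_assoc, map_smul, map_smul, hL β (by omega)]

theorem aux_repr {n r : ℕ} (L : MvPolynomial (Fin n) ℝ →ₗ[ℝ] ℝ)
    (hL : ∀ α : Fin n →₀ ℕ, (∑ i, α i) + 1 ≤ r →
      L (monomial α 1) = L (monomial α 1 * ∑ i, X i))
    (α : Fin n →₀ ℕ) (a : ℕ) (ha : ∑ i, α i = a) (har : a ≤ r) :
    (r.descFactorial a : ℝ) * L (monomial α 1) =
      ∑ β ∈ Finset.finsuppAntidiag Finset.univ r,
        ((β.multinomial : ℝ) * L (monomial β 1)) *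
          ((∏ i, (β i).descFactorial (α i) : ℕ) : ℝ) := by
  rw [aux_step L hL α (r - a) (by omega)]
  have hq : (monomial α (1 : ℝ) * (∑ i, X i) ^ (r - a) : MvPolynomial (Fin n) ℝ).IsHomogeneous
      r := by
    have := (isHomogeneous_monomial (1 : ℝ) (aux_deg α)).mul (aux_homS (n := n) (k := r - a))
    rwa [ha, Nat.add_sub_cancel' har] at this
  rw [aux_expand hq, map_sum, Finset.mul_sum]
  refine Finset.sum_congr rfl fun β hβ => ?_
  have hβ' : ∑ i, β i = r := by simpa using hβ
  rw [map_smul, smul_eq_mul, coeff_monomial_mul']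
  split_ifs with hle
  · have hs : ∑ i, (β - α) i = r - a := by
      have : ∑ i, (β - α) i + ∑ i, α i = ∑ i, β i := by
        rw [← Finset.sum_add_distrib]
        refine Finset.sum_congr rfl fun i _ => ?_
        have := hle i
        simp only [Finsupp.tsub_apply]; omega
      omega
    rw [aux_coeff _ hs]
    have h1 := aux_multinomial (β - α)
    have h2 := aux_multinomial β
    have h3 := Nat.factorial_mul_descFactorial har
    have h4 : (∏ i, Nat.factorial ((β - α) i)) * ∏ i, (β i).descFactorial (α i) =
        ∏ i, Nat.factorial (β i) := by
      rw [← Finset.prod_mul_distrib]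
      exact Finset.prod_congr rfl fun i _ => Nat.factorial_mul_descFactorial (hle i)
    rw [hs] at h1
    rw [hβ'] at h2
    have hpos : 0 < ∏ i, Nat.factorial ((β - α) i) := Finset.prod_pos fun i _ => Nat.factorial_pos _
    have key : r.descFactorial a * (β - α).multinomial =
        β.multinomial * ∏ i, (β i).descFactorial (α i) := by
      apply Nat.eq_of_mul_eq_mul_left hpos
      calc _ = ((∏ i, Nat.factorial ((β - α) i)) * (β - α).multinomial) * r.descFactorial a := by
            ring
        _ = ((∏ i, Nat.factorial ((β - α) i)) * ∏ i, (β i).descFactorial (α i)) *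
              β.multinomial := by rw [h1, h3, h4, h2]
        _ = _ := by ring
    have key' : (r.descFactorial a : ℝ) * ((β - α).multinomial : ℝ) =
        β.multinomial * ((∏ i, (β i).descFactorial (α i) : ℕ) : ℝ) := by exact_mod_cast key
    linear_combination L (monomial β 1) * key'
  · have : ∃ i, β i < α i := by
      by_contra hcon
      push Not at hcon
      exact hle fun i => hcon i
    obtain ⟨i, hi⟩ := this
    rw [Finset.prod_eq_zero (Finset.mem_univ i) (Nat.descFactorial_of_lt hi)]
    simp

theorem aux_key {n r d : ℕ} (hdr : d ≤ r) (hr : 0 < r) (L : MvPolynomial (Fin n) ℝ →ₗ[ℝ] ℝ)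
    (hpos : ∀ α : Fin n →₀ ℕ, (∑ i, α i) ≤ r → 0 ≤ L (monomial α 1))
    (hL : ∀ α : Fin n →₀ ℕ, (∑ i, α i) + 1 ≤ r →
      L (monomial α 1) = L (monomial α 1 * ∑ i, X i))
    (p : MvPolynomial (Fin n) ℝ) (hp : p.IsHomogeneous d)
    (hp0 : ∀ x : Fin n → ℝ, (∀ i, 0 ≤ x i) → ∑ i, x i = 1 → 0 ≤ eval x p) (B : ℝ)
    (hB : ∀ α : Fin n →₀ ℕ, ∑ i, α i = d →
      ((∏ i, Nat.factorial (α i) : ℕ) : ℝ) / (Nat.factorial d : ℝ) * coeff α p ≤ B) :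
    B * (((r.descFactorial d : ℝ) - (r : ℝ) ^ d) * L 1) ≤ (r.descFactorial d : ℝ) * L p := by
  set w : (Fin n →₀ ℕ) → ℝ := fun β => (β.multinomial : ℝ) * L (monomial β 1) with hw
  set A := Finset.finsuppAntidiag (Finset.univ : Finset (Fin n)) r with hA
  have hAm : ∀ β ∈ A, ∑ i, β i = r := fun β hβ => by simpa [hA] using hβ
  have hw0 : ∀ β ∈ A, 0 ≤ w β := fun β hβ =>
    mul_nonneg (Nat.cast_nonneg _) (hpos β (hAm β hβ).le)
  let M : MvPolynomial (Fin n) ℝ → ℝ := fun q => ∑ β ∈ A, w β * eval (fun i => (β i : ℝ)) q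
  have hL1 : L 1 = ∑ β ∈ A, w β := by
    have := aux_repr L hL 0 0 (by simp) (Nat.zero_le r)
    simpa using this
  have hLS : L ((∑ i, X i) ^ d) = L 1 := by
    have := aux_step L hL 0 d (by simpa using hdr)
    simpa using this.symm
  have hMS : M ((∑ i, X i) ^ d) = (r : ℝ) ^ d * L 1 := by
    simp only [M]
    rw [hL1, Finset.mul_sum]
    refine Finset.sum_congr rfl fun β hβ => ?_
    have : (∑ i, (β i : ℝ)) = r := by exact_mod_cast hAm β hβ
    simp [this, mul_comm]
  have hMp : 0 ≤ M p := by
    refine Finset.sum_nonneg fun β hβ => mul_nonneg (hw0 β hβ) ?_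
    have hr0 : (r : ℝ) ≠ 0 := by positivity
    have h := aux_eval_smul hp (r : ℝ) (fun i => (β i : ℝ) / r)
    have h' : (fun i => (r : ℝ) * ((β i : ℝ) / r)) = fun i => (β i : ℝ) := by
      ext i; field_simp
    rw [h'] at h
    rw [h]
    apply mul_nonneg (by positivity)
    apply hp0
    · intro i; positivity
    · rw [← Finset.sum_div]
      have : (∑ i, (β i : ℝ)) = r := by exact_mod_cast hAm β hβ
      rw [this, div_self hr0]
  set q : MvPolynomial (Fin n) ℝ := B • (∑ i, X i) ^ d - p with hq
  have hqh : q.IsHomogeneous d := by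
    refine IsHomogeneous.sub ?_ hp
    rw [smul_eq_C_mul]
    exact aux_homS.C_mul B
  have hqc : ∀ α : Fin n →₀ ℕ, ∑ i, α i = d → 0 ≤ coeff α q := by
    intro α hα
    rw [hq, coeff_sub, coeff_smul, aux_coeff α hα, smul_eq_mul]
    have h1 := hB α hα
    have h2 := aux_multinomial α
    rw [hα] at h2
    have h2' : ((∏ i, Nat.factorial (α i) : ℕ) : ℝ) * (α.multinomial : ℝ) = (Nat.factorial d : ℝ) := by
      exact_mod_cast h2
    have hfp : (0 : ℝ) < ((∏ i, Nat.factorial (α i) : ℕ) : ℝ) := by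
      exact_mod_cast Finset.prod_pos fun i _ => Nat.factorial_pos (α i)
    have hd0 : (0 : ℝ) < Nat.factorial d := by exact_mod_cast Nat.factorial_pos d
    rw [div_mul_eq_mul_div, div_le_iff₀ hd0, ← h2'] at h1
    have : coeff α p ≤ B * α.multinomial := by
      apply le_of_mul_le_mul_left _ hfp
      linarith
    linarith
  have hDq : (r.descFactorial d : ℝ) * L q ≤ M q := by
    have hMq : M q = ∑ α ∈ Finset.finsuppAntidiag Finset.univ d,
        coeff α q * M (monomial α 1) := by
      simp only [M]
      simp_rw [Finset.mul_sum]
      rw [Finset.sum_comm]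
      refine Finset.sum_congr rfl fun β hβ => ?_
      conv_lhs => rw [aux_expand hqh]
      rw [map_sum, Finset.mul_sum]
      refine Finset.sum_congr rfl fun α hα => ?_
      rw [smul_eval]; ring
    rw [hMq]
    conv_lhs => rw [aux_expand hqh]
    rw [map_sum, Finset.mul_sum]
    refine Finset.sum_le_sum fun α hα => ?_
    have hα' : ∑ i, α i = d := by simpa using hα
    rw [map_smul, smul_eq_mul, mul_left_comm]
    refine mul_le_mul_of_nonneg_left ?_ (hqc α hα')
    rw [aux_repr L hL α d hα' hdr]
    refine Finset.sum_le_sum fun β hβ => ?_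
    refine mul_le_mul_of_nonneg_left ?_ (hw0 β hβ)
    rw [eval_monomial, Finsupp.prod_fintype _ _ (by simp), one_mul]
    push_cast
    refine Finset.prod_le_prod (fun i _ => by positivity) fun i _ => ?_
    exact_mod_cast Nat.descFactorial_le_pow _ _
  have e1 : L q = B * L 1 - L p := by
    rw [hq, map_sub, map_smul, hLS, smul_eq_mul]
  have e2 : M q = B * ((r : ℝ) ^ d * L 1) - M p := by
    rw [← hMS]
    simp only [M, hq, map_sub, smul_eval, mul_sub, Finset.sum_sub_distrib, Finset.mul_sum]
    congr 1
    refine Finset.sum_congr rfl fun β _ => ?_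
    ring
  rw [e1, e2] at hDq
  linarith

theorem aux_desc (r d : ℕ) (hdr : d ≤ r) :
    (r : ℝ) ^ d * (2 * r - d * ((d : ℝ) - 1)) ≤ 2 * r * (r.descFactorial d : ℝ) := by
  induction d with
  | zero => simp
  | succ d ih =>
    have ih := ih (by omega)
    rw [Nat.descFactorial_succ, pow_succ]
    push_cast [Nat.cast_sub (show d ≤ r by omega)]
    have h1 : (d : ℝ) + 1 ≤ r := by exact_mod_cast hdr
    have h2 := mul_le_mul_of_nonneg_left ih (show (0 : ℝ) ≤ r - d by linarith)
    refine le_trans ?_ (h2.trans_eq (by ring))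
    have h3 : (0 : ℝ) ≤ (r : ℝ) ^ d := by positivity
    have h4 : (0 : ℝ) ≤ (d : ℝ) * d * ((d : ℝ) - 1) := by
      rcases Nat.eq_zero_or_pos d with h | h
      · simp [h]
      · have : (1 : ℝ) ≤ d := by exact_mod_cast h
        have : (0 : ℝ) ≤ (d : ℝ) - 1 := by linarith
        positivity
    have := mul_nonneg h3 h4
    nlinarith

theorem aux_B0 {n d : ℕ} (hn : 0 < n)
    (p : MvPolynomial (Fin n) ℝ) (hp : p.IsHomogeneous d)
    (hp0 : ∀ x : Fin n → ℝ, (∀ i, 0 ≤ x i) → ∑ i, x i = 1 → 0 ≤ eval x p) (B : ℝ)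
    (hB : ∀ α : Fin n →₀ ℕ, ∑ i, α i = d →
      ((∏ i, Nat.factorial (α i) : ℕ) : ℝ) / (Nat.factorial d : ℝ) * coeff α p ≤ B) :
    0 ≤ B := by
  by_contra hcon
  push Not at hcon
  set x : Fin n → ℝ := fun i => 1 / n
  have hn' : (0 : ℝ) < n := by exact_mod_cast hn
  have hx : ∀ i, 0 < x i := fun i => by simp only [x]; positivity
  have h0 := hp0 x (fun i => (hx i).le) (by simp [x]; field_simp)
  rw [aux_expand hp, map_sum] at h0
  have hlt : ∀ β ∈ Finset.finsuppAntidiag (Finset.univ : Finset (Fin n)) d,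
      eval x (coeff β p • monomial β (1 : ℝ)) < 0 := by
    intro β hβ
    have hβ' : ∑ i, β i = d := by simpa using hβ
    rw [smul_eval, eval_monomial, Finsupp.prod_fintype _ _ (by simp), one_mul]
    have h1 : 0 < ∏ i, x i ^ β i := Finset.prod_pos fun i _ => pow_pos (hx i) _
    refine mul_neg_of_neg_of_pos ?_ h1
    have h2 := hB β hβ'
    have hfp : (0 : ℝ) < ((∏ i, Nat.factorial (β i) : ℕ) : ℝ) := by
      exact_mod_cast Finset.prod_pos fun i _ => Nat.factorial_pos (β i)
    have hd0 : (0 : ℝ) < Nat.factorial d := by exact_mod_cast Nat.factorial_pos d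
    by_contra h3
    push Not at h3
    have := mul_nonneg (div_pos hfp hd0).le h3
    linarith
  have hne : (Finset.finsuppAntidiag (Finset.univ : Finset (Fin n)) d).Nonempty :=
    ⟨Finsupp.single ⟨0, hn⟩ d, by simp⟩
  have := Finset.sum_lt_sum_of_nonempty hne hlt
  simp only [Finset.sum_const_zero] at this
  linarith

theorem aux_Bcoef {n d : ℕ} (f : MvPolynomial (Fin n) ℝ) (α : Fin n →₀ ℕ) (hα : ∑ i, α i = d) :
    ((∏ i, Nat.factorial (α i) : ℕ) : ℝ) / (Nat.factorial d : ℝ) * coeff α f ≤ Bcoef d f := by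
  apply le_csSup
  · have hfin : Set.Finite ((fun α : Fin n →₀ ℕ =>
        ((∏ i, Nat.factorial (α i) : ℕ) : ℝ) / (Nat.factorial d : ℝ) * coeff α f) ''
        (Finset.finsuppAntidiag (Finset.univ : Finset (Fin n)) d : Set (Fin n →₀ ℕ))) :=
      (Finset.finite_toSet _).image _
    refine hfin.bddAbove.mono ?_
    rintro c ⟨α, h, rfl⟩
    exact ⟨α, by simp [h], rfl⟩
  · exact ⟨α, hα, rfl⟩

theorem aux_final (B ℓ N R D P t Lp : ℝ) (hB : 0 ≤ B) (hl0 : 0 ≤ ℓ) (hl1 : ℓ ≤ 1) (hN : 0 ≤ N)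
    (hR : 0 < 2 * (R - 1) - N) (hD : 0 < D) (ht : 0 ≤ t)
    (h1 : P * (2 * R - N) ≤ 2 * R * D) (h2 : B * ((D - P) * ℓ) ≤ D * Lp) :
    -((B + t) * N / (2 * (R - 1) - N)) ≤ Lp := by
  have hR' : 0 < 2 * R - N := by linarith
  have hBl : 0 ≤ B * ℓ := mul_nonneg hB hl0
  have h3 : -(B * ℓ) * N ≤ (2 * R - N) * Lp := by
    apply le_of_mul_le_mul_left _ hD
    have e1 := mul_le_mul_of_nonneg_left h2 hR'.le
    have e2 := mul_le_mul_of_nonneg_left h1 hBl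
    nlinarith
  have h4 : -(B * N) ≤ (2 * R - N) * Lp := by
    have := mul_le_mul_of_nonneg_left hl1 (mul_nonneg hB hN)
    nlinarith
  by_cases hLp : 0 ≤ Lp
  · have : 0 ≤ (B + t) * N / (2 * (R - 1) - N) := by positivity
    linarith
  · push Not at hLp
    rw [neg_le, le_div_iff₀ hR]
    have := mul_nonneg ht hN
    nlinarith

theorem lp_hierarchy_rate_simplex
    {n m d : ℕ} (hn : 0 < n)
    (f0 : MvPolynomial (Fin n) ℝ) (f : Fin m → MvPolynomial (Fin n) ℝ) (b : Fin m → ℝ)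
    (hf0 : f0.IsHomogeneous d) (hf : ∀ i, (f i).IsHomogeneous d)
    (Δ : Set (Fin n → ℝ)) (hΔ : Δ = {x : Fin n → ℝ | (∀ i, 0 ≤ x i) ∧ ∑ i, x i = 1})
    (Feas : Set (Measure (Fin n → ℝ)))
    (hFeas : Feas = {ν : Measure (Fin n → ℝ) | IsFiniteMeasure ν ∧ ν Δᶜ = 0 ∧
      (∀ i, ∫ x, eval x (f i) ∂ν = b i) ∧ ν Δ ≤ 1})
    (hfeas : Feas.Nonempty)
    (val : ℝ) (hval : val = sInf ((fun ν => ∫ x, eval x f0 ∂ν) '' Feas))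
    (val' : ℝ)
    (hval' : val' = sSup {v : ℝ | ∃ (y : Fin m → ℝ) (s : ℝ), 0 ≤ s ∧
      (∀ x ∈ Δ, 0 ≤ eval x f0 - ∑ i, y i * eval x (f i) + s) ∧
      v = ∑ i, y i * b i - s})
    (ybar : Fin m → ℝ) (t : ℝ) (ht : 0 ≤ t)
    (hdualfeas : ∀ x ∈ Δ, 0 ≤ eval x f0 - ∑ i, ybar i * eval x (f i) + t)
    (hdualopt : ∑ i, ybar i * b i - t = val')
    (fLP : ℕ → ℝ)
    (hfLP : ∀ r : ℕ, fLP r = sInf ((fun L => L f0) ''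
      {L : MvPolynomial (Fin n) ℝ → ℝ |
        (∀ p q, L (p + q) = L p + L q) ∧ (∀ (c : ℝ) p, L (c • p) = c * L p) ∧
        (∀ i, L (f i) = b i) ∧ L 1 ≤ 1 ∧
        (∀ α : Fin n →₀ ℕ, (∑ i, α i) ≤ r → 0 ≤ L (monomial α 1)) ∧
        (∀ α : Fin n →₀ ℕ, (∑ i, α i) + 1 ≤ r →
          L (monomial α 1) = L (monomial α 1 * ∑ i, X i))}))
    (r : ℕ) (hr : (r : ℝ) > (d : ℝ) * ((d : ℝ) - 1) / 2 + 1) :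
    0 ≤ val - fLP r ∧
    val - fLP r ≤
      (Bcoef d f0 + (∑ i, Bcoef d ((-ybar i) • f i)) + Bcoef d (t • (∑ i : Fin n, X i) ^ d) + t) *
        ((d : ℝ) * ((d : ℝ) - 1)) / (2 * ((r : ℝ) - 1) - (d : ℝ) * ((d : ℝ) - 1)) := by
  -- basic numerics
  have hN : (0 : ℝ) ≤ (d : ℝ) * ((d : ℝ) - 1) := by
    rcases Nat.eq_zero_or_pos d with h | h
    · simp [h]
    · have : (1 : ℝ) ≤ d := by exact_mod_cast h
      exact mul_nonneg (by linarith) (by linarith)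
  have hr0 : 0 < r := by
    have : (0 : ℝ) < r := by linarith
    exact_mod_cast this
  have hdr : d ≤ r := by
    by_contra hcon
    push Not at hcon
    have h1 : (r : ℝ) + 1 ≤ d := by exact_mod_cast hcon
    nlinarith [sq_nonneg ((d : ℝ) - 3 / 2)]
  -- the simplex
  have hΔstd : Δ = stdSimplex ℝ (Fin n) := by rw [hΔ]; rfl
  have hΔc : IsCompact Δ := by rw [hΔstd]; exact isCompact_stdSimplex ℝ (Fin n)
  have hΔm : MeasurableSet Δ := hΔc.measurableSet
  have hmem : ∀ x, x ∈ Δ ↔ (∀ i, 0 ≤ x i) ∧ ∑ i, x i = 1 := by intro x; rw [hΔ]; rfl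
  have hcont : ∀ q : MvPolynomial (Fin n) ℝ, Continuous fun x => eval x q := fun q =>
    MvPolynomial.continuous_eval q
  have hFm : ∀ ν, ν ∈ Feas ↔ IsFiniteMeasure ν ∧ ν Δᶜ = 0 ∧
      (∀ i, ∫ x, eval x (f i) ∂ν = b i) ∧ ν Δ ≤ 1 := by intro ν; rw [hFeas]; rfl
  have hae : ∀ ν ∈ Feas, ∀ᵐ x ∂ν, x ∈ Δ := by
    intro ν hν
    exact ((hFm ν).1 hν).2.1
  have hint : ∀ ν ∈ Feas, ∀ q : MvPolynomial (Fin n) ℝ, Integrable (fun x => eval x q) ν := by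
    intro ν hν q
    have := ((hFm ν).1 hν).1
    have h1 : IntegrableOn (fun x => eval x q) Δ ν :=
      (hcont q).continuousOn.integrableOn_compact hΔc
    rwa [IntegrableOn, Measure.restrict_eq_self_of_ae_mem (hae ν hν)] at h1
  have hmass : ∀ ν ∈ Feas, ν.real Set.univ ≤ 1 := by
    intro ν hν
    obtain ⟨_, h2, _, h4⟩ := (hFm ν).1 hν
    have : ν Set.univ ≤ 1 := by
      rw [← measure_add_measure_compl hΔm, h2, add_zero]; exact h4
    exact ENNReal.toReal_le_of_le_ofReal zero_le_one (by simpa using this)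
  -- weak duality
  have hweak : ∀ ν ∈ Feas, ∀ (y : Fin m → ℝ) (s : ℝ), 0 ≤ s →
      (∀ x ∈ Δ, 0 ≤ eval x f0 - ∑ i, y i * eval x (f i) + s) →
      ∑ i, y i * b i - s ≤ ∫ x, eval x f0 ∂ν := by
    intro ν hν y s hs hpos
    obtain ⟨_, h2, h3, h4⟩ := (hFm ν).1 hν
    have h0 : 0 ≤ ∫ x, (eval x f0 - ∑ i, y i * eval x (f i) + s) ∂ν := by
      apply integral_nonneg_of_ae
      filter_upwards [hae ν hν] with x hx using hpos x hx
    have hi : Integrable (fun x => ∑ i, y i * eval x (f i)) ν :=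
      integrable_finsetSum _ fun i _ => (hint ν hν (f i)).const_mul _
    have hsub : Integrable (fun x => eval x f0 - ∑ i, y i * eval x (f i)) ν :=
      (hint ν hν f0).sub hi
    rw [integral_add hsub (integrable_const _),
      integral_sub (hint ν hν f0) hi,
      integral_finsetSum _ fun i _ => (hint ν hν (f i)).const_mul _] at h0
    simp only [integral_const_mul, h3, integral_const, smul_eq_mul] at h0
    have := mul_le_mul_of_nonneg_right (hmass ν hν) hs
    linarith
  obtain ⟨ν0, hν0⟩ := hfeas
  -- strong duality
  have hstrong : val ≤ val' := by
    apply le_of_forall_lt_imp_le_of_dense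
    intro c hc
    have : CompactSpace Δ := isCompact_iff_compactSpace.mp hΔc
    let R : MvPolynomial (Fin n) ℝ → C(Δ, ℝ) := fun q =>
      ⟨fun x => eval (x : Fin n → ℝ) q, (hcont q).comp continuous_subtype_val⟩
    have hν0' := (hFm ν0).1 hν0
    have hfin0 := hν0'.1
    have hcomapU : (ν0.comap ((↑) : Δ → (Fin n → ℝ))) Set.univ = ν0 Δ := by
      rw [comap_subtype_coe_apply hΔm]; simp
    let μ0 : FiniteMeasure Δ := ⟨ν0.comap (↑), ⟨by
      rw [hcomapU]; exact measure_lt_top _ _⟩⟩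
    obtain ⟨y, s, hs, hy, hcy⟩ := aux_strong_dual (R f0) (fun i => R (f i)) b μ0
      (by
        show ((ν0.comap ((↑) : Δ → (Fin n → ℝ))) Set.univ).toNNReal ≤ 1
        rw [hcomapU]
        exact ENNReal.toNNReal_mono ENNReal.one_ne_top hν0'.2.2.2)
      (by
        intro i
        show ∫ x : Δ, eval (x : Fin n → ℝ) (f i) ∂(ν0.comap (↑)) = b i
        rw [integral_subtype_comap hΔm (fun x => eval x (f i)),
          Measure.restrict_eq_self_of_ae_mem (hae ν0 hν0)]
        exact hν0'.2.2.1 i) c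
      (by
        intro μ hμ hμb
        have hme : MeasurableEmbedding ((↑) : Δ → (Fin n → ℝ)) := MeasurableEmbedding.subtype_coe hΔm
        have hmapint : ∀ q : MvPolynomial (Fin n) ℝ,
            ∫ x, eval x q ∂((μ : Measure Δ).map (↑)) = ∫ x, R q x ∂(μ : Measure Δ) := by
          intro q
          rw [hme.integral_map]; rfl
        have hin : (μ : Measure Δ).map ((↑) : Δ → (Fin n → ℝ)) ∈ Feas := by
          rw [hFm]
          refine ⟨inferInstance, ?_, ?_, ?_⟩
          · rw [hme.map_apply]; simp
          · intro i; rw [hmapint]; exact hμb i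
          · rw [hme.map_apply]
            simp only [Subtype.coe_preimage_self]
            rw [← FiniteMeasure.ennreal_mass]
            exact_mod_cast hμ
        rw [← hmapint]
        refine lt_of_lt_of_le hc ?_
        rw [hval]
        apply csInf_le
        · refine ⟨∑ i, ybar i * b i - t, ?_⟩
          rintro _ ⟨ν, hν, rfl⟩
          exact hweak ν hν ybar t ht hdualfeas
        · exact ⟨_, hin, rfl⟩)
    refine hcy.trans ?_
    rw [hval']
    apply le_csSup
    · refine ⟨∫ x, eval x f0 ∂ν0, ?_⟩
      rintro _ ⟨y, s, hs, hy, rfl⟩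
      exact hweak ν0 hν0 y s hs hy
    · exact ⟨y, s, hs, fun x hx => hy ⟨x, hx⟩, rfl⟩
  -- lower bound on the LP
  set E : ℝ := (Bcoef d f0 + (∑ i, Bcoef d ((-ybar i) • f i)) +
    Bcoef d (t • (∑ i : Fin n, X i) ^ d) + t) *
        ((d : ℝ) * ((d : ℝ) - 1)) / (2 * ((r : ℝ) - 1) - (d : ℝ) * ((d : ℝ) - 1)) with hE
  have hlow : ∀ v ∈ ((fun L => L f0) ''
      {L : MvPolynomial (Fin n) ℝ → ℝ |
        (∀ p q, L (p + q) = L p + L q) ∧ (∀ (c : ℝ) p, L (c • p) = c * L p) ∧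
        (∀ i, L (f i) = b i) ∧ L 1 ≤ 1 ∧
        (∀ α : Fin n →₀ ℕ, (∑ i, α i) ≤ r → 0 ≤ L (monomial α 1)) ∧
        (∀ α : Fin n →₀ ℕ, (∑ i, α i) + 1 ≤ r →
          L (monomial α 1) = L (monomial α 1 * ∑ i, X i))}), val' - E ≤ v := by
    rintro _ ⟨L', ⟨hadd, hsmul, hLb, hL1, hLpos, hLstep⟩, rfl⟩
    let L : MvPolynomial (Fin n) ℝ →ₗ[ℝ] ℝ :=
      { toFun := L', map_add' := hadd, map_smul' := hsmul }
    have hLL : ∀ q, L q = L' q := fun q => rfl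
    set p : MvPolynomial (Fin n) ℝ :=
      f0 + (∑ i, (-ybar i) • f i) + t • (∑ i, X i) ^ d with hp
    have hph : p.IsHomogeneous d := by
      refine (hf0.add (IsHomogeneous.sum _ _ _ fun i _ => ?_)).add ?_
      · rw [smul_eq_C_mul]; exact (hf i).C_mul _
      · rw [smul_eq_C_mul]; exact aux_homS.C_mul _
    have hp0 : ∀ x : Fin n → ℝ, (∀ i, 0 ≤ x i) → ∑ i, x i = 1 → 0 ≤ eval x p := by
      intro x h1 h2
      have h3 := hdualfeas x ((hmem x).2 ⟨h1, h2⟩)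
      have : eval x p = eval x f0 - ∑ i, ybar i * eval x (f i) + t := by
        simp [hp, h2, smul_eval, map_sum, sub_eq_add_neg]
      rwa [this]
    set B : ℝ := Bcoef d f0 + (∑ i, Bcoef d ((-ybar i) • f i)) +
      Bcoef d (t • (∑ i : Fin n, X i) ^ d) with hBdef
    have hB : ∀ α : Fin n →₀ ℕ, ∑ i, α i = d →
        ((∏ i, Nat.factorial (α i) : ℕ) : ℝ) / (Nat.factorial d : ℝ) * coeff α p ≤ B := by
      intro α hα
      rw [hp, coeff_add, coeff_add, coeff_sum, mul_add, mul_add, Finset.mul_sum]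
      exact add_le_add (add_le_add (aux_Bcoef f0 α hα)
        (Finset.sum_le_sum fun i _ => aux_Bcoef _ α hα)) (aux_Bcoef _ α hα)
    have hB0 := aux_B0 hn p hph hp0 B hB
    have hkey := aux_key hdr hr0 L hLpos hLstep p hph hp0 B hB
    have hl0 : 0 ≤ L 1 := by
      have h : 0 ≤ L (monomial 0 1) := hLpos 0 (by simp)
      simpa using h
    have hfin := aux_final B (L 1) ((d : ℝ) * ((d : ℝ) - 1)) r (r.descFactorial d) ((r : ℝ) ^ d) t
      (L p) hB0 hl0 hL1 hN (by linarith)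
      (by exact_mod_cast Nat.descFactorial_pos.2 hdr) ht (aux_desc r d hdr) hkey
    have hLS : L ((∑ i, X i) ^ d) = L 1 := by
      have := aux_step L hLstep 0 d (by simpa using hdr)
      simpa using this.symm
    have hLp : L p = L f0 - ∑ i, ybar i * b i + t * L 1 := by
      rw [hp, map_add, map_add, map_sum, map_smul, hLS]
      simp only [map_smul, smul_eq_mul]
      have : ∀ i, L (f i) = b i := hLb
      simp only [this, neg_mul, Finset.sum_neg_distrib]
      ring
    have h5 : t * L 1 ≤ t * 1 := mul_le_mul_of_nonneg_left hL1 ht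
    show val' - E ≤ L f0
    linarith
  have hup : ∀ ν ∈ Feas, ∫ x, eval x f0 ∂ν ∈ ((fun L => L f0) ''
      {L : MvPolynomial (Fin n) ℝ → ℝ |
        (∀ p q, L (p + q) = L p + L q) ∧ (∀ (c : ℝ) p, L (c • p) = c * L p) ∧
        (∀ i, L (f i) = b i) ∧ L 1 ≤ 1 ∧
        (∀ α : Fin n →₀ ℕ, (∑ i, α i) ≤ r → 0 ≤ L (monomial α 1)) ∧
        (∀ α : Fin n →₀ ℕ, (∑ i, α i) + 1 ≤ r →
          L (monomial α 1) = L (monomial α 1 * ∑ i, X i))}) := by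
    intro ν hν
    refine ⟨fun q => ∫ x, eval x q ∂ν, ⟨?_, ?_, ((hFm ν).1 hν).2.2.1, ?_, ?_, ?_⟩, rfl⟩
    · intro p q
      simp only [map_add]
      exact integral_add (hint ν hν p) (hint ν hν q)
    · intro c p
      simp only [smul_eval]
      exact integral_const_mul _ _
    · simpa using hmass ν hν
    · intro α _
      apply integral_nonneg_of_ae
      filter_upwards [hae ν hν] with x hx
      have hx := ((hmem x).1 hx).1
      rw [eval_monomial, Finsupp.prod_fintype _ _ (by simp)]
      exact mul_nonneg zero_le_one (Finset.prod_nonneg fun i _ => pow_nonneg (hx i) _)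
    · intro α _
      apply integral_congr_ae
      filter_upwards [hae ν hν] with x hx
      have hx := ((hmem x).1 hx).2
      simp [hx]
  have hA : fLP r ≤ val := by
    rw [hfLP r, hval]
    refine le_csInf (Set.Nonempty.image _ ⟨ν0, hν0⟩) ?_
    rintro _ ⟨ν, hν, rfl⟩
    exact csInf_le ⟨_, hlow⟩ (hup ν hν)
  have hC : val' - E ≤ fLP r := by
    rw [hfLP r]
    exact le_csInf ⟨_, hup ν0 hν0⟩ hlow
  exact ⟨by linarith, by linarith⟩
end

section
/- Let L be a linear functional on the real polynomial ring in n variables satisfying L(x^α) ≥ 0 for all multi-indices α, L(1) ≤ 1, and L( p·(1 − x_1 − ... − x_n) ) = 0 for every polynomial p. Then there exists a positive finite Borel measure μ supported on the simplex Δ_{n−1} with μ(Δ_{n−1}) ≤ 1 such that L(f) = ∫_{Δ_{n−1}} f(x) dμ(x) for every polynomial f. -/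
open MeasureTheory MvPolynomial

section Helpers

variable {n : ℕ}

/-- The monomial attached to a word. -/
noncomputable def wordPoly {k : ℕ} (w : Fin k → Fin n) : MvPolynomial (Fin n) ℝ := ∏ j, X (w j)

/-- The empirical frequencies of a word. -/
noncomputable def wordFreq {k : ℕ} (w : Fin k → Fin n) : Fin n → ℝ :=
  fun i => (∑ j, if w j = i then (1 : ℝ) else 0) / k

theorem wordPoly_eq_monomial {k : ℕ} (w : Fin k → Fin n) :
    wordPoly w = monomial (∑ j, Finsupp.single (w j) 1) (1 : ℝ) := by
  simp only [wordPoly, X]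
  rw [monomial_sum_one]

theorem exists_word (α : Fin n →₀ ℕ) :
    ∃ (k : ℕ) (a : Fin k → Fin n), monomial α (1 : ℝ) = wordPoly a := by
  induction α using Finsupp.induction_linear with
  | zero => exact ⟨0, Fin.elim0, by simp [wordPoly]⟩
  | add f g hf hg =>
    obtain ⟨k, a, ha⟩ := hf
    obtain ⟨l, b, hb⟩ := hg
    refine ⟨k + l, Fin.append a b, ?_⟩
    have : monomial (f + g) (1 : ℝ) = monomial f 1 * monomial g 1 := by
      rw [monomial_mul, one_mul]
    rw [this, ha, hb]
    simp [wordPoly, Fin.prod_univ_add]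
  | single i m =>
    refine ⟨m, fun _ => i, ?_⟩
    simp [wordPoly, X_pow_eq_monomial]

theorem wordFreq_mem {k : ℕ} (hk : 0 < k) (w : Fin k → Fin n) :
    wordFreq w ∈ stdSimplex ℝ (Fin n) := by
  have hk' : (k : ℝ) ≠ 0 := by positivity
  constructor
  · intro i
    refine div_nonneg (Finset.sum_nonneg fun j _ => ?_) (by positivity)
    split_ifs <;> norm_num
  · simp only [wordFreq]
    rw [← Finset.sum_div, Finset.sum_comm]
    simp [hk']

variable (L : MvPolynomial (Fin n) ℝ →ₗ[ℝ] ℝ)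
    (h1 : ∀ α : Fin n →₀ ℕ, 0 ≤ L (monomial α (1 : ℝ)))
    (h3 : ∀ p : MvPolynomial (Fin n) ℝ, L (p * (1 - ∑ i, X i)) = 0)

/-- The averaged functional. -/
noncomputable def avgFun (N : ℕ) (f : MvPolynomial (Fin n) ℝ) : ℝ :=
  ∑ w : Fin N → Fin n, L (wordPoly w) * eval (wordFreq w) f

/-- Probability that the positions `s` carry the letters `a`. -/
noncomputable def patProb {k N : ℕ} (a : Fin k → Fin n) (s : Fin k → Fin N) : ℝ :=
  ∑ w : Fin N → Fin n, L (wordPoly w) * ∏ l, if w (s l) = a l then (1 : ℝ) else 0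

theorem L_mul_pow (h3 : ∀ p : MvPolynomial (Fin n) ℝ, L (p * (1 - ∑ i, X i)) = 0)
    (p : MvPolynomial (Fin n) ℝ) (m : ℕ) : L (p * (∑ i, X i) ^ m) = L p := by
  induction m with
  | zero => simp
  | succ m ih =>
    have := h3 (p * (∑ i, X i) ^ m)
    rw [mul_sub, mul_one, map_sub, sub_eq_zero] at this
    rw [pow_succ, ← mul_assoc, ← this, ih]

theorem avgFun_word {k N : ℕ} (a : Fin k → Fin n) :
    avgFun L N (wordPoly a) = (∑ s : Fin k → Fin N, patProb L a s) / (N : ℝ) ^ k := by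
  simp only [avgFun, patProb]
  rw [Finset.sum_comm, Finset.sum_div]
  refine Finset.sum_congr rfl fun w _ => ?_
  rw [← Finset.mul_sum, mul_div_assoc]
  congr 1
  simp only [wordPoly, map_prod, eval_X, wordFreq]
  rw [Finset.prod_div_distrib, Finset.prod_univ_sum]
  simp

theorem L_word_nonneg (h1 : ∀ α : Fin n →₀ ℕ, 0 ≤ L (monomial α (1 : ℝ)))
    {k : ℕ} (w : Fin k → Fin n) : 0 ≤ L (wordPoly w) := by
  rw [wordPoly_eq_monomial]; exact h1 _

theorem sum_L_word (h3 : ∀ p : MvPolynomial (Fin n) ℝ, L (p * (1 - ∑ i, X i)) = 0) (N : ℕ) :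
    ∑ w : Fin N → Fin n, L (wordPoly w) = L 1 := by
  rw [← map_sum, ← L_mul_pow L h3 1 N]
  congr 1
  have := Finset.prod_univ_sum (fun _ : Fin N => (Finset.univ : Finset (Fin n)))
    (fun _ i => (X i : MvPolynomial (Fin n) ℝ))
  simp only [Fintype.piFinset_univ] at this
  simp [wordPoly, ← this]

theorem prod_ind {k N : ℕ} (a : Fin k → Fin n) (s : Fin k → Fin N) (w : Fin N → Fin n) :
    (∏ l, if w (s l) = a l then (1 : ℝ) else 0) = if ∀ l, w (s l) = a l then 1 else 0 := by
  rw [Finset.prod_ite_zero]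
  simp

theorem patProb_mem (h1 : ∀ α : Fin n →₀ ℕ, 0 ≤ L (monomial α (1 : ℝ)))
    (h3 : ∀ p : MvPolynomial (Fin n) ℝ, L (p * (1 - ∑ i, X i)) = 0)
    {k N : ℕ} (a : Fin k → Fin n) (s : Fin k → Fin N) :
    0 ≤ patProb L a s ∧ patProb L a s ≤ L 1 := by
  rw [← sum_L_word L h3 N]
  simp only [patProb, prod_ind]
  constructor
  · refine Finset.sum_nonneg fun w _ => mul_nonneg (L_word_nonneg L h1 w) ?_
    split_ifs <;> norm_num
  · refine Finset.sum_le_sum fun w _ => ?_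
    have := L_word_nonneg L h1 w
    split_ifs <;> simp [this]

theorem patProb_inj (h3 : ∀ p : MvPolynomial (Fin n) ℝ, L (p * (1 - ∑ i, X i)) = 0)
    {k N : ℕ} (a : Fin k → Fin n) (s : Fin k → Fin N) (hs : Function.Injective s) :
    patProb L a s = L (wordPoly a) := by
  classical
  let t : Fin N → Finset (Fin n) := fun j => {i | ∀ l, s l = j → a l = i}
  have key : ∑ w ∈ Fintype.piFinset t, wordPoly w
      = wordPoly a * (∑ i, X i) ^ (Finset.univ.map ⟨s, hs⟩)ᶜ.card := by
    have := Finset.prod_univ_sum t (fun _ i => (X i : MvPolynomial (Fin n) ℝ))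
    simp only [wordPoly]
    rw [← this, ← Finset.prod_mul_prod_compl (Finset.univ.map ⟨s, hs⟩), Finset.prod_map]
    congr 1
    · refine Finset.prod_congr rfl fun l _ => ?_
      have : t (s l) = {a l} := by
        ext i
        simp only [t, Finset.mem_filter, Finset.mem_univ, true_and, Finset.mem_singleton]
        constructor
        · intro h; exact (h l rfl).symm
        · rintro rfl l' hl; rw [hs hl]
      simp [this]
    · rw [Finset.prod_congr rfl (g := fun _ => ∑ i, X i), Finset.prod_const]
      intro j hj
      have : t j = Finset.univ := by
        ext i
        simp only [t, Finset.mem_filter, Finset.mem_univ, true_and, iff_true]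
        intro l hl
        simp at hj
        exact absurd hl (hj l)
      rw [this]
  have h : patProb L a s = L (∑ w ∈ Fintype.piFinset t, wordPoly w) := by
    rw [map_sum]
    simp only [patProb, prod_ind, mul_ite, mul_one, mul_zero]
    rw [← Finset.sum_filter]
    refine Finset.sum_congr ?_ fun _ _ => rfl
    ext w
    simp only [t, Finset.mem_filter, Finset.mem_univ, true_and, Fintype.mem_piFinset]
    constructor
    · rintro h j l rfl; exact (h l).symm
    · intro h l; exact (h _ l rfl).symm
  rw [h, key, L_mul_pow L h3]

theorem avgFun_word_bound (h1 : ∀ α : Fin n →₀ ℕ, 0 ≤ L (monomial α (1 : ℝ)))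
    (h3 : ∀ p : MvPolynomial (Fin n) ℝ, L (p * (1 - ∑ i, X i)) = 0)
    {k N : ℕ} (hN : 0 < N) (a : Fin k → Fin n) :
    |avgFun L N (wordPoly a) - L (wordPoly a)|
      ≤ (1 - (N.descFactorial k : ℝ) / (N : ℝ) ^ k) * L 1 := by
  classical
  have hNk : (0 : ℝ) < (N : ℝ) ^ k := by positivity
  have hLa : 0 ≤ L (wordPoly a) ∧ L (wordPoly a) ≤ L 1 := by
    rw [← patProb_inj L h3 a id Function.injective_id]
    exact patProb_mem L h1 h3 a id
  have hcard : ((Finset.univ.filter fun s : Fin k → Fin N => Function.Injective s).card)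
      = N.descFactorial k := by
    have := Fintype.card_embedding_eq (α := Fin k) (β := Fin N)
    rw [Fintype.card_fin, Fintype.card_fin] at this
    rw [← this, ← Fintype.card_subtype]
    exact Fintype.card_congr (Equiv.subtypeInjectiveEquivEmbedding _ _)
  have e1 : avgFun L N (wordPoly a) - L (wordPoly a)
      = (∑ s : Fin k → Fin N, (patProb L a s - L (wordPoly a))) / (N : ℝ) ^ k := by
    rw [avgFun_word, Finset.sum_sub_distrib, sub_div]
    congr 1
    simp
    field_simp
  have e2 : ∑ s : Fin k → Fin N, (if Function.Injective s then 0 else L 1)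
      = ((N : ℝ) ^ k - N.descFactorial k) * L 1 := by
    have : ∀ s : Fin k → Fin N, (if Function.Injective s then 0 else L 1)
      = L 1 - (if Function.Injective s then L 1 else 0) := by
      intro s; split_ifs <;> simp
    simp only [this]
    rw [Finset.sum_sub_distrib, ← Finset.sum_filter, Finset.sum_const, Finset.sum_const, hcard]
    simp
    ring
  rw [e1, abs_div, abs_of_pos hNk, div_le_iff₀ hNk]
  calc _ ≤ ∑ s : Fin k → Fin N, |patProb L a s - L (wordPoly a)| :=
        Finset.abs_sum_le_sum_abs _ _
    _ ≤ ∑ s : Fin k → Fin N, (if Function.Injective s then 0 else L 1) := by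
        refine Finset.sum_le_sum fun s _ => ?_
        split_ifs with hs
        · rw [patProb_inj L h3 a s hs]; simp
        · have := patProb_mem L h1 h3 a s
          rw [abs_le]; constructor <;> linarith
    _ = _ := by
        rw [e2]; field_simp

theorem tendsto_avgFun (h1 : ∀ α : Fin n →₀ ℕ, 0 ≤ L (monomial α (1 : ℝ)))
    (h3 : ∀ p : MvPolynomial (Fin n) ℝ, L (p * (1 - ∑ i, X i)) = 0)
    (f : MvPolynomial (Fin n) ℝ) :
    Filter.Tendsto (fun N => avgFun L N f) Filter.atTop (nhds (L f)) := by
  induction f using MvPolynomial.induction_on' with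
  | add p q hp hq =>
    have : (fun N => avgFun L N (p + q)) = fun N => avgFun L N p + avgFun L N q := by
      funext N; simp [avgFun, mul_add, Finset.sum_add_distrib]
    rw [this, map_add]
    exact hp.add hq
  | monomial α c =>
    obtain ⟨k, a, ha⟩ := exists_word α
    have hm : monomial α c = c • wordPoly a := by
      rw [← ha, smul_monomial]; simp
    have : (fun N => avgFun L N (monomial α c)) = fun N => c * avgFun L N (wordPoly a) := by
      funext N
      simp only [hm, avgFun, smul_eval, Finset.mul_sum]
      refine Finset.sum_congr rfl fun w _ => by ring
    rw [this, hm, map_smul, smul_eq_mul]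
    refine Filter.Tendsto.const_mul c ?_
    rw [tendsto_iff_dist_tendsto_zero]
    have hd : Filter.Tendsto (fun N : ℕ => (N.descFactorial k : ℝ) / (N : ℝ) ^ k)
        Filter.atTop (nhds 1) := by
      refine (Asymptotics.isEquivalent_iff_tendsto_one ?_).1 (isEquivalent_descFactorial k)
      filter_upwards [Filter.eventually_gt_atTop 0] with N hN
      positivity
    have hd' : Filter.Tendsto
        (fun N : ℕ => (1 - (N.descFactorial k : ℝ) / (N : ℝ) ^ k) * L 1)
        Filter.atTop (nhds 0) := by
      simpa using (hd.const_sub 1).mul_const (L 1)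
    refine squeeze_zero' (Filter.Eventually.of_forall fun _ => dist_nonneg) ?_ hd'
    filter_upwards [Filter.eventually_gt_atTop 0] with N hN
    rw [Real.dist_eq]
    exact avgFun_word_bound L h1 h3 hN a

theorem L_nonneg (h1 : ∀ α : Fin n →₀ ℕ, 0 ≤ L (monomial α (1 : ℝ)))
    (h3 : ∀ p : MvPolynomial (Fin n) ℝ, L (p * (1 - ∑ i, X i)) = 0)
    (f : MvPolynomial (Fin n) ℝ) (hf : ∀ x ∈ stdSimplex ℝ (Fin n), 0 ≤ eval x f) : 0 ≤ L f := by
  refine ge_of_tendsto (tendsto_avgFun L h1 h3 f) ?_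
  filter_upwards [Filter.eventually_gt_atTop 0] with N hN
  exact Finset.sum_nonneg fun w _ =>
    mul_nonneg (L_word_nonneg L h1 w) (hf _ (wordFreq_mem hN w))

/-- Restriction of polynomials to the simplex. -/
noncomputable def polyRestr (n : ℕ) :
    MvPolynomial (Fin n) ℝ →ₗ[ℝ] C(stdSimplex ℝ (Fin n), ℝ) where
  toFun f := ⟨fun x => eval (x : Fin n → ℝ) f,
    (MvPolynomial.continuous_eval f).comp continuous_subtype_val⟩
  map_add' f g := by ext; simp
  map_smul' c f := by ext; simp [smul_eval]

theorem polyRestr_apply (f : MvPolynomial (Fin n) ℝ) (x : stdSimplex ℝ (Fin n)) :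
    polyRestr n f x = eval (x : Fin n → ℝ) f := rfl

theorem exists_extension
    (hL : ∀ f : MvPolynomial (Fin n) ℝ, (∀ x ∈ stdSimplex ℝ (Fin n), 0 ≤ eval x f) → 0 ≤ L f) :
    ∃ g : C(stdSimplex ℝ (Fin n), ℝ) →ₗ[ℝ] ℝ, (∀ f, g (polyRestr n f) = L f) ∧
      ∀ u, (∀ x, 0 ≤ u x) → 0 ≤ g u := by
  have hL' : ∀ f, (∀ x, 0 ≤ polyRestr n f x) → 0 ≤ L f := fun f hf =>
    hL f fun x hx => hf ⟨x, hx⟩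
  have hker : LinearMap.ker (polyRestr n) ≤ LinearMap.ker L := by
    intro f hf
    rw [LinearMap.mem_ker] at hf ⊢
    have a1 := hL' f (by simp [hf])
    have a2 := hL' (-f) (by simp [hf])
    rw [map_neg] at a2
    linarith
  let φ : LinearMap.range (polyRestr n) →ₗ[ℝ] ℝ :=
    ((LinearMap.ker (polyRestr n)).liftQ L hker).comp
      (polyRestr n).quotKerEquivRange.symm.toLinearMap
  have hφ : ∀ f, φ ⟨polyRestr n f, f, rfl⟩ = L f := by
    intro f
    have : (⟨polyRestr n f, f, rfl⟩ : LinearMap.range (polyRestr n))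
      = (polyRestr n).quotKerEquivRange (Submodule.Quotient.mk f) := by
        apply Subtype.ext
        simp
    simp only [φ, LinearMap.comp_apply, LinearEquiv.coe_coe]
    rw [this, LinearEquiv.symm_apply_apply]
    simp
  let K : PointedCone ℝ C(stdSimplex ℝ (Fin n), ℝ) :=
    { carrier := {u | ∀ x, 0 ≤ u x}
      add_mem' := fun {u v} hu hv x => add_nonneg (hu x) (hv x)
      zero_mem' := fun x => le_rfl
      smul_mem' := fun c u hu x => mul_nonneg c.2 (hu x) }
  obtain ⟨g, hg1, hg2⟩ := riesz_extension K ⟨LinearMap.range (polyRestr n), φ⟩ (by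
    rintro ⟨_, f, rfl⟩ hu
    change 0 ≤ φ _
    rw [hφ]
    exact hL' f hu) (by
    intro y
    refine ⟨⟨polyRestr n (C ‖y‖), _, rfl⟩, fun x => ?_⟩
    have := y.norm_coe_le_norm x
    rw [Real.norm_eq_abs, abs_le] at this
    simp only [ContinuousMap.add_apply, polyRestr_apply, eval_C]
    linarith)
  exact ⟨g, fun f => (hg1 ⟨polyRestr n f, f, rfl⟩).trans (hφ f), hg2⟩

end Helpers

/-- **Proposition (representing measure on the simplex).**
If a linear functional `L` on the polynomial ring satisfies `L(x^α) ≥ 0` for all `α`,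
`L(1) ≤ 1`, and `L(p·(1 - x₁ - ⋯ - xₙ)) = 0` for every polynomial `p`, then there is a
positive finite Borel measure `μ` supported on the simplex with `μ(Δ_{n-1}) ≤ 1` such
that `L(f) = ∫ f dμ` for every polynomial `f`. -/
theorem limit_functional_representing_measure_simplex
    {n : ℕ} (L : MvPolynomial (Fin n) ℝ →ₗ[ℝ] ℝ)
    (h1 : ∀ α : Fin n →₀ ℕ, 0 ≤ L (monomial α (1 : ℝ)))
    (h2 : L 1 ≤ 1)
    (h3 : ∀ p : MvPolynomial (Fin n) ℝ, L (p * (1 - ∑ i, X i)) = 0)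
    (Δ : Set (Fin n → ℝ)) (hΔ : Δ = {x : Fin n → ℝ | (∀ i, 0 ≤ x i) ∧ ∑ i, x i = 1}) :
    ∃ μ : Measure (Fin n → ℝ), IsFiniteMeasure μ ∧ μ Δᶜ = 0 ∧ μ Δ ≤ 1 ∧
      ∀ f : MvPolynomial (Fin n) ℝ, L f = ∫ x, eval x f ∂μ := by
  have hΔ' : Δ = stdSimplex ℝ (Fin n) := hΔ
  clear hΔ
  subst hΔ'
  obtain ⟨g, hg1, hg2⟩ := exists_extension L (L_nonneg L h1 h3)
  let Λ : CompactlySupportedContinuousMap (stdSimplex ℝ (Fin n)) ℝ →ₚ[ℝ] ℝ :=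
  { toFun u := g u.toContinuousMap
    map_add' u v := g.map_add u.toContinuousMap v.toContinuousMap
    map_smul' c u := g.map_smul c u.toContinuousMap
    monotone' u v huv := by
      have := hg2 (v.toContinuousMap - u.toContinuousMap) (fun x => sub_nonneg.2 (huv x))
      rw [map_sub] at this
      exact sub_nonneg.1 this }
  let ν := RealRMK.rieszMeasure Λ
  have hν : IsFiniteMeasure ν := by infer_instance
  have hms : MeasurableSet (stdSimplex ℝ (Fin n)) := (isClosed_stdSimplex ℝ (Fin n)).measurableSet
  have hint : ∀ f : MvPolynomial (Fin n) ℝ,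
      L f = ∫ x, eval x f ∂(ν.map Subtype.val) := by
    intro f
    rw [(MeasurableEmbedding.subtype_coe hms).integral_map]
    have := RealRMK.integral_rieszMeasure Λ
      ⟨polyRestr n f, HasCompactSupport.of_compactSpace _⟩
    rw [← hg1 f]
    exact this.symm
  have hfin : IsFiniteMeasure (ν.map (Subtype.val : stdSimplex ℝ (Fin n) → Fin n → ℝ)) := by
    infer_instance
  refine ⟨ν.map Subtype.val, hfin, ?_, ?_, hint⟩
  · rw [Measure.map_apply measurable_subtype_coe hms.compl]
    simp
  · refine (measure_mono (Set.subset_univ _)).trans ?_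
    have h := hint 1
    simp only [map_one, integral_const, smul_eq_mul, mul_one] at h
    rw [h] at h2
    rw [Measure.real] at h2
    exact (ENNReal.toReal_le_toReal (measure_ne_top _ _) ENNReal.one_ne_top).1 (by simpa using h2)
end

section
/- Let K = { x ∈ ℝⁿ : g_1(x) ≥ 0, ..., g_m(x) ≥ 0 } be a compact basic closed semialgebraic set defined by polynomials g_1,...,g_m, let y = (y_α)_{α ∈ ℕⁿ} be a real sequence, and let L be the linear functional on the polynomial ring with L(x^α) = y_α. Then y has a representing positive finite Borel measure with support contained in K (i.e. y_α = ∫_K x^α dμ for all α) if and only if L(f²·g_J) ≥ 0 for every subset J ⊆ {1,...,m} and every polynomial f, where g_J = Π_{j ∈ J} g_j (with g_∅ = 1). -/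
namespace Schm

/-- A positive cone on a field gives an order. -/
lemma exists_order_of_cone {K : Type*} [Field K] (Q : Set K)
    (add : ∀ x y, x ∈ Q → y ∈ Q → x + y ∈ Q)
    (mul : ∀ x y, x ∈ Q → y ∈ Q → x * y ∈ Q)
    (tot : ∀ x, x ∈ Q ∨ -x ∈ Q)
    (anti : ∀ x, x ∈ Q → -x ∈ Q → x = 0) :
    ∃ (_ : LinearOrder K), IsStrictOrderedRing K ∧ ∀ x : K, 0 ≤ x ↔ x ∈ Q := by
  classical
  have h0 : (0 : K) ∈ Q := by rcases tot 0 with h | h <;> simpa using h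
  have h1 : (1 : K) ∈ Q := by
    rcases tot 1 with h | h
    · exact h
    · simpa using mul _ _ h h
  let ord : LinearOrder K :=
    { le := fun x y => y - x ∈ Q
      le_refl := fun x => by simpa using h0
      le_trans := fun x y z hxy hyz => by
        have := add _ _ hxy hyz
        simpa using this
      le_antisymm := fun x y hxy hyx => by
        have h := anti (y - x) hxy (by simpa using hyx)
        exact (sub_eq_zero.mp h).symm
      le_total := fun x y => by
        rcases tot (y - x) with h | h
        · exact Or.inl h
        · exact Or.inr (by simpa using h)
      toDecidableLE := fun _ _ => Classical.propDecidable _ }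
  have hle : ∀ x y : K, x ≤ y ↔ y - x ∈ Q := fun x y => Iff.rfl
  refine ⟨ord, ?_, fun x => by rw [hle]; simp⟩
  have : IsOrderedAddMonoid K :=
    { add_le_add_left := fun a b h c => by
        rw [hle] at h ⊢; simpa using h }
  have : ZeroLEOneClass K := ⟨by rw [hle]; simpa using h1⟩
  have : IsOrderedRing K := .of_mul_nonneg fun x y hx hy => by
    rw [hle] at hx hy ⊢
    simpa using mul _ _ hx hy
  exact IsOrderedRing.toIsStrictOrderedRing K

/-- Adjoining an element to a preorder. -/
def adj {A : Type*} [CommRing A] (T : Subsemiring A) (hsq : ∀ x : A, x * x ∈ T) (a : A) :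
    Subsemiring A where
  carrier := {x | ∃ s ∈ T, ∃ t ∈ T, x = s + a * t}
  zero_mem' := ⟨0, T.zero_mem, 0, T.zero_mem, by simp⟩
  one_mem' := ⟨1, T.one_mem, 0, T.zero_mem, by simp⟩
  add_mem' := by
    rintro _ _ ⟨s, hs, t, ht, rfl⟩ ⟨s', hs', t', ht', rfl⟩
    exact ⟨s + s', T.add_mem hs hs', t + t', T.add_mem ht ht', by ring⟩
  mul_mem' := by
    rintro _ _ ⟨s, hs, t, ht, rfl⟩ ⟨s', hs', t', ht', rfl⟩
    exact ⟨s * s' + a * a * (t * t'),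
      T.add_mem (T.mul_mem hs hs') (T.mul_mem (hsq a) (T.mul_mem ht ht')),
      s * t' + t * s', T.add_mem (T.mul_mem hs ht') (T.mul_mem ht hs'), by ring⟩

lemma mem_adj {A : Type*} [CommRing A] (T : Subsemiring A) (hsq : ∀ x : A, x * x ∈ T) (a x : A) :
    x ∈ adj T hsq a ↔ ∃ s ∈ T, ∃ t ∈ T, x = s + a * t := Iff.rfl

lemma le_adj {A : Type*} [CommRing A] (T : Subsemiring A) (hsq : ∀ x : A, x * x ∈ T) (a : A) :
    T ≤ adj T hsq a := fun s hs => ⟨s, hs, 0, T.zero_mem, by simp⟩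

lemma self_mem_adj {A : Type*} [CommRing A] (T : Subsemiring A) (hsq : ∀ x : A, x * x ∈ T)
    (a : A) : a ∈ adj T hsq a := ⟨0, T.zero_mem, 1, T.one_mem, by simp⟩

lemma exists_max_preorder {A : Type*} [CommRing A] (T : Subsemiring A)
    (hsq : ∀ x : A, x * x ∈ T) (h1 : (-1 : A) ∉ T) :
    ∃ P : Subsemiring A, T ≤ P ∧ (-1 : A) ∉ P ∧
      ∀ a b : A, -(a * b) ∈ P → a ∈ P ∨ b ∈ P := by
  obtain ⟨P, hTP, hP⟩ := zorn_le_nonempty₀ {P : Subsemiring A | (-1 : A) ∉ P} (by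
    intro c hc hchain y hy
    refine ⟨sSup c, ?_, fun z hz => le_sSup hz⟩
    change (-1 : A) ∉ sSup c
    rw [Subsemiring.mem_sSup_of_directedOn ⟨y, hy⟩ hchain.directedOn]
    rintro ⟨s, hs, hs'⟩
    exact hc hs hs') T h1
  have hsqP : ∀ x : A, x * x ∈ P := fun x => hTP (hsq x)
  have hPm : (-1 : A) ∉ P := hP.prop
  have key : ∀ a, a ∉ P → ∃ s ∈ P, ∃ t ∈ P, -1 = s + a * t := by
    intro a ha
    by_contra hcon
    have : adj P hsqP a ≤ P := hP.le_of_ge (y := adj P hsqP a) hcon (le_adj P hsqP a)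
    exact ha (this (self_mem_adj P hsqP a))
  refine ⟨P, hTP, hPm, fun a b hab => ?_⟩
  by_contra! hcon
  obtain ⟨s, hs, t, ht, h⟩ := key a hcon.1
  obtain ⟨s', hs', t', ht', h'⟩ := key b hcon.2
  apply hPm
  have e : (-1 : A) = s + s' + s * s' + (-(a * b)) * (t * t') := by
    have e1 : a * t = -(1 + s) := by linear_combination -h
    have e2 : b * t' = -(1 + s') := by linear_combination -h'
    have : (a * b) * (t * t') = (a * t) * (b * t') := by ring
    rw [neg_mul, this, e1, e2]; ring
  rw [e]
  exact P.add_mem (P.add_mem (P.add_mem hs hs') (P.mul_mem hs hs'))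
    (P.mul_mem hab (P.mul_mem ht ht'))

/-- A proper preorder is nonnegative under some map to an ordered field. -/
theorem exists_ordered_field {A : Type} [CommRing A] (T : Subsemiring A)
    (hsq : ∀ x : A, x * x ∈ T) (h1 : (-1 : A) ∉ T) :
    ∃ (F : Type) (_ : Field F) (_ : LinearOrder F) (_ : IsStrictOrderedRing F) (φ : A →+* F),
      ∀ t ∈ T, 0 ≤ φ t := by
  obtain ⟨P, hTP, hPm, hP⟩ := exists_max_preorder T hsq h1
  have hsqP : ∀ x : A, x * x ∈ P := fun x => hTP (hsq x)
  let PP : RingPreordering A :=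
    RingPreordering.mk' (P : Set A) (fun hx hy => P.add_mem hx hy) (fun hx hy => P.mul_mem hx hy)
      hsqP hPm
  have hmem : ∀ x, x ∈ PP ↔ x ∈ P := fun x => Iff.rfl
  have : PP.IsOrdering := RingPreordering.isOrdering_iff.mpr hP
  let I : Ideal A := PP.support
  have hI : ∀ x, x ∈ I ↔ x ∈ P ∧ -x ∈ P := fun x => Iff.rfl
  have : I.IsPrime := inferInstance
  let K := FractionRing (A ⧸ I)
  let φ : A →+* K := (algebraMap (A ⧸ I) K).comp (Ideal.Quotient.mk I)
  have hφ : ∀ x, φ x = 0 ↔ x ∈ I := by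
    intro x
    rw [← Ideal.Quotient.eq_zero_iff_mem]
    exact (map_eq_zero_iff _ (IsFractionRing.injective (A ⧸ I) K))
  have hsurj : ∀ x : K, ∃ a b, φ b ≠ 0 ∧ x * φ b = φ a := by
    intro x
    obtain ⟨a, b, hb, rfl⟩ := IsFractionRing.div_surjective (A := A ⧸ I) x
    obtain ⟨a, rfl⟩ := Ideal.Quotient.mk_surjective a
    obtain ⟨b, rfl⟩ := Ideal.Quotient.mk_surjective b
    have : φ b ≠ 0 := fun h => by
      have h2 := (map_eq_zero_iff _ (IsFractionRing.injective (A ⧸ I) K)).mp h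
      exact nonZeroDivisors.ne_zero hb h2
    exact ⟨a, b, this, div_mul_cancel₀ _ this⟩
  let Q : Set K := {x | ∃ a ∈ P, ∃ b, φ b ≠ 0 ∧ x * (φ b * φ b) = φ a}
  obtain ⟨ord, hord, hQ⟩ := exists_order_of_cone Q
    (by
      rintro x y ⟨a, ha, b, hb, h⟩ ⟨c, hc, d, hd, h'⟩
      refine ⟨a * (d * d) + c * (b * b), P.add_mem (P.mul_mem ha (hsqP _)) (P.mul_mem hc (hsqP _)),
        b * d, by rw [map_mul]; exact mul_ne_zero hb hd, ?_⟩
      simp only [map_mul, map_add, ← h, ← h']; ring)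
    (by
      rintro x y ⟨a, ha, b, hb, h⟩ ⟨c, hc, d, hd, h'⟩
      refine ⟨a * c, P.mul_mem ha hc, b * d, by rw [map_mul]; exact mul_ne_zero hb hd, ?_⟩
      simp only [map_mul, ← h, ← h']; ring)
    (by
      intro x
      obtain ⟨a, b, hb, h⟩ := hsurj x
      rcases mem_or_neg_mem PP (a * b) with h1 | h1
      · exact Or.inl ⟨a * b, h1, b, hb, by simp only [map_mul, ← h]; ring⟩
      · exact Or.inr ⟨-(a * b), h1, b, hb, by simp only [map_mul, map_neg, ← h]; ring⟩)
    (by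
      rintro x ⟨a, ha, b, hb, h⟩ ⟨c, hc, d, hd, h'⟩
      have e : φ (a * (d * d) + c * (b * b)) = 0 := by
        simp only [map_mul, map_add, ← h, ← h']; ring
      rw [hφ, hI] at e
      have e2 : a * (d * d) ∈ I := by
        rw [hI]
        refine ⟨P.mul_mem ha (hsqP _), ?_⟩
        have := P.add_mem e.2 (P.mul_mem hc (hsqP b))
        simpa using this
      rw [← hφ] at e2
      simp only [map_mul, ← h] at e2
      simpa [hb, hd] using e2)
  refine ⟨K, inferInstance, ord, hord, φ, fun t ht => ?_⟩
  rw [hQ]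
  exact ⟨t, hTP ht, 1, by simp, by simp⟩

end Schm

namespace Schm
open Polynomial

set_option linter.unusedSectionVars false

/-- Polynomial intermediate value property. -/
def IVT (N : Type*) [Field N] [LinearOrder N] : Prop :=
  ∀ (f : N[X]) (a b : N), a < b → f.eval a * f.eval b < 0 → ∃ c, a < c ∧ c < b ∧ f.eval c = 0

section
variable {S : Type*} [Field S] [LinearOrder S] [IsStrictOrderedRing S]

/-- weighted sums of squares -/
noncomputable def wsos (S : Type*) [Field S] [LinearOrder S] : AddSubmonoid S[X] :=
  AddSubmonoid.closure {x | ∃ (p : S) (h : S[X]), 0 ≤ p ∧ x = C p * (h * h)}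

lemma wsos_mul {x y : S[X]} (hx : x ∈ wsos S) (hy : y ∈ wsos S) : x * y ∈ wsos S := by
  unfold wsos at *
  induction hx, hy using AddSubmonoid.closure_induction₂ with
  | mem x y hx hy =>
    obtain ⟨p, h, hp, rfl⟩ := hx
    obtain ⟨q, k, hq, rfl⟩ := hy
    exact AddSubmonoid.subset_closure ⟨p * q, h * k, mul_nonneg hp hq, by rw [C_mul]; ring⟩
  | zero_left x hx => simp
  | zero_right x hx => simp
  | add_left x y z _ _ _ h1 h2 => rw [add_mul]; exact add_mem h1 h2
  | add_right x y z _ _ _ h1 h2 => rw [mul_add]; exact add_mem h1 h2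

lemma wsos_C {p : S} (hp : 0 ≤ p) : C p ∈ wsos S :=
  AddSubmonoid.subset_closure ⟨p, 1, hp, by simp⟩

lemma wsos_sq (h : S[X]) : h * h ∈ wsos S :=
  AddSubmonoid.subset_closure ⟨1, h, zero_le_one, by simp⟩

lemma wsos_eval {x : S[X]} (hx : x ∈ wsos S) (a : S) : 0 ≤ x.eval a := by
  unfold wsos at hx
  induction hx using AddSubmonoid.closure_induction with
  | mem x hx =>
    obtain ⟨p, h, hp, rfl⟩ := hx
    simp only [eval_mul, eval_C]
    exact mul_nonneg hp (mul_self_nonneg _)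
  | zero => simp
  | add x y _ _ h1 h2 => rw [eval_add]; exact add_nonneg h1 h2

lemma wsos_reduce {x : S[X]} (hx : x ∈ wsos S) (f : S[X]) (hf : 0 < f.natDegree) :
    ∃ y ∈ wsos S, f ∣ x - y ∧ y.natDegree ≤ 2 * (f.natDegree - 1) := by
  unfold wsos at hx
  induction hx using AddSubmonoid.closure_induction with
  | mem x hx =>
    obtain ⟨p, h, hp, rfl⟩ := hx
    refine ⟨C p * ((h % f) * (h % f)), AddSubmonoid.subset_closure ⟨p, h % f, hp, rfl⟩, ?_, ?_⟩
    · have e := EuclideanDomain.div_add_mod h f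
      refine ⟨C p * (h / f) * (h + h % f), ?_⟩
      have e2 : h - h % f = f * (h / f) := by linear_combination -e
      linear_combination C p * (h + h % f) * e2
    · have h1 : (h % f).natDegree ≤ f.natDegree - 1 := by
        have := natDegree_mod_lt h hf.ne'
        omega
      calc _ ≤ (h % f * (h % f)).natDegree := natDegree_C_mul_le _ _
        _ ≤ (h % f).natDegree + (h % f).natDegree := natDegree_mul_le
        _ ≤ _ := by omega
  | zero => exact ⟨0, zero_mem _, by simp, by simp⟩
  | add x y _ _ h1 h2 =>
    obtain ⟨x', hx', hfx, hdx⟩ := h1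
    obtain ⟨y', hy', hfy, hdy⟩ := h2
    refine ⟨x' + y', add_mem hx' hy', ?_, natDegree_add_le_of_degree_le hdx hdy⟩
    have := dvd_add hfx hfy
    convert this using 1; ring

lemma wsos_no_neg (n : ℕ) : ∀ (f : S[X]) (a b : S), f.natDegree ≤ n → f.eval a * f.eval b < 0 →
    ∀ s ∈ wsos S, ¬ f ∣ 1 + s := by
  induction n with
  | zero =>
    intro f a b hf hab s _ _
    rw [eq_C_of_natDegree_le_zero hf] at hab
    simp only [eval_C] at hab
    exact absurd (mul_self_nonneg _) (not_le.mpr hab)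
  | succ n ih =>
    intro f a b hf hab s hs hdvd
    have hf0 : 0 < f.natDegree := by
      by_contra h
      rw [eq_C_of_natDegree_le_zero (not_lt.mp h)] at hab
      simp only [eval_C] at hab
      exact absurd (mul_self_nonneg _) (not_le.mpr hab)
    obtain ⟨y, hy, hfy, hd⟩ := wsos_reduce hs f hf0
    have h1 : f ∣ 1 + y := by
      have := dvd_sub hdvd hfy
      convert this using 1; ring
    obtain ⟨q, hq⟩ := h1
    have hev : ∀ x, 0 < f.eval x * q.eval x := by
      intro x
      rw [← eval_mul, ← hq, eval_add, eval_one]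
      have := wsos_eval hy x
      linarith
    have hq0 : q ≠ 0 := by
      rintro rfl
      simpa using hev a
    have hf00 : f ≠ 0 := by rintro rfl; simp at hf0
    have hdeg : q.natDegree ≤ n := by
      have h2 : (f * q).natDegree = f.natDegree + q.natDegree := natDegree_mul hf00 hq0
      have h3 : (1 + y).natDegree ≤ 2 * (f.natDegree - 1) :=
        natDegree_add_le_of_degree_le (by simp) hd
      rw [hq, h2] at h3
      omega
    refine ih q a b hdeg ?_ y hy ⟨f, by rw [hq]; ring⟩
    have h4 := mul_pos (hev a) (hev b)
    by_contra hcon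
    have h5 : f.eval a * q.eval a * (f.eval b * q.eval b) =
      (f.eval a * f.eval b) * (q.eval a * q.eval b) := by ring
    rw [h5] at h4
    exact absurd (mul_nonpos_of_nonpos_of_nonneg hab.le (not_lt.mp hcon)) (not_le.mpr h4)

/-- If every sign-changing polynomial has a root then IVT holds. -/
lemma ivt_of_root (H : ∀ (f : S[X]) (a b : S), f.eval a * f.eval b < 0 → ∃ c, f.eval c = 0) :
    IVT S := by
  have key : ∀ n : ℕ, ∀ (f : S[X]) (a b : S), f.natDegree ≤ n → a < b → f.eval a * f.eval b < 0 →
      ∃ c, a < c ∧ c < b ∧ f.eval c = 0 := by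
    intro n
    induction n with
    | zero =>
      intro f a b hf _ hab
      rw [eq_C_of_natDegree_le_zero hf] at hab
      simp only [eval_C] at hab
      exact absurd (mul_self_nonneg _) (not_le.mpr hab)
    | succ n ih =>
      intro f a b hf hlt hab
      obtain ⟨r, hr⟩ := H f a b hab
      obtain ⟨g, hg⟩ := dvd_iff_isRoot.mpr (show f.IsRoot r from hr)
      have hf00 : f ≠ 0 := by rintro rfl; simp at hab
      have hg00 : g ≠ 0 := by rintro rfl; simp at hg; exact hf00 hg
      by_cases hin : a < r ∧ r < b
      · exact ⟨r, hin.1, hin.2, hr⟩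
      have hpos : 0 ≤ (a - r) * (b - r) := by
        by_cases h : a < r
        · have : b ≤ r := not_lt.mp fun h' => hin ⟨h, h'⟩
          exact mul_nonneg_of_nonpos_of_nonpos (by linarith) (by linarith)
        · exact mul_nonneg (by linarith) (by linarith)
      have hgab : g.eval a * g.eval b < 0 := by
        by_contra hcon
        have : f.eval a * f.eval b = ((a - r) * (b - r)) * (g.eval a * g.eval b) := by
          rw [hg]; simp; ring
        rw [this] at hab
        exact absurd (mul_nonneg hpos (not_lt.mp hcon)) (not_le.mpr hab)
      have hdeg : g.natDegree ≤ n := by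
        have := natDegree_mul (X_sub_C_ne_zero r) hg00
        rw [← hg, natDegree_X_sub_C] at this
        omega
      obtain ⟨c, h1, h2, h3⟩ := ih g a b hdeg hlt hgab
      exact ⟨c, h1, h2, by rw [hg, eval_mul, h3, mul_zero]⟩
  exact fun f a b => key _ f a b le_rfl

end

/-- A sign-changing polynomial gets a root in some ordered extension. -/
lemma exists_ext_root {S : Type} [Field S] [LinearOrder S] [IsStrictOrderedRing S]
    (f : S[X]) (a b : S) (hab : f.eval a * f.eval b < 0) :
    ∃ (F : Type) (_ : Field F) (_ : LinearOrder F) (_ : IsStrictOrderedRing F) (φ : S →+* F)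
      (θ : F), (∀ s, 0 ≤ s → 0 ≤ φ s) ∧ f.eval₂ φ θ = 0 := by
  let T : Subsemiring S[X] :=
    { carrier := {x | ∃ s ∈ wsos S, f ∣ x - s}
      zero_mem' := ⟨0, zero_mem _, by simp⟩
      one_mem' := ⟨1, by simpa using wsos_sq (1 : S[X]), by simp⟩
      add_mem' := by
        rintro x y ⟨s, hs, hx⟩ ⟨t, ht, hy⟩
        exact ⟨s + t, add_mem hs ht, by convert dvd_add hx hy using 1; ring⟩
      mul_mem' := by
        rintro x y ⟨s, hs, hx⟩ ⟨t, ht, hy⟩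
        refine ⟨s * t, wsos_mul hs ht, ?_⟩
        convert dvd_add (hx.mul_right y) (hy.mul_left s) using 1; ring }
  have hT : ∀ x, x ∈ T ↔ ∃ s ∈ wsos S, f ∣ x - s := fun x => Iff.rfl
  obtain ⟨F, i1, i2, i3, φ, hφ⟩ := exists_ordered_field T
    (fun x => ⟨x * x, wsos_sq x, by simp⟩)
    (by
      rintro ⟨s, hs, h⟩
      refine wsos_no_neg _ f a b le_rfl hab s hs ?_
      rw [← dvd_neg]
      convert h using 1; ring)
  refine ⟨F, i1, i2, i3, φ.comp C, φ X, fun s hs => hφ _ ⟨C s, wsos_C hs, by simp⟩, ?_⟩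
  have h0 : φ f = 0 := by
    apply le_antisymm
    · have := hφ (-f) ⟨0, zero_mem _, by simp⟩
      rw [map_neg] at this
      linarith
    · exact hφ f ⟨0, zero_mem _, by simp⟩
  rw [← h0]
  conv_rhs => rw [← eval₂_C_X (p := f), hom_eval₂]

end Schm

namespace Schm
open Polynomial

/-- cones of ordered subfields -/
structure IsC {C : Type*} [Field C] (Q : Set C) : Prop where
  one : (1 : C) ∈ Q
  add : ∀ x y, x ∈ Q → y ∈ Q → x + y ∈ Q
  mul : ∀ x y, x ∈ Q → y ∈ Q → x * y ∈ Q
  inv : ∀ x, x ∈ Q → x⁻¹ ∈ Q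
  neg : (-1 : C) ∉ Q
  diff : ∀ x y, x ∈ Q → y ∈ Q → x - y ∈ Q ∨ y - x ∈ Q

/-- the field of a cone -/
def IsC.sub {C : Type*} [Field C] {Q : Set C} (h : IsC Q) : Subfield C where
  carrier := {x | x ∈ Q ∨ -x ∈ Q}
  one_mem' := Or.inl h.one
  zero_mem' := by
    left
    simpa using h.diff 1 1 h.one h.one
  add_mem' := by
    rintro x y (hx | hx) (hy | hy)
    · exact Or.inl (h.add _ _ hx hy)
    · have := h.diff _ _ hx hy
      simp only [sub_neg_eq_add] at this
      rcases this with h | h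
      · exact Or.inl h
      · right; convert h using 1; ring
    · have := h.diff _ _ hx hy
      rcases this with h | h
      · right; convert h using 1; ring
      · left; convert h using 1; ring
    · right; convert h.add _ _ hx hy using 1; ring
  mul_mem' := by
    rintro x y (hx | hx) (hy | hy)
    · exact Or.inl (h.mul _ _ hx hy)
    · right; convert h.mul _ _ hx hy using 1; ring
    · right; convert h.mul _ _ hx hy using 1; ring
    · left; convert h.mul _ _ hx hy using 1; ring
  neg_mem' := by
    rintro x (hx | hx)
    · right; simpa using hx
    · left; exact hx
  inv_mem' := by
    rintro x (hx | hx)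
    · left; exact h.inv _ hx
    · right
      have := h.inv _ hx
      rwa [inv_neg] at this

lemma exists_lift {S E C : Type*} [Field S] [Field E] [Field C] [Algebra S E] [Algebra S C]
    [IsAlgClosed C] [Algebra.IsAlgebraic S E] : Nonempty (E →ₐ[S] C) := ⟨IsAlgClosed.lift⟩

lemma exists_ivt_ext (F : Type) [Field F] [LinearOrder F] [IsStrictOrderedRing F] :
    ∃ (N : Type) (_ : Field N) (_ : LinearOrder N) (_ : IsStrictOrderedRing N) (ψ : F →+* N),
      (∀ x, 0 ≤ x → 0 ≤ ψ x) ∧ IVT N := by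
  let C := AlgebraicClosure F
  let ι : F →+* C := algebraMap F C
  let Q0 : Set C := ι '' {x | 0 ≤ x}
  have hQ0 : IsC Q0 :=
    { one := ⟨1, zero_le_one, map_one _⟩
      add := by
        rintro _ _ ⟨x, hx, rfl⟩ ⟨y, hy, rfl⟩
        exact ⟨x + y, add_nonneg hx hy, map_add _ _ _⟩
      mul := by
        rintro _ _ ⟨x, hx, rfl⟩ ⟨y, hy, rfl⟩
        exact ⟨x * y, mul_nonneg hx hy, map_mul _ _ _⟩
      inv := by
        rintro _ ⟨x, hx, rfl⟩
        exact ⟨x⁻¹, inv_nonneg.mpr hx, map_inv₀ _ _⟩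
      neg := by
        rintro ⟨x, hx, h⟩
        have : x = -1 := ι.injective (by rw [h]; simp)
        subst this
        have : (0 : F) ≤ -1 := hx
        linarith
      diff := by
        rintro _ _ ⟨x, hx, rfl⟩ ⟨y, hy, rfl⟩
        rcases le_total x y with h | h
        · exact Or.inr ⟨y - x, sub_nonneg.mpr h, map_sub _ _ _⟩
        · exact Or.inl ⟨x - y, sub_nonneg.mpr h, map_sub _ _ _⟩ }
  obtain ⟨Q, hQ0Q, hQmax⟩ := zorn_subset_nonempty {Q : Set C | IsC Q} (by
    intro c hc hchain hne
    have two : ∀ x y, x ∈ ⋃₀ c → y ∈ ⋃₀ c → ∃ q ∈ c, x ∈ q ∧ y ∈ q := by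
      rintro x y ⟨q, hq, hx⟩ ⟨q', hq', hy⟩
      rcases hchain.total hq hq' with h | h
      · exact ⟨q', hq', h hx, hy⟩
      · exact ⟨q, hq, hx, h hy⟩
    refine ⟨⋃₀ c, ?_, fun s hs => Set.subset_sUnion_of_mem hs⟩
    obtain ⟨q0, hq0⟩ := hne
    refine ⟨⟨q0, hq0, (hc hq0).one⟩, ?_, ?_, ?_, ?_, ?_⟩
    · intro x y hx hy
      obtain ⟨q, hq, hx, hy⟩ := two x y hx hy
      exact ⟨q, hq, (hc hq).add _ _ hx hy⟩
    · intro x y hx hy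
      obtain ⟨q, hq, hx, hy⟩ := two x y hx hy
      exact ⟨q, hq, (hc hq).mul _ _ hx hy⟩
    · rintro x ⟨q, hq, hx⟩
      exact ⟨q, hq, (hc hq).inv _ hx⟩
    · rintro ⟨q, hq, hx⟩
      exact (hc hq).neg hx
    · intro x y hx hy
      obtain ⟨q, hq, hx, hy⟩ := two x y hx hy
      rcases (hc hq).diff _ _ hx hy with h | h
      · exact Or.inl ⟨q, hq, h⟩
      · exact Or.inr ⟨q, hq, h⟩) Q0 hQ0
  have hQ : IsC Q := hQmax.prop
  let S := hQ.sub
  have hS : ∀ x, x ∈ S ↔ x ∈ Q ∨ -x ∈ Q := fun x => Iff.rfl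
  obtain ⟨ord, hord, hle⟩ := exists_order_of_cone {x : S | (x : C) ∈ Q}
    (fun x y hx hy => hQ.add _ _ hx hy) (fun x y hx hy => hQ.mul _ _ hx hy)
    (fun x => x.2) (by
      intro x hx hx'
      by_contra h0
      apply hQ.neg
      have h1 : ((-x : S) : C) * ((x : C))⁻¹ ∈ Q := hQ.mul _ _ hx' (hQ.inv _ hx)
      have h2 : (x : C) ≠ 0 := fun h => h0 (Subtype.ext h)
      have h3 : ((-x : S) : C) * ((x : C))⁻¹ = -1 := by
        rw [Subfield.coe_neg, neg_mul, mul_inv_cancel₀ h2]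
      rwa [h3] at h1)
  have hιS : ∀ x, ι x ∈ S := by
    intro x
    rcases le_total 0 x with h | h
    · exact Or.inl (hQ0Q ⟨x, h, rfl⟩)
    · exact Or.inr (hQ0Q ⟨-x, neg_nonneg.mpr h, map_neg _ _⟩)
  refine ⟨S, inferInstance, ord, hord, ι.codRestrict S hιS, ?_, ?_⟩
  · intro x hx
    rw [hle]
    exact hQ0Q ⟨x, hx, rfl⟩
  apply ivt_of_root
  intro f a b hab
  obtain ⟨M, i1, i2, i3, φ, θ, hφ, hθ⟩ := exists_ext_root f a b hab
  let _ := φ.toAlgebra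
  have hf0 : f ≠ 0 := by rintro rfl; simp at hab
  have halg : IsAlgebraic S θ := ⟨f, hf0, hθ⟩
  let E := IntermediateField.adjoin S {θ}
  have : Algebra.IsAlgebraic S E :=
    IntermediateField.isAlgebraic_adjoin_simple halg.isIntegral
  have : IsAlgClosed C := inferInstance
  obtain ⟨j⟩ : Nonempty (E →ₐ[S] C) := exists_lift
  let Q' : Set C := {z | ∃ x : E, 0 ≤ (x : M) ∧ j x = z}
  have hQ' : IsC Q' :=
    { one := ⟨1, by simp, map_one _⟩
      add := by
        rintro _ _ ⟨x, hx, rfl⟩ ⟨y, hy, rfl⟩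
        exact ⟨x + y, add_nonneg hx hy, map_add _ _ _⟩
      mul := by
        rintro _ _ ⟨x, hx, rfl⟩ ⟨y, hy, rfl⟩
        exact ⟨x * y, mul_nonneg hx hy, map_mul _ _ _⟩
      inv := by
        rintro _ ⟨x, hx, rfl⟩
        exact ⟨x⁻¹, by push_cast; exact inv_nonneg.mpr hx, map_inv₀ _ _⟩
      neg := by
        rintro ⟨x, hx, h⟩
        have : x = -1 := j.injective (show j x = j (-1) by rw [h]; simp)
        subst this
        push_cast at hx
        linarith
      diff := by
        rintro _ _ ⟨x, hx, rfl⟩ ⟨y, hy, rfl⟩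
        rcases le_total (x : M) y with h | h
        · exact Or.inr ⟨y - x, by push_cast; exact sub_nonneg.mpr h, map_sub _ _ _⟩
        · exact Or.inl ⟨x - y, by push_cast; exact sub_nonneg.mpr h, map_sub _ _ _⟩ }
  have hQQ' : Q ⊆ Q' := by
    intro z hz
    have h0 : (0 : S) ≤ ⟨z, Or.inl hz⟩ := by rw [hle]; exact hz
    refine ⟨algebraMap S E ⟨z, Or.inl hz⟩, hφ _ h0, ?_⟩
    rw [AlgHom.commutes]; rfl
  have hQ'Q : Q' ⊆ Q := hQmax.le_of_ge hQ' hQQ'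
  let t : E := IntermediateField.AdjoinSimple.gen S θ
  have ht : (t : M) = θ := IntermediateField.AdjoinSimple.coe_gen S θ
  have hjt : j t ∈ S := by
    rcases le_total 0 (t : M) with h | h
    · exact Or.inl (hQ'Q ⟨t, h, rfl⟩)
    · exact Or.inr (hQ'Q ⟨-t, by push_cast; exact neg_nonneg.mpr h, map_neg _ _⟩)
  refine ⟨⟨j t, hjt⟩, ?_⟩
  have h1 : aeval t f = 0 := by
    apply Subtype.ext
    have : ((aeval t f : E) : M) = aeval (t : M) f := by
      exact (aeval_algHom_apply (IntermediateField.val E) t f).symm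
    rw [this, ht]; exact hθ
  have h2 : aeval (j t) f = 0 := by rw [aeval_algHom_apply, h1, map_zero]
  apply Subtype.ext
  have h3 : (algebraMap S C) (f.eval ⟨j t, hjt⟩) = aeval (algebraMap S C ⟨j t, hjt⟩) f := by
    rw [aeval_algebraMap_apply]; simp
  exact h3.trans h2

end Schm

namespace Schm
open Polynomial

section
variable {N : Type*} [Field N] [LinearOrder N] [IsStrictOrderedRing N]

lemma ivt_const_sign (H : IVT N) {f : N[X]} {a b : N}
    (hf : ∀ c, a < c → c < b → f.eval c ≠ 0) {x y : N} (hx : a < x) (hxb : x < b)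
    (hy : a < y) (hyb : y < b) : 0 < f.eval x * f.eval y := by
  have key : ∀ x y : N, x < y → a < x → y < b → 0 < f.eval x * f.eval y := by
    intro x y hxy hx hy
    by_contra hcon
    have hne : f.eval x * f.eval y ≠ 0 := mul_ne_zero (hf x hx (hxy.trans hy)) (hf y (hx.trans hxy) hy)
    obtain ⟨c, h1, h2, h3⟩ := H f x y hxy (lt_of_le_of_ne (not_lt.mp hcon) hne)
    exact hf c (hx.trans h1) (h2.trans hy) h3
  rcases lt_trichotomy x y with h | h | h
  · exact key x y h hx hyb
  · subst h; exact mul_self_pos.mpr (hf x hx hxb)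
  · rw [mul_comm]; exact key y x h hy hxb

lemma rolle_aux (H : IVT N) (f : N[X]) (hf0 : f ≠ 0) (a b : N) (hab : a < b) (ha : f.eval a = 0)
    (hb : f.eval b = 0) (hno : ∀ c, a < c → c < b → f.eval c ≠ 0) :
    ∃ c, a < c ∧ c < b ∧ f.derivative.eval c = 0 := by
  obtain ⟨g1, hg1, hg1'⟩ := exists_eq_pow_rootMultiplicity_mul_and_not_dvd f hf0 a
  have hm : 0 < f.rootMultiplicity a := (rootMultiplicity_pos hf0).mpr ha
  obtain ⟨m, hm'⟩ : ∃ m, f.rootMultiplicity a = m + 1 := ⟨_, (Nat.succ_pred_eq_of_pos hm).symm⟩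
  rw [hm'] at hg1
  rw [dvd_iff_isRoot] at hg1'
  have hg10 : g1 ≠ 0 := by rintro rfl; simp at hg1'
  obtain ⟨g, hg, hg'⟩ := exists_eq_pow_rootMultiplicity_mul_and_not_dvd g1 hg10 b
  have hb1 : g1.eval b = 0 := by
    have hba : b - a ≠ 0 := sub_ne_zero.mpr hab.ne'
    rw [hg1] at hb
    simpa [hba] using hb
  have hn : 0 < g1.rootMultiplicity b := (rootMultiplicity_pos hg10).mpr hb1
  obtain ⟨n, hn'⟩ : ∃ n, g1.rootMultiplicity b = n + 1 := ⟨_, (Nat.succ_pred_eq_of_pos hn).symm⟩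
  rw [hn'] at hg
  rw [dvd_iff_isRoot] at hg'
  have hgb : g.eval b ≠ 0 := hg'
  have hga : g.eval a ≠ 0 := by
    intro h
    apply hg1'
    rw [IsRoot, hg, eval_mul, h, mul_zero]
  have hf : f = (X - C a) ^ (m + 1) * ((X - C b) ^ (n + 1) * g) := by rw [← hg, ← hg1]
  let k : N[X] := C ((m : N) + 1) * (X - C b) * g + C ((n : N) + 1) * (X - C a) * g
    + (X - C a) * (X - C b) * derivative g
  have hder : derivative f = (X - C a) ^ m * (X - C b) ^ n * k := by
    rw [hf]
    simp only [derivative_mul, derivative_X_sub_C_pow, k]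
    simp only [Nat.add_sub_cancel, Nat.cast_add, Nat.cast_one, map_add, map_natCast, map_one]
    ring
  have hgab : 0 < g.eval a * g.eval b := by
    by_contra hcon
    obtain ⟨c, h1, h2, h3⟩ := H g a b hab (lt_of_le_of_ne (not_lt.mp hcon) (mul_ne_zero hga hgb))
    apply hno c h1 h2
    rw [hf]; simp [h3]
  have hk : k.eval a * k.eval b < 0 := by
    have e : k.eval a * k.eval b =
        -(((m : N) + 1) * ((n : N) + 1) * (b - a) ^ 2 * (g.eval a * g.eval b)) := by
      simp [k]; ring
    rw [e, neg_lt_zero]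
    have : 0 < b - a := sub_pos.mpr hab
    positivity
  obtain ⟨c, h1, h2, h3⟩ := H k a b hab hk
  exact ⟨c, h1, h2, by rw [hder, eval_mul, h3, mul_zero]⟩

lemma ivt_rolle (H : IVT N) (f : N[X]) (a b : N) (hab : a < b) (ha : f.eval a = 0)
    (hb : f.eval b = 0) : ∃ c, a < c ∧ c < b ∧ f.derivative.eval c = 0 := by
  by_cases hf0 : f = 0
  · subst hf0
    obtain ⟨c, h1, h2⟩ := exists_between hab
    exact ⟨c, h1, h2, by simp⟩
  let s : Finset N := f.roots.toFinset.filter (fun x => a < x)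
  have hs : ∀ x, x ∈ s ↔ f.eval x = 0 ∧ a < x := by
    intro x; simp [s, hf0]
  have hbs : b ∈ s := (hs b).mpr ⟨hb, hab⟩
  have hne : s.Nonempty := ⟨b, hbs⟩
  have hmin := (hs _).mp (s.min'_mem hne)
  have hle : s.min' hne ≤ b := s.min'_le b hbs
  obtain ⟨c, h1, h2, h3⟩ := rolle_aux H f hf0 a (s.min' hne) hmin.2 ha hmin.1 (by
    intro c hac hc h0
    exact absurd (s.min'_le c ((hs c).mpr ⟨h0, hac⟩)) (not_le.mpr hc))
  exact ⟨c, h1, h2.trans_le hle, h3⟩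

lemma ivt_mvt (H : IVT N) (f : N[X]) (a b : N) (hab : a < b) :
    ∃ c, a < c ∧ c < b ∧ f.eval b - f.eval a = f.derivative.eval c * (b - a) := by
  have hba : b - a ≠ 0 := sub_ne_zero.mpr hab.ne'
  let s := (f.eval b - f.eval a) / (b - a)
  have hs : s * (b - a) = f.eval b - f.eval a := div_mul_cancel₀ _ hba
  obtain ⟨c, h1, h2, h3⟩ := ivt_rolle H (f - C (f.eval a) - C s * (X - C a)) a b hab (by simp)
    (by simp [hs])
  refine ⟨c, h1, h2, ?_⟩
  have : f.derivative.eval c = s := by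
    simpa [sub_eq_zero] using h3
  rw [this, hs]

lemma ivt_mono (H : IVT N) {f : N[X]} {a b : N} (hab : a < b)
    (hf : ∀ c, a < c → c < b → 0 < f.derivative.eval c) : f.eval a < f.eval b := by
  obtain ⟨c, h1, h2, h3⟩ := ivt_mvt H f a b hab
  have := mul_pos (hf c h1 h2) (sub_pos.mpr hab)
  linarith

/-- Nonnegativity extends to the endpoints. -/
lemma ivt_left (H : IVT N) {f : N[X]} {a b : N} (hab : a < b)
    (hf : ∀ c, a < c → c < b → 0 < f.eval c) : 0 ≤ f.eval a ∧ 0 ≤ f.eval b := by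
  obtain ⟨m, h1, h2⟩ := exists_between hab
  have hm := hf m h1 h2
  constructor
  · by_contra hcon
    obtain ⟨c, h3, h4, h5⟩ := H f a m h1 (mul_neg_of_neg_of_pos (not_le.mp hcon) hm)
    exact (hf c h3 (h4.trans h2)).ne' h5
  · by_contra hcon
    obtain ⟨c, h3, h4, h5⟩ := H f m b h2 (mul_neg_of_pos_of_neg hm (not_le.mp hcon))
    exact (hf c (h1.trans h3) h4).ne' h5
end

end Schm

namespace Schm
open Polynomial
set_option linter.unusedSectionVars false

section
variable {N U R : Type*} [Field N] [LinearOrder N] [IsStrictOrderedRing N]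
  [Field U] [LinearOrder U] [IsStrictOrderedRing U] [CommRing R]
  {π1 : R →+* N} {π2 : R →+* U}

lemma good_pos (hg : ∀ p, 0 ≤ π1 p ↔ 0 ≤ π2 p) (p : R) : 0 < π1 p ↔ 0 < π2 p := by
  have h := hg (-p)
  rw [map_neg, map_neg, neg_nonneg, neg_nonneg] at h
  rw [← not_le, ← not_le, h]

lemma good_lt (hg : ∀ p, 0 ≤ π1 p ↔ 0 ≤ π2 p) (p q : R) : π1 p < π1 q ↔ π2 p < π2 q := by
  have h := good_pos hg (q - p)
  simpa using h

lemma eval_map_pi (h : R[X]) (p : R) (φ : R →+* N) : (h.map φ).eval (φ p) = φ (h.eval p) := by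
  rw [eval_map, eval₂_at_apply]

lemma deriv_zero (hinj : Function.Injective π1) {h : R[X]} (hd : derivative h = 0) :
    h = C (h.coeff 0) := by
  apply eq_C_of_natDegree_eq_zero
  rw [← natDegree_map_eq_of_injective hinj]
  apply Polynomial.derivative_eq_zero.mp
  rw [derivative_map, hd, Polynomial.map_zero]

/-- The interval lemma. -/
lemma interval (HN : IVT N) (HU : IVT U) (hg : ∀ p, 0 ≤ π1 p ↔ 0 ≤ π2 p)
    (hinj : Function.Injective π1) (p q : R) (n : ℕ) :
    ∀ (h : R[X]), h.natDegree ≤ n →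
    (∀ i, derivative^[i] h ≠ 0 → ∀ c, π1 p < c → c < π1 q →
      ((derivative^[i] h).map π1).eval c ≠ 0) →
    ∀ x, π1 p < x → x < π1 q → ∀ x', π2 p < x' → x' < π2 q →
      0 < (h.map π1).eval x → 0 < (h.map π2).eval x' := by
  induction n with
  | zero =>
    intro h hdeg _ x _ _ x' _ _ hpos
    rw [eq_C_of_natDegree_le_zero hdeg] at hpos ⊢
    simp only [map_C, eval_C] at hpos ⊢
    exact (good_pos hg _).mp hpos
  | succ n ih =>
    intro h hdeg hroots x hx1 hx2 x' hx1' hx2' hpos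
    by_cases hd : derivative h = 0
    · rw [deriv_zero hinj hd] at hpos ⊢
      simp only [map_C, eval_C] at hpos ⊢
      exact (good_pos hg _).mp hpos
    have h0 : h ≠ 0 := by rintro rfl; simp at hd
    have hposall : ∀ c, π1 p < c → c < π1 q → 0 < (h.map π1).eval c := by
      intro c hc1 hc2
      have := ivt_const_sign HN (f := h.map π1) (fun c h1 h2 => hroots 0 h0 c h1 h2) hc1 hc2 hx1 hx2
      exact pos_of_mul_pos_left this hpos.le
    have hends := ivt_left HN (hx1.trans hx2) hposall
    rw [eval_map_pi, eval_map_pi, hg, hg, ← eval_map_pi, ← eval_map_pi] at hends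
    have hdd : (derivative h).natDegree ≤ n := by
      have := natDegree_derivative_le h
      omega
    have hroots' : ∀ i, derivative^[i] (derivative h) ≠ 0 → ∀ c, π1 p < c → c < π1 q →
        ((derivative^[i] (derivative h)).map π1).eval c ≠ 0 := by
      intro i
      rw [← Function.iterate_succ_apply]
      exact hroots (i + 1)
    have hne := hroots' 0 hd x hx1 hx2
    simp only [Function.iterate_zero, id] at hne
    rcases lt_or_gt_of_ne hne with hneg | hpos'
    · have h2 : ∀ c', x' < c' → c' < π2 q → 0 < (derivative (-(h.map π2))).eval c' := by
        intro c' h1 h2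
        have := ih (-derivative h) (by rwa [natDegree_neg]) (by
          intro i
          rw [iterate_derivative_neg, neg_ne_zero, Polynomial.map_neg]
          simp only [eval_neg, neg_ne_zero]
          exact hroots' i) x hx1 hx2 c' (hx1'.trans h1) h2 (by
            rw [Polynomial.map_neg, eval_neg]; linarith)
        rwa [Polynomial.map_neg, ← derivative_map, ← derivative_neg] at this
      have := ivt_mono HU hx2' h2
      simp only [eval_neg] at this
      linarith [hends.2]
    · have h2 : ∀ c', π2 p < c' → c' < x' → 0 < (derivative (h.map π2)).eval c' := by
        intro c' h1 h2
        have := ih (derivative h) hdd hroots' x hx1 hx2 c' h1 (h2.trans hx2') hpos'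
        rwa [← derivative_map] at this
      have := ivt_mono HU hx1' h2
      linarith [hends.1]

/-- Narrowing an interval so that it avoids finitely many points. -/
lemma narrow (θ : N) (s : Finset N) (hs : ∀ r ∈ s, r ≠ θ ∧ ∃ z : R, π1 z = r)
    (p0 q0 : R) (hp0 : π1 p0 < θ) (hq0 : θ < π1 q0) :
    ∃ p q : R, π1 p < θ ∧ θ < π1 q ∧ ∀ r ∈ s, π1 p < r → r < π1 q → False := by
  induction s using Finset.induction_on with
  | empty => exact ⟨p0, q0, hp0, hq0, by simp⟩
  | insert r s _ ih =>
    obtain ⟨p, q, hp, hq, h⟩ := ih (fun r hr => hs r (Finset.mem_insert_of_mem hr))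
    obtain ⟨hne, z, hz⟩ := hs r (Finset.mem_insert_self _ _)
    rcases lt_or_gt_of_ne hne with hlt | hgt
    · by_cases hpr : π1 p < r
      · refine ⟨z, q, by rwa [hz], hq, ?_⟩
        intro r' hr' h1 h2
        rcases Finset.mem_insert.mp hr' with rfl | hr'
        · rw [hz] at h1; exact lt_irrefl _ h1
        · rw [hz] at h1; exact h r' hr' (hpr.trans h1) h2
      · refine ⟨p, q, hp, hq, ?_⟩
        intro r' hr' h1 h2
        rcases Finset.mem_insert.mp hr' with rfl | hr'
        · exact hpr h1
        · exact h r' hr' h1 h2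
    · by_cases hpr : r < π1 q
      · refine ⟨p, z, hp, by rwa [hz], ?_⟩
        intro r' hr' h1 h2
        rcases Finset.mem_insert.mp hr' with rfl | hr'
        · rw [hz] at h2; exact lt_irrefl _ h2
        · rw [hz] at h2; exact h r' hr' h1 (h2.trans hpr)
      · refine ⟨p, q, hp, hq, ?_⟩
        intro r' hr' h1 h2
        rcases Finset.mem_insert.mp hr' with rfl | hr'
        · exact hpr h2
        · exact h r' hr' h1 h2

/-- Finding an interval around `θ` free of roots of derivatives of finitely many polynomials. -/
lemma find_interval (hinj : Function.Injective π1) (θ : N) (H : Finset R[X])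
    (hH : ∀ h ∈ H, ∀ i, derivative^[i] h ≠ 0 → ∀ c, ((derivative^[i] h).map π1).eval c = 0 →
      c ≠ θ ∧ ∃ z : R, π1 z = c)
    (p0 q0 : R) (hp0 : π1 p0 < θ) (hq0 : θ < π1 q0) :
    ∃ p q : R, π1 p < θ ∧ θ < π1 q ∧ ∀ h ∈ H, ∀ i, derivative^[i] h ≠ 0 →
      ∀ c, π1 p < c → c < π1 q → ((derivative^[i] h).map π1).eval c ≠ 0 := by
  classical
  let s : Finset N := H.biUnion fun h => (Finset.range (h.natDegree + 1)).biUnion fun i =>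
    ((derivative^[i] h).map π1).roots.toFinset
  have hmap : ∀ g : R[X], g ≠ 0 → g.map π1 ≠ 0 := fun g hg =>
    (Polynomial.map_ne_zero_iff hinj).mpr hg
  obtain ⟨p, q, hp, hq, h⟩ := narrow (π1 := π1) θ s (by
    intro r hr
    simp only [s, Finset.mem_biUnion, Multiset.mem_toFinset, mem_roots', IsRoot] at hr
    obtain ⟨h, hh, i, _, hne, hr⟩ := hr
    exact hH h hh i (by intro h0; rw [h0] at hne; simp at hne) r hr) p0 q0 hp0 hq0
  refine ⟨p, q, hp, hq, ?_⟩
  intro g hg i hne c h1 h2 h0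
  refine h c ?_ h1 h2
  simp only [s, Finset.mem_biUnion, Multiset.mem_toFinset, mem_roots', IsRoot]
  refine ⟨g, hg, i, ?_, hmap _ hne, h0⟩
  rw [Finset.mem_range]
  by_contra hcon
  exact hne (iterate_derivative_eq_zero (by omega))

/-- iff form from positivity -/
lemma iff_of_pos {z : N} {z' : U}
    (h : ∀ h : R[X], 0 < (h.map π1).eval z → 0 < (h.map π2).eval z')
    (h0 : ∀ h : R[X], (h.map π1).eval z = 0 → (h.map π2).eval z' = 0) (k : R[X]) :
    0 ≤ (k.map π1).eval z ↔ 0 ≤ (k.map π2).eval z' := by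
  rcases lt_trichotomy ((k.map π1).eval z) 0 with hk | hk | hk
  · have := h (-k) (by rw [Polynomial.map_neg, eval_neg]; linarith)
    rw [Polynomial.map_neg, eval_neg] at this
    constructor <;> intro <;> linarith
  · simp [hk, h0 k hk]
  · have := h k hk
    constructor <;> intro <;> linarith

/-- transcendental extension -/
lemma transc (HN : IVT N) (HU : IVT U) (hg : ∀ p, 0 ≤ π1 p ↔ 0 ≤ π2 p)
    (hinj : Function.Injective π1)
    (hac : ∀ h : R[X], h ≠ 0 → ∀ c, (h.map π1).eval c = 0 → ∃ z : R, π1 z = c)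
    (b : N) (hb : ∀ z, π1 z ≠ b) (p0 q0 : R) (hp0 : π1 p0 < b) (hq0 : b < π1 q0)
    (b' : U) (hcut1 : ∀ z, π1 z < b → π2 z < b') (hcut2 : ∀ z, b < π1 z → b' < π2 z) (k : R[X]) :
    0 ≤ (k.map π1).eval b ↔ 0 ≤ (k.map π2).eval b' := by
  apply iff_of_pos
  · intro h hpos
    obtain ⟨p, q, hp, hq, hroots⟩ := find_interval hinj b {h} (by
      intro g _ i hne c hc
      obtain ⟨z, hz⟩ := hac _ hne c hc
      exact ⟨fun h => hb z (hz.trans h), z, hz⟩) p0 q0 hp0 hq0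
    exact interval HN HU hg hinj p q _ h le_rfl (hroots h (by simp)) b hp hq b' (hcut1 p hp)
      (hcut2 q hq) hpos
  · intro h h0
    by_cases hh : h = 0
    · simp [hh]
    · obtain ⟨z, hz⟩ := hac h hh b h0
      exact absurd hz (hb z)

lemma root_bound (f : N[X]) (hf : f.Monic) (θ : N) (h : f.eval θ = 0) :
    |θ| ≤ 1 + ∑ i ∈ Finset.range f.natDegree, |f.coeff i| := by
  by_contra! hcon
  have hs : 0 ≤ ∑ i ∈ Finset.range f.natDegree, |f.coeff i| :=
    Finset.sum_nonneg fun i _ => abs_nonneg _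
  have h1 : 1 ≤ |θ| := by linarith
  have hn : f.natDegree ≠ 0 := by
    intro h0
    rw [hf.natDegree_eq_zero.mp h0] at h
    simp at h
  obtain ⟨n, hn⟩ := Nat.exists_eq_succ_of_ne_zero hn
  rw [eval_eq_sum_range, Finset.sum_range_succ, hf.coeff_natDegree, one_mul] at h
  have e : θ ^ f.natDegree = -∑ i ∈ Finset.range f.natDegree, f.coeff i * θ ^ i := by
    linear_combination h
  have e2 : |θ| ^ f.natDegree ≤ (∑ i ∈ Finset.range f.natDegree, |f.coeff i|) * |θ| ^ n := by
    rw [← abs_pow, e, abs_neg, Finset.sum_mul]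
    refine (Finset.abs_sum_le_sum_abs _ _).trans (Finset.sum_le_sum fun i hi => ?_)
    rw [abs_mul, abs_pow]
    refine mul_le_mul_of_nonneg_left (pow_le_pow_right₀ h1 ?_) (abs_nonneg _)
    rw [hn, Finset.mem_range] at hi
    omega
  have hp : 0 < |θ| ^ n := pow_pos (by linarith) _
  have e3 : |θ| ^ f.natDegree = |θ| * |θ| ^ n := by rw [hn, pow_succ, mul_comm]
  rw [e3] at e2
  have := le_of_mul_le_mul_right e2 hp
  linarith

end

end Schm

namespace Schm
open Polynomial
set_option linter.unusedSectionVars false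

section
variable {N U : Type} [Field N] [LinearOrder N] [IsStrictOrderedRing N]
  [Field U] [LinearOrder U] [IsStrictOrderedRing U]

def Good (Γ : Subring (N × U)) : Prop := ∀ p ∈ Γ, 0 ≤ p.1 ↔ 0 ≤ p.2

def p1 (Γ : Subring (N × U)) : Γ →+* N := (RingHom.fst N U).comp Γ.subtype
def p2 (Γ : Subring (N × U)) : Γ →+* U := (RingHom.snd N U).comp Γ.subtype

lemma p1_apply (Γ : Subring (N × U)) (z : Γ) : p1 Γ z = z.1.1 := rfl
lemma p2_apply (Γ : Subring (N × U)) (z : Γ) : p2 Γ z = z.1.2 := rfl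

lemma Good.iff {Γ : Subring (N × U)} (h : Good Γ) (z : Γ) : 0 ≤ p1 Γ z ↔ 0 ≤ p2 Γ z := h z.1 z.2

lemma Good.eq_zero {Γ : Subring (N × U)} (h : Good Γ) {p : N × U} (hp : p ∈ Γ) :
    p.1 = 0 ↔ p.2 = 0 := by
  have h1 := h p hp
  have h2 := h (-p) (neg_mem hp)
  simp only [Prod.fst_neg, Prod.snd_neg, neg_nonneg] at h2
  rw [le_antisymm_iff, le_antisymm_iff, h1, h2]

lemma Good.inj {Γ : Subring (N × U)} (h : Good Γ) : Function.Injective (p1 Γ) := by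
  rw [injective_iff_map_eq_zero]
  intro z hz
  have := (h.eq_zero z.2).mp hz
  exact Subtype.ext (Prod.ext hz this)

lemma adjoin_good {R : Type} [CommRing R] (π1 : R →+* N) (π2 : R →+* U) (z : N × U)
    (h : ∀ k : R[X], 0 ≤ (k.map π1).eval z.1 ↔ 0 ≤ (k.map π2).eval z.2) :
    ∃ Γ' : Subring (N × U), Good Γ' ∧ z ∈ Γ' ∧ ∀ r, (π1 r, π2 r) ∈ Γ' := by
  refine ⟨(eval₂RingHom (π1.prod π2) z).range, ?_, ⟨X, by simp⟩, fun r => ⟨C r, by simp⟩⟩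
  rintro _ ⟨k, rfl⟩
  have e1 : ((eval₂RingHom (π1.prod π2) z) k).1 = (k.map π1).eval z.1 := by
    rw [coe_eval₂RingHom, eval_map]
    exact hom_eval₂ k (π1.prod π2) (RingHom.fst N U) z
  have e2 : ((eval₂RingHom (π1.prod π2) z) k).2 = (k.map π2).eval z.2 := by
    rw [coe_eval₂RingHom, eval_map]
    exact hom_eval₂ k (π1.prod π2) (RingHom.snd N U) z
  rw [e1, e2]
  exact h k

lemma exists_maximal {Γ : Subring (N × U)} (h : Good Γ) : ∃ Γ', Γ ≤ Γ' ∧ Maximal Good Γ' := by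
  refine zorn_le_nonempty₀ {Γ | Good Γ} ?_ Γ h
  intro c hc hchain Δ hΔ
  refine ⟨sSup c, ?_, fun z hz => le_sSup hz⟩
  intro p hp
  rw [Subring.mem_sSup_of_directedOn ⟨Δ, hΔ⟩ hchain.directedOn] at hp
  obtain ⟨s, hs, hps⟩ := hp
  exact hc hs p hps

lemma max_mem {Γ : Subring (N × U)} (hM : Maximal Good Γ) (z : N × U)
    (h : ∀ k : Γ[X], 0 ≤ (k.map (p1 Γ)).eval z.1 ↔ 0 ≤ (k.map (p2 Γ)).eval z.2) : z ∈ Γ := by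
  obtain ⟨Γ', hG, hz, hr⟩ := adjoin_good (p1 Γ) (p2 Γ) z h
  exact hM.2 hG (fun r hr' => hr ⟨r, hr'⟩) hz

lemma max_inv {Γ : Subring (N × U)} (hM : Maximal Good Γ) {z : N × U} (hz : z ∈ Γ)
    (h0 : z.1 ≠ 0) : (z.1⁻¹, z.2⁻¹) ∈ Γ := by
  have h0' : z.2 ≠ 0 := fun h => h0 ((hM.1.eq_zero hz).mpr h)
  have up : ∀ (w : N × U) (k l : ℕ), k ≤ l → w * z ^ k ∈ Γ → w * z ^ l ∈ Γ := by
    intro w k l hkl h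
    obtain ⟨d, rfl⟩ := Nat.exists_eq_add_of_le hkl
    rw [pow_add, ← mul_assoc]
    exact mul_mem h (pow_mem hz _)
  let Γ' : Subring (N × U) :=
    { carrier := {w | ∃ k : ℕ, w * z ^ k ∈ Γ}
      mul_mem' := by
        rintro a b ⟨k, hk⟩ ⟨l, hl⟩
        refine ⟨k + l, ?_⟩
        have := mul_mem hk hl
        rwa [show a * z ^ k * (b * z ^ l) = a * b * z ^ (k + l) by ring] at this
      one_mem' := ⟨0, by simp⟩
      add_mem' := by
        rintro a b ⟨k, hk⟩ ⟨l, hl⟩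
        refine ⟨max k l, ?_⟩
        rw [add_mul]
        exact add_mem (up _ _ _ (le_max_left _ _) hk) (up _ _ _ (le_max_right _ _) hl)
      zero_mem' := ⟨0, by simp⟩
      neg_mem' := by
        rintro a ⟨k, hk⟩
        exact ⟨k, by rw [neg_mul]; exact neg_mem hk⟩ }
  have hG : Good Γ' := by
    rintro w ⟨k, hk⟩
    have := hM.1 _ (up w k (2 * k) (by omega) hk)
    simp only [Prod.fst_mul, Prod.snd_mul, Prod.pow_fst, Prod.pow_snd, pow_mul] at this
    rwa [mul_nonneg_iff_of_pos_right (by positivity), mul_nonneg_iff_of_pos_right (by positivity)]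
      at this
  refine hM.2 hG (fun w hw => ⟨0, by simpa using hw⟩) ⟨1, ?_⟩
  have : ((z.1⁻¹, z.2⁻¹) : N × U) * z ^ 1 = 1 := by
    ext
    · simp [h0]
    · simp [h0']
  rw [this]
  exact one_mem _

lemma abs_mem (Γ : Subring (N × U)) (a : Γ) : ∃ b : Γ, p1 Γ b = |p1 Γ a| := by
  rcases abs_choice (p1 Γ a) with h | h
  · exact ⟨a, h.symm⟩
  · exact ⟨-a, by rw [h, map_neg]⟩

lemma alg_closed (HN : IVT N) (HU : IVT U) {Γ : Subring (N × U)} (hM : Maximal Good Γ) (n : ℕ) :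
    ∀ f : Γ[X], f.natDegree = n → f ≠ 0 → ∀ θ, (f.map (p1 Γ)).eval θ = 0 →
      ∃ z : Γ, p1 Γ z = θ := by
  classical
  induction n using Nat.strong_induction_on with
  | _ n ih =>
  intro f0 hdeg hf0 θ hθ0
  by_contra! hcon
  have hinj := hM.1.inj
  have hg := hM.1.iff
  -- make monic
  obtain ⟨f, hf, hfdeg, hθ⟩ : ∃ f : Γ[X], f.Monic ∧ f.natDegree ≤ n ∧
      (f.map (p1 Γ)).eval θ = 0 := by
    have hl : f0.leadingCoeff ≠ 0 := leadingCoeff_ne_zero.mpr hf0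
    have hl1 : (f0.leadingCoeff : N × U).1 ≠ 0 := fun h => hl (hinj (by
      rw [map_zero]; exact h))
    have hl2 : (f0.leadingCoeff : N × U).2 ≠ 0 :=
      fun h => hl1 ((hM.1.eq_zero f0.leadingCoeff.2).mpr h)
    have hi := max_inv hM f0.leadingCoeff.2 hl1
    refine ⟨C ⟨_, hi⟩ * f0, monic_C_mul_of_mul_leadingCoeff_eq_one ?_,
      (natDegree_C_mul_le _ _).trans hdeg.le, by simp [hθ0]⟩
    apply Subtype.ext
    apply Prod.ext
    · simp [hl1]
    · simp [hl2]
  have hfd0 : f.natDegree ≠ 0 := by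
    intro h0
    rw [hf.natDegree_eq_zero.mp h0] at hθ
    simp at hθ
  have low : ∀ h : Γ[X], h ≠ 0 → h.natDegree < f.natDegree → ∀ c, (h.map (p1 Γ)).eval c = 0 →
      c ≠ θ ∧ ∃ z : Γ, p1 Γ z = c := by
    intro h h0 hd c hc
    obtain ⟨z, hz⟩ := ih _ (hd.trans_le hfdeg) h rfl h0 c hc
    exact ⟨fun h => hcon z (hz.trans h), z, hz⟩
  obtain ⟨q0, hq0, hq0'⟩ : ∃ q0 : Γ, -p1 Γ q0 < θ ∧ θ < p1 Γ q0 := by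
    have hb := root_bound (f.map (p1 Γ)) (hf.map _) θ hθ
    choose b hb' using abs_mem Γ
    refine ⟨1 + 1 + ∑ i ∈ Finset.range (f.map (p1 Γ)).natDegree, b (f.coeff i), ?_⟩
    have : p1 Γ (1 + 1 + ∑ i ∈ Finset.range (f.map (p1 Γ)).natDegree, b (f.coeff i)) =
        1 + (1 + ∑ i ∈ Finset.range (f.map (p1 Γ)).natDegree, |(f.map (p1 Γ)).coeff i|) := by
      simp [hb', add_assoc]
    rw [this]
    have := abs_le.mp hb
    constructor <;> linarith
  have hdf : derivative f ≠ 0 := by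
    intro h0
    apply hfd0
    rw [deriv_zero hinj h0, natDegree_C]
  have key : ∀ H : Finset Γ[X], (∀ h ∈ H, h.natDegree < f.natDegree) →
      ∃ θ', (f.map (p2 Γ)).eval θ' = 0 ∧ ∀ h ∈ H, 0 < (h.map (p1 Γ)).eval θ →
        0 < (h.map (p2 Γ)).eval θ' := by
    intro H hH
    obtain ⟨p, q, hp, hq, hroots⟩ := find_interval hinj θ (insert (derivative f) H) (by
      intro h hh i hne c hc
      refine low _ hne ?_ c hc
      refine lt_of_le_of_lt ((natDegree_iterate_derivative h i).trans (Nat.sub_le _ _)) ?_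
      rcases Finset.mem_insert.mp hh with rfl | hh
      · exact lt_of_le_of_lt (natDegree_derivative_le f) (by omega)
      · have := hH h hh
        omega) (-q0) q0 (by rwa [map_neg]) hq0'
    have hd := hroots _ (Finset.mem_insert_self _ _) 0 hdf
    simp only [Function.iterate_zero, id, ← derivative_map] at hd
    have hsign : (f.map (p1 Γ)).eval (p1 Γ p) * (f.map (p1 Γ)).eval (p1 Γ q) < 0 := by
      rcases lt_or_gt_of_ne (hd θ hp hq) with hneg | hpos
      · have hall : ∀ c, p1 Γ p < c → c < p1 Γ q →
            0 < (derivative (-(f.map (p1 Γ)))).eval c := by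
          intro c h1 h2
          have := ivt_const_sign HN hd h1 h2 hp hq
          rw [derivative_neg, eval_neg]
          nlinarith
        have h1 := ivt_mono HN hp (fun c h1 h2 => hall c h1 (h2.trans hq))
        have h2 := ivt_mono HN hq (fun c h1 h2 => hall c (hp.trans h1) h2)
        simp only [eval_neg, hθ] at h1 h2
        nlinarith
      · have hall : ∀ c, p1 Γ p < c → c < p1 Γ q →
            0 < (derivative (f.map (p1 Γ))).eval c := by
          intro c h1 h2
          have := ivt_const_sign HN hd h1 h2 hp hq
          exact pos_of_mul_pos_left this hpos.le
        have h1 := ivt_mono HN hp (fun c h1 h2 => hall c h1 (h2.trans hq))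
        have h2 := ivt_mono HN hq (fun c h1 h2 => hall c (hp.trans h1) h2)
        simp only [hθ] at h1 h2
        nlinarith
    have hsign2 : (f.map (p2 Γ)).eval (p2 Γ p) * (f.map (p2 Γ)).eval (p2 Γ q) < 0 := by
      rw [eval_map_pi, eval_map_pi, ← map_mul, ← neg_pos, ← map_neg] at hsign ⊢
      exact (good_pos hg _).mp hsign
    obtain ⟨θ', h1, h2, h3⟩ := HU _ _ _ ((good_lt hg p q).mp (hp.trans hq)) hsign2
    refine ⟨θ', h3, fun h hh hpos => ?_⟩
    exact interval HN HU hg hinj p q _ h le_rfl (hroots h (Finset.mem_insert_of_mem hh)) θ hp hq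
      θ' h1 h2 hpos
  obtain ⟨θ', hθ', hall⟩ : ∃ θ', (f.map (p2 Γ)).eval θ' = 0 ∧ ∀ h : Γ[X],
      h.natDegree < f.natDegree → 0 < (h.map (p1 Γ)).eval θ → 0 < (h.map (p2 Γ)).eval θ' := by
    by_contra! hno
    choose! hh hd hpos hnp using hno
    have hf2 : f.map (p2 Γ) ≠ 0 := (hf.map _).ne_zero
    obtain ⟨θ', h1, h2⟩ := key ((f.map (p2 Γ)).roots.toFinset.image hh) (by
      intro h hmem
      obtain ⟨t, ht, rfl⟩ := Finset.mem_image.mp hmem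
      rw [Multiset.mem_toFinset, mem_roots hf2] at ht
      exact hd t ht)
    refine absurd (h2 (hh θ') (Finset.mem_image_of_mem _ ?_) (hpos _ h1)) (not_lt.mpr (hnp _ h1))
    rw [Multiset.mem_toFinset, mem_roots hf2]
    exact h1
  have hf1 : f ≠ 1 := by rintro rfl; simp at hfd0
  have hr1 : ∀ h : Γ[X], ((h %ₘ f).map (p1 Γ)).eval θ = (h.map (p1 Γ)).eval θ := by
    intro h
    conv_rhs => rw [← modByMonic_add_div h f]
    simp [hθ]
  have hr2 : ∀ h : Γ[X], ((h %ₘ f).map (p2 Γ)).eval θ' = (h.map (p2 Γ)).eval θ' := by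
    intro h
    conv_rhs => rw [← modByMonic_add_div h f]
    simp [hθ']
  have hmem : (θ, θ') ∈ Γ := by
    apply max_mem hM
    intro k
    apply iff_of_pos
    · intro h hpos
      rw [← hr1] at hpos
      rw [← hr2]
      exact hall _ (natDegree_modByMonic_lt h hf hf1) hpos
    · intro h h0
      rw [← hr1] at h0
      rw [← hr2]
      by_cases hz : h %ₘ f = 0
      · simp [hz]
      · exact absurd rfl (low _ hz (natDegree_modByMonic_lt h hf hf1) θ h0).1
  exact hcon ⟨_, hmem⟩ rfl

end
end Schm

namespace Schm
set_option linter.unusedSectionVars false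
open Filter

def EC {U : Type} [Field U] [LinearOrder U] (ι : ℝ →+* U) : Prop :=
  ∀ (n : ℕ) (s : Finset (MvPolynomial (Fin n) ℝ)) (b : Fin n → U),
    (∀ h ∈ s, 0 ≤ MvPolynomial.eval₂ ι b h) → ∃ a : Fin n → ℝ, ∀ h ∈ s, 0 ≤ MvPolynomial.eval a h

section
variable {U I : Type} [Field U] [LinearOrder U] [IsStrictOrderedRing U] (φ : Ultrafilter I)

noncomputable def kap : U →+* (Germ (φ : Filter I) U) where
  toFun x := ((fun _ => x : I → U) : (Germ (φ : Filter I) U))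
  map_one' := rfl
  map_mul' _ _ := rfl
  map_zero' := rfl
  map_add' _ _ := rfl

lemma poly_rep (f : Polynomial (Germ (φ : Filter I) U)) : ∃ F : I → Polynomial U, ∀ a : I → U,
    f.eval (a : (Germ (φ : Filter I) U)) = ((fun i => (F i).eval (a i) : I → U) : (Germ (φ : Filter I) U)) := by
  induction f using Polynomial.induction_on' with
  | add p q hp hq =>
    obtain ⟨P, hP⟩ := hp
    obtain ⟨Q, hQ⟩ := hq
    refine ⟨fun i => P i + Q i, fun a => ?_⟩
    simp only [Polynomial.eval_add, hP, hQ]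
    rfl
  | monomial n c =>
    induction c using Germ.inductionOn with
    | _ c =>
    refine ⟨fun i => Polynomial.monomial n (c i), fun a => ?_⟩
    simp only [Polynomial.eval_monomial]
    rfl

lemma ultra_ivt (H : IVT U) : IVT (Germ (φ : Filter I) U) := by
  intro f a b
  obtain ⟨F, hF⟩ := poly_rep φ f
  induction a using Germ.inductionOn with
  | _ a =>
  induction b using Germ.inductionOn with
  | _ b =>
  intro hab hs
  rw [hF, hF] at hs
  rw [Germ.coe_lt] at hab
  have hs' : ∀ᶠ i in (φ : Filter I), (F i).eval (a i) * (F i).eval (b i) < 0 :=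
    Germ.coe_lt.mp hs
  have : ∀ᶠ i in (φ : Filter I), ∃ c, a i < c ∧ c < b i ∧ (F i).eval c = 0 := by
    filter_upwards [hab, hs'] with i h1 h2
    exact H _ _ _ h1 h2
  obtain ⟨c, hc⟩ := this.choice
  refine ⟨(c : (Germ (φ : Filter I) U)), Germ.coe_lt.mpr (hc.mono fun i h => h.1),
    Germ.coe_lt.mpr (hc.mono fun i h => h.2.1), ?_⟩
  rw [hF]
  exact Germ.coe_eq.mpr (hc.mono fun i h => h.2.2)

lemma ultra_eval {n : ℕ} (ι : ℝ →+* U) (b : Fin n → I → U) (h : MvPolynomial (Fin n) ℝ) :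
    MvPolynomial.eval₂ ((kap φ).comp ι) (fun k => (b k : (Germ (φ : Filter I) U))) h =
      ((fun i => MvPolynomial.eval₂ ι (fun k => b k i) h : I → U) : (Germ (φ : Filter I) U)) := by
  induction h using MvPolynomial.induction_on with
  | C a => simp only [MvPolynomial.eval₂_C]; rfl
  | add p q hp hq => simp only [MvPolynomial.eval₂_add, hp, hq]; rfl
  | mul_X p k hp => simp only [MvPolynomial.eval₂_mul, MvPolynomial.eval₂_X, hp]; rfl

lemma ultra_ec (ι : ℝ →+* U) (H : EC ι) : EC ((kap φ).comp ι) := by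
  intro n s b hb
  have : ∃ b' : Fin n → I → U, b = fun k => (b' k : (Germ (φ : Filter I) U)) := by
    have : ∀ k, ∃ x : I → U, b k = (x : (Germ (φ : Filter I) U)) := fun k => by
      induction b k using Germ.inductionOn with
      | _ x => exact ⟨x, rfl⟩
    choose b' hb' using this
    exact ⟨b', funext hb'⟩
  obtain ⟨b', rfl⟩ := this
  have h2 : ∀ᶠ i in (φ : Filter I), ∀ h ∈ s, 0 ≤ MvPolynomial.eval₂ ι (fun k => b' k i) h := by
    rw [Filter.eventually_all_finset]
    intro h hh
    have := hb h hh
    rw [ultra_eval] at this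
    exact Germ.coe_le.mp this
  obtain ⟨i, hi⟩ := h2.exists
  exact H n s _ hi

end

section
variable {N U : Type} [Field N] [LinearOrder N] [IsStrictOrderedRing N]
  [Field U] [LinearOrder U] [IsStrictOrderedRing U]

def StepConcl (Γ : Subring (N × U)) (b : N) : Prop :=
  ∃ (U' : Type) (_ : Field U') (_ : LinearOrder U') (_ : IsStrictOrderedRing U')
    (κ : U →+* U'), IVT U' ∧ (∀ ι : ℝ →+* U, EC ι → EC (κ.comp ι)) ∧
    ∃ Γ' : Subring (N × U'), Good Γ' ∧ (∃ b', (b, b') ∈ Γ') ∧ ∀ z ∈ Γ, (z.1, κ z.2) ∈ Γ'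

lemma step_bounded (HN : IVT N) (HU : IVT U) (Γ0 : Subring (N × U)) (h0 : Good Γ0) (b : N)
    (hb1 : -2 < b) (hb2 : b < 2) : StepConcl Γ0 b := by
  classical
  obtain ⟨Γ, hle, hM⟩ := exists_maximal h0
  by_cases hmem : ∃ b', (b, b') ∈ Γ
  · exact ⟨U, _, _, inferInstance, RingHom.id U, HU, fun ι h => h, Γ, hM.1, hmem,
      fun z hz => hle hz⟩
  have hb : ∀ z, p1 Γ z ≠ b := by
    rintro z rfl
    exact hmem ⟨z.1.2, z.2⟩
  have hg := hM.1.iff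
  have hu : ∀ S : Finset Γ, ∃ u : U, ∀ z ∈ S, (p1 Γ z < b → p2 Γ z < u) ∧
      (b < p1 Γ z → u < p2 Γ z) := by
    intro S
    obtain ⟨u, h1, h2⟩ := Order.exists_between_finsets
      (lo := (S.filter fun z => p1 Γ z < b).image (p2 Γ))
      (hi := (S.filter fun z => b < p1 Γ z).image (p2 Γ)) (by
        intro x hx y hy
        obtain ⟨z, hz, rfl⟩ := Finset.mem_image.mp hx
        obtain ⟨w, hw, rfl⟩ := Finset.mem_image.mp hy
        rw [Finset.mem_filter] at hz hw
        exact (good_lt hg z w).mp (hz.2.trans hw.2))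
    refine ⟨u, fun z hz => ⟨fun h => h1 _ ?_, fun h => h2 _ ?_⟩⟩
    · exact Finset.mem_image_of_mem _ (Finset.mem_filter.mpr ⟨hz, h⟩)
    · exact Finset.mem_image_of_mem _ (Finset.mem_filter.mpr ⟨hz, h⟩)
  choose u hu using hu
  let φ : Ultrafilter (Finset Γ) := Ultrafilter.of atTop
  have hφ : ∀ z : Γ, ∀ᶠ S in (φ : Filter (Finset Γ)), z ∈ S := fun z =>
    (Ultrafilter.of_le atTop) ((eventually_ge_atTop {z}).mono fun S hS => by simpa using hS)
  let b' : Germ (φ : Filter (Finset Γ)) U := (u : Germ (φ : Filter (Finset Γ)) U)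
  have hgg : ∀ p, 0 ≤ p1 Γ p ↔ 0 ≤ ((kap φ).comp (p2 Γ)) p := by
    intro p
    rw [hg p]
    exact (Germ.const_le_iff (l := (φ : Filter (Finset Γ)))).symm
  have HU' := ultra_ivt φ HU
  obtain ⟨Γ', hG, hz, hr⟩ := adjoin_good (p1 Γ) ((kap φ).comp (p2 Γ)) (b, b') (by
    intro k
    refine transc HN HU' hgg hM.1.inj (fun h hne c hc => alg_closed HN HU hM _ h rfl hne c hc)
      b hb (-2) 2 (by rw [map_neg, map_ofNat]; exact hb1) (by rw [map_ofNat]; exact hb2) b' ?_ ?_ k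
    · intro z hz
      exact Germ.coe_lt.mpr ((hφ z).mono fun S hS => (hu S z hS).1 hz)
    · intro z hz
      exact Germ.coe_lt.mpr ((hφ z).mono fun S hS => (hu S z hS).2 hz))
  exact ⟨_, _, _, inferInstance, kap φ, HU', ultra_ec φ, Γ', hG, ⟨b', hz⟩,
    fun z hz => hr ⟨z, hle hz⟩⟩

lemma step (HN : IVT N) (HU : IVT U) (Γ0 : Subring (N × U)) (h0 : Good Γ0) (b : N) :
    StepConcl Γ0 b := by
  by_cases hb : |b| < 2
  · exact step_bounded HN HU Γ0 h0 b (abs_lt.mp hb).1 (abs_lt.mp hb).2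
  · have hbi : |b⁻¹| < 2 := by
      rw [abs_inv]
      have : |b|⁻¹ ≤ 2⁻¹ := inv_anti₀ (by norm_num) (not_lt.mp hb)
      refine this.trans_lt ?_
      norm_num
    have hbne : b⁻¹ ≠ 0 := by
      rintro h
      rw [inv_eq_zero] at h
      simp [h] at hb
    obtain ⟨U', _, _, _, κ, H1, H2, Γ', hG, ⟨b', hb'⟩, hz⟩ :=
      step_bounded HN HU Γ0 h0 b⁻¹ (abs_lt.mp hbi).1 (abs_lt.mp hbi).2
    obtain ⟨Γ, hle, hM⟩ := exists_maximal hG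
    refine ⟨U', _, _, inferInstance, κ, H1, H2, Γ, hM.1, ⟨b'⁻¹, ?_⟩, fun z h => hle (hz z h)⟩
    have := max_inv hM (hle hb') hbne
    simpa using this

end

lemma ivt_real : IVT ℝ := by
  intro f a b hab h
  have hc : ContinuousOn (fun x => f.eval x) (Set.Icc a b) := f.continuous.continuousOn
  rcases mul_neg_iff.mp h with ⟨h1, h2⟩ | ⟨h1, h2⟩
  · obtain ⟨c, hc, h⟩ := intermediate_value_Ioo' hab.le hc (show (0 : ℝ) ∈ _ from ⟨h2, h1⟩)
    exact ⟨c, hc.1, hc.2, h⟩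
  · obtain ⟨c, hc, h⟩ := intermediate_value_Ioo hab.le hc (show (0 : ℝ) ∈ _ from ⟨h1, h2⟩)
    exact ⟨c, hc.1, hc.2, h⟩

section
variable {N : Type} [Field N] [LinearOrder N] [IsStrictOrderedRing N]

lemma real_hom_nonneg (ι : ℝ →+* N) (r : ℝ) : 0 ≤ ι r ↔ 0 ≤ r := by
  have h : ∀ r : ℝ, 0 ≤ r → 0 ≤ ι r := by
    intro r hr
    rw [← Real.mul_self_sqrt hr, map_mul]
    exact mul_self_nonneg _
  refine ⟨fun hr => ?_, h r⟩
  by_contra! hneg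
  have h1 := h (-r) (by linarith)
  rw [map_neg] at h1
  have : ι r = 0 := by linarith
  rw [map_eq_zero] at this
  linarith

lemma transfer_aux (HN : IVT N) (ιN : ℝ →+* N) (l : List N) :
    ∃ (U : Type) (_ : Field U) (_ : LinearOrder U) (_ : IsStrictOrderedRing U) (ι : ℝ →+* U)
      (Γ : Subring (N × U)), IVT U ∧ EC ι ∧ Good Γ ∧ (∀ r, (ιN r, ι r) ∈ Γ) ∧
      ∀ b ∈ l, ∃ b', (b, b') ∈ Γ := by
  induction l with
  | nil =>
    refine ⟨ℝ, _, _, inferInstance, RingHom.id ℝ, (ιN.prod (RingHom.id ℝ)).range, ivt_real, ?_, ?_,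
      fun r => ⟨r, rfl⟩, by simp⟩
    · intro n s b h
      exact ⟨b, h⟩
    · rintro _ ⟨r, rfl⟩
      exact real_hom_nonneg ιN r
  | cons b l ih =>
    obtain ⟨U, _, _, _, ι, Γ, H1, H2, H3, H4, H5⟩ := ih
    obtain ⟨U', _, _, _, κ, h1, h2, Γ', hG, hb, hz⟩ := step HN H1 Γ H3 b
    refine ⟨U', _, _, inferInstance, κ.comp ι, Γ', h1, h2 ι H2, hG, fun r => hz _ (H4 r), ?_⟩
    intro c hc
    rcases List.mem_cons.mp hc with rfl | hc
    · exact hb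
    · obtain ⟨b', hb'⟩ := H5 c hc
      exact ⟨_, hz _ hb'⟩

theorem transfer (HN : IVT N) (ιN : ℝ →+* N) : EC ιN := by
  intro n s b hs
  obtain ⟨U, _, _, _, ι, Γ, H1, H2, H3, H4, H5⟩ := transfer_aux HN ιN (List.ofFn b)
  have : ∀ k, ∃ b', (b k, b') ∈ Γ := fun k => H5 _ (by simp)
  choose b' hb' using this
  apply H2 n s b'
  intro h hh
  have hmem : (MvPolynomial.eval₂ ιN b h, MvPolynomial.eval₂ ι b' h) ∈ Γ := by
    clear hh
    induction h using MvPolynomial.induction_on with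
    | C a => simpa using H4 a
    | add p q hp hq =>
      simp only [MvPolynomial.eval₂_add]
      exact add_mem hp hq
    | mul_X p k hp =>
      simp only [MvPolynomial.eval₂_mul, MvPolynomial.eval₂_X]
      exact mul_mem hp (hb' k)
  exact (H3 _ hmem).mp (hs h hh)

end
end Schm

namespace Schm
open MvPolynomial
set_option linter.unusedSectionVars false

section
variable {n : ℕ}

lemma pss {m : ℕ} (g : Fin m → MvPolynomial (Fin n) ℝ) (T : Subsemiring (MvPolynomial (Fin n) ℝ))
    (hsq : ∀ x, x * x ∈ T) (hg : ∀ j, g j ∈ T) (f : MvPolynomial (Fin n) ℝ)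
    (hf : ∀ x : Fin n → ℝ, (∀ j, 0 ≤ eval x (g j)) → 0 < eval x f) :
    ∃ s ∈ T, ∃ t ∈ T, f * t = 1 + s := by
  classical
  by_contra! hcon
  have h1 : (-1) ∉ adj T hsq (-f) := by
    rw [mem_adj]
    rintro ⟨s, hs, t, ht, h⟩
    exact hcon s hs t ht (by linear_combination h)
  obtain ⟨F, _, _, _, φ, hφ⟩ := exists_ordered_field (adj T hsq (-f))
    (fun x => le_adj T hsq _ (hsq x)) h1
  obtain ⟨N, _, _, _, ψ, hψ, HN⟩ := exists_ivt_ext F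
  let Φ : MvPolynomial (Fin n) ℝ →+* N := ψ.comp φ
  have hΦ : ∀ h, eval₂ (Φ.comp C) (fun i => Φ (X i)) h = Φ h := by
    intro h
    induction h using MvPolynomial.induction_on with
    | C a => simp
    | add p q hp hq => simp only [eval₂_add, hp, hq, map_add]
    | mul_X p k hp => simp only [eval₂_mul, eval₂_X, hp, map_mul]
  obtain ⟨a, ha⟩ := transfer HN (Φ.comp C) n (insert (-f) (Finset.univ.image g))
    (fun i => Φ (X i)) (by
      intro h hh
      rw [hΦ]
      apply hψ
      apply hφ
      rcases Finset.mem_insert.mp hh with rfl | hh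
      · exact self_mem_adj T hsq _
      · obtain ⟨j, _, rfl⟩ := Finset.mem_image.mp hh
        exact le_adj T hsq _ (hg j))
  have h2 := ha (-f) (Finset.mem_insert_self _ _)
  have h3 := hf a (fun j => ha _ (Finset.mem_insert_of_mem (Finset.mem_image_of_mem _
    (Finset.mem_univ _))))
  rw [map_neg] at h2
  linarith



lemma C_mem (T : Subsemiring (MvPolynomial (Fin n) ℝ)) (hsq : ∀ x, x * x ∈ T)
    {r : ℝ} (hr : 0 ≤ r) : (C r : MvPolynomial (Fin n) ℝ) ∈ T := by
  have := hsq (C (Real.sqrt r))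
  rwa [← C_mul, Real.mul_self_sqrt hr] at this

lemma arch_of_ball (T : Subsemiring (MvPolynomial (Fin n) ℝ)) (hsq : ∀ x, x * x ∈ T)
    (c : ℝ) (hc : C c - ∑ i, X i * X i ∈ T) (f : MvPolynomial (Fin n) ℝ) :
    ∃ N : ℝ, C N - f ∈ T ∧ C N + f ∈ T := by
  induction f using MvPolynomial.induction_on with
  | C a =>
    refine ⟨|a|, ?_, ?_⟩
    · rw [← C_sub]
      exact C_mem T hsq (sub_nonneg.mpr (le_abs_self a))
    · rw [← C_add]
      exact C_mem T hsq (by linarith [neg_abs_le a])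
  | add p q hp hq =>
    obtain ⟨N, h1, h2⟩ := hp
    obtain ⟨M, h3, h4⟩ := hq
    refine ⟨N + M, ?_, ?_⟩
    · have := T.add_mem h1 h3
      rw [C_add]
      convert this using 1
      ring
    · have := T.add_mem h2 h4
      rw [C_add]
      convert this using 1
      ring
  | mul_X p k hp =>
    obtain ⟨N, h1, h2⟩ := hp
    obtain ⟨M, h3, h4⟩ : ∃ M : ℝ, C M - X k ∈ T ∧ C M + X k ∈ T := by
      have hk : C c - X k * X k ∈ T := by
        have : (∑ i ∈ Finset.univ.erase k, X i * X i : MvPolynomial (Fin n) ℝ) ∈ T :=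
          T.sum_mem fun i _ => hsq _
        have h := T.add_mem hc this
        rw [← Finset.add_sum_erase Finset.univ _ (Finset.mem_univ k)] at h
        convert h using 1
        ring
      have e : (C (1 / 2 : ℝ) : MvPolynomial (Fin n) ℝ) * 2 = 1 := by
        rw [show (2 : MvPolynomial (Fin n) ℝ) = C 2 from rfl, ← C_mul]
        norm_num
      refine ⟨c + 1 / 2 * (1 / 2), ?_, ?_⟩
      · have h := T.add_mem hk (hsq (X k - C (1 / 2)))
        rw [C_add, C_mul]
        convert h using 1
        linear_combination (X k) * e
      · have h := T.add_mem hk (hsq (X k + C (1 / 2)))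
        rw [C_add, C_mul]
        convert h using 1
        linear_combination (-X k) * e
    have e : (C (1 / 2 : ℝ) : MvPolynomial (Fin n) ℝ) * 2 = 1 := by
      rw [show (2 : MvPolynomial (Fin n) ℝ) = C 2 from rfl, ← C_mul]
      norm_num
    have hh : (C (1 / 2 : ℝ) : MvPolynomial (Fin n) ℝ) ∈ T := C_mem T hsq (by norm_num)
    refine ⟨N * M, ?_, ?_⟩
    · have h := T.mul_mem hh (T.add_mem (T.mul_mem h1 h4) (T.mul_mem h2 h3))
      rw [C_mul]
      convert h using 1
      linear_combination (-(C N * C M - p * X k)) * e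
    · have h := T.mul_mem hh (T.add_mem (T.mul_mem h1 h3) (T.mul_mem h2 h4))
      rw [C_mul]
      convert h using 1
      linear_combination (-(C N * C M + p * X k)) * e

lemma woermann (T : Subsemiring (MvPolynomial (Fin n) ℝ)) (hsq : ∀ x, x * x ∈ T)
    (c : ℝ) (hc : 0 ≤ c) (s t : MvPolynomial (Fin n) ℝ) (hs : s ∈ T) (ht : t ∈ T)
    (h : (C c - ∑ i, X i * X i) * t = 1 + s) (f : MvPolynomial (Fin n) ℝ) :
    ∃ N : ℝ, C N - f ∈ T ∧ C N + f ∈ T := by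
  set a : MvPolynomial (Fin n) ℝ := ∑ i, X i * X i with ha
  have haT : a ∈ T := T.sum_mem fun i _ => hsq _
  obtain ⟨d, ⟨u, hu, v, hv, hd⟩, _⟩ := arch_of_ball (adj T hsq (C c - a))
    (fun x => le_adj T hsq _ (hsq x)) c (self_mem_adj T hsq _) s
  have e : (C (1 / 2 : ℝ) : MvPolynomial (Fin n) ℝ) * 2 = 1 := by
    rw [show (2 : MvPolynomial (Fin n) ℝ) = C 2 from rfl, ← C_mul]
    norm_num
  have h1 : (1 + s) * (C d - s) ∈ T := by
    have : (1 + s) * (C d - s) = (1 + s) * u + t * v * ((C c - a) * (C c - a)) := by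
      rw [hd]
      linear_combination (-(C c - a) * v) * h
    rw [this]
    exact T.add_mem (T.mul_mem (T.add_mem T.one_mem hs) hu) (T.mul_mem (T.mul_mem ht hv) (hsq _))
  have h2 : C (d + d * (1 / 2) * (d * (1 / 2))) - s ∈ T := by
    have h := T.add_mem h1 (hsq (s - C d * C (1 / 2)))
    simp only [C_add, C_mul] at h ⊢
    convert h using 1
    linear_combination s * C d * e
  apply arch_of_ball T hsq (c * (1 + (d + d * (1 / 2) * (d * (1 / 2)))))
  rw [← ha]
  generalize d + d * (1 / 2) * (d * (1 / 2)) = q at h2 ⊢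
  have := T.add_mem (T.add_mem (T.mul_mem ht (hsq (C c - a))) (T.mul_mem (C_mem T hsq hc) h2))
    (T.mul_mem haT hs)
  simp only [C_add, C_mul, C_1]
  convert this using 1
  linear_combination (-(C c - a)) * h

lemma arch_pos (T : Subsemiring (MvPolynomial (Fin n) ℝ)) (hsq : ∀ x, x * x ∈ T)
    (harch : ∀ f, ∃ N : ℝ, C N - f ∈ T ∧ C N + f ∈ T)
    (f s t : MvPolynomial (Fin n) ℝ) (hs : s ∈ T) (ht : t ∈ T) (h : f * t = 1 + s) : f ∈ T := by
  obtain ⟨N, hN0, hN⟩ : ∃ N : ℝ, 0 < N ∧ C N - t ∈ T := by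
    obtain ⟨N, h1, -⟩ := harch t
    refine ⟨max N 1, by positivity, ?_⟩
    have := T.add_mem h1 (C_mem T hsq (r := max N 1 - N) (by simp))
    rw [C_sub] at this
    convert this using 1
    ring
  have stp : ∀ r : ℝ, 0 ≤ r → f + C r ∈ T → f + C (r - 1 / N) ∈ T := by
    intro r hr hf
    have e : (C (1 / N) : MvPolynomial (Fin n) ℝ) * C N = 1 := by
      rw [← C_mul, one_div, inv_mul_cancel₀ hN0.ne', C_1]
    have := T.mul_mem (C_mem T hsq (r := 1 / N) (by positivity))
      (T.add_mem (T.add_mem (T.mul_mem hN hf) hs) (T.mul_mem (C_mem T hsq hr) ht))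
    rw [C_sub]
    convert this using 1
    linear_combination (-(f + C r)) * e + C (1 / N) * h
  obtain ⟨R, -, hR⟩ := harch f
  have hk : ∀ k : ℕ, f + C (max 0 (R - k / N)) ∈ T := by
    intro k
    induction k with
    | zero =>
      have := T.add_mem hR (C_mem T hsq (r := max 0 (R - (0 : ℕ) / N) - R) (by simp))
      rw [C_sub] at this
      convert this using 1
      ring
    | succ k ih =>
      have h1 := stp _ (le_max_left _ _) ih
      have h2 : 0 ≤ max 0 (R - (k + 1 : ℕ) / N) - (max 0 (R - k / N) - 1 / N) := by
        have hn : 0 < 1 / N := by positivity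
        have e : R - (k + 1 : ℕ) / N = R - k / N - 1 / N := by push_cast; ring
        rw [e]
        rcases max_cases 0 (R - k / N) with h | h
        · have := le_max_left 0 (R - k / N - 1 / N); linarith
        · have := le_max_right 0 (R - k / N - 1 / N); linarith
      have := T.add_mem h1 (C_mem T hsq h2)
      simp only [C_sub] at this
      convert this using 1
      ring
  obtain ⟨k, hkR⟩ := exists_nat_ge (R * N)
  have := hk k
  rwa [max_eq_left, C_0, add_zero] at this
  rw [sub_nonpos, le_div_iff₀ hN0]
  exact hkR

end

/-- Schmuedgen's Positivstellensatz. -/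
theorem schmuedgen {n m : ℕ} (g : Fin m → MvPolynomial (Fin n) ℝ)
    (T : Subsemiring (MvPolynomial (Fin n) ℝ))
    (hsq : ∀ x, x * x ∈ T) (hg : ∀ j, g j ∈ T)
    (hK : IsCompact {x : Fin n → ℝ | ∀ j, 0 ≤ eval x (g j)}) (f : MvPolynomial (Fin n) ℝ)
    (hf : ∀ x : Fin n → ℝ, (∀ j, 0 ≤ eval x (g j)) → 0 < eval x f) : f ∈ T := by
  obtain ⟨s, hs, t, ht, h⟩ := pss g T hsq hg f hf
  refine arch_pos T hsq ?_ f s t hs ht h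
  obtain ⟨c0, hc0⟩ := (hK.image (MvPolynomial.continuous_eval
    (∑ i, X i * X i : MvPolynomial (Fin n) ℝ))).bddAbove
  obtain ⟨s, hs, t, ht, h⟩ := pss g T hsq hg (C (max c0 0 + 1) - ∑ i, X i * X i) (by
    intro x hx
    have := hc0 (Set.mem_image_of_mem _ hx)
    rw [map_sub, eval_C]
    have h2 := le_max_left c0 0
    linarith)
  exact woermann T hsq _ (by positivity) s t hs ht h

end Schm

namespace Schm
open MvPolynomial MeasureTheory
open scoped CompactlySupported
set_option linter.unusedSectionVars false

variable {n m : ℕ}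

lemma L_nonneg_T (g : Fin m → MvPolynomial (Fin n) ℝ) (L : MvPolynomial (Fin n) ℝ →ₗ[ℝ] ℝ)
    (hL : ∀ (J : Finset (Fin m)) (f : MvPolynomial (Fin n) ℝ), 0 ≤ L (f ^ 2 * ∏ j ∈ J, g j))
    (t : MvPolynomial (Fin n) ℝ)
    (ht : t ∈ Subsemiring.closure ({x | ∃ a, x = a * a} ∪ Set.range g)) : 0 ≤ L t := by
  classical
  rw [Subsemiring.mem_closure_iff] at ht
  induction ht using AddSubmonoid.closure_induction with
  | zero => simp
  | add x y _ _ hx hy => rw [map_add]; exact add_nonneg hx hy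
  | mem x hx =>
    have : ∃ (f : MvPolynomial (Fin n) ℝ) (J : Finset (Fin m)), x = f ^ 2 * ∏ j ∈ J, g j := by
      replace hx : x ∈ Submonoid.closure ({x | ∃ a, x = a * a} ∪ Set.range g) := hx
      induction hx using Submonoid.closure_induction_right with
      | one => exact ⟨1, ∅, by simp⟩
      | mul_right x _ y hy ih =>
        obtain ⟨f, J, rfl⟩ := ih
        rcases hy with ⟨a, rfl⟩ | ⟨j, rfl⟩
        · exact ⟨f * a, J, by ring⟩
        · by_cases hj : j ∈ J
          · refine ⟨f * g j, J.erase j, ?_⟩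
            rw [← Finset.mul_prod_erase J g hj]
            ring
          · refine ⟨f, insert j J, ?_⟩
            rw [Finset.prod_insert hj]
            ring
    obtain ⟨f, J, rfl⟩ := this
    exact hL J f

lemma L_nonneg (g : Fin m → MvPolynomial (Fin n) ℝ) (L : MvPolynomial (Fin n) ℝ →ₗ[ℝ] ℝ)
    (hK : IsCompact {x : Fin n → ℝ | ∀ j, 0 ≤ eval x (g j)})
    (hL : ∀ (J : Finset (Fin m)) (f : MvPolynomial (Fin n) ℝ), 0 ≤ L (f ^ 2 * ∏ j ∈ J, g j))
    (f : MvPolynomial (Fin n) ℝ)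
    (hf : ∀ x : Fin n → ℝ, (∀ j, 0 ≤ eval x (g j)) → 0 ≤ eval x f) : 0 ≤ L f := by
  have h1 : 0 ≤ L 1 := by simpa using hL ∅ 1
  have key : ∀ ε : ℝ, 0 < ε → 0 ≤ L f + ε * L 1 := by
    intro ε hε
    have := L_nonneg_T g L hL (f + C ε) (schmuedgen g _
      (fun x => Subsemiring.subset_closure (Or.inl ⟨x, rfl⟩))
      (fun j => Subsemiring.subset_closure (Or.inr ⟨j, rfl⟩)) hK _ (by
        intro x hx
        have := hf x hx
        rw [map_add, eval_C]
        linarith))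
    rwa [map_add, C_eq_smul_one, map_smul, smul_eq_mul] at this
  by_contra! hneg
  have := key (-L f / (2 * (L 1 + 1))) (by apply div_pos <;> linarith)
  have e : -L f / (2 * (L 1 + 1)) * L 1 ≤ -L f / 2 := by
    rw [div_mul_eq_mul_div, div_le_div_iff₀ (by linarith) (by norm_num)]
    nlinarith
  linarith

theorem exists_measure (K : Set (Fin n → ℝ)) (hK : IsCompact K)
    (L : MvPolynomial (Fin n) ℝ →ₗ[ℝ] ℝ)
    (hL : ∀ f, (∀ x ∈ K, 0 ≤ eval x f) → 0 ≤ L f) :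
    ∃ μ : Measure (Fin n → ℝ), IsFiniteMeasure μ ∧ μ Kᶜ = 0 ∧ ∀ f, L f = ∫ x, eval x f ∂μ := by
  have : CompactSpace K := isCompact_iff_compactSpace.mp hK
  let ev : MvPolynomial (Fin n) ℝ →ₗ[ℝ] C_c(K, ℝ) :=
    { toFun := fun f => ⟨⟨fun x => eval x.1 f,
        (MvPolynomial.continuous_eval f).comp continuous_subtype_val⟩,
        HasCompactSupport.of_compactSpace _⟩
      map_add' := by intro f g; ext x; simp
      map_smul' := by intro c f; ext x; simp [smul_eval] }
  have hev : ∀ f x, ev f x = eval x.1 f := fun f x => rfl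
  have hL0 : ∀ f f', ev f = ev f' → L f = L f' := by
    intro f f' h
    have hx : ∀ x ∈ K, eval x f = eval x f' := by
      intro x hx
      have := congrArg (fun u : C_c(K, ℝ) => u ⟨x, hx⟩) h
      exact this
    have h1 := hL (f - f') (fun x h => by rw [map_sub, hx x h, sub_self])
    have h2 := hL (f' - f) (fun x h => by rw [map_sub, hx x h, sub_self])
    rw [map_sub] at h1 h2
    linarith
  choose σ hσ' using fun x : LinearMap.range ev => LinearMap.mem_range.mp x.2
  let L' : LinearMap.range ev →ₗ[ℝ] ℝ :=
    { toFun := fun x => L (σ x)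
      map_add' := by
        intro x y
        rw [← map_add]
        apply hL0
        rw [map_add, hσ', hσ', hσ']
        rfl
      map_smul' := by
        intro c x
        rw [RingHom.id_apply, ← map_smul]
        apply hL0
        rw [map_smul, hσ', hσ']
        rfl }
  let cone : PointedCone ℝ C_c(K, ℝ) :=
    { carrier := {u | ∀ x, 0 ≤ u x}
      zero_mem' := fun x => le_rfl
      add_mem' := fun {a b} ha hb x => add_nonneg (ha x) (hb x)
      smul_mem' := fun c u hu x => mul_nonneg c.2 (hu x) }
  obtain ⟨Λ, h1, h2⟩ := riesz_extension cone ⟨LinearMap.range ev, L'⟩ (by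
    intro x hx
    apply hL
    intro z hz
    have := hx ⟨z, hz⟩
    rw [← hσ' x, hev] at this
    exact this) (by
    intro u
    obtain ⟨c, hc⟩ := (isCompact_range u.continuous).bddBelow
    refine ⟨⟨ev (C (-c)), ⟨_, rfl⟩⟩, fun x => ?_⟩
    have : c ≤ u x := hc ⟨x, rfl⟩
    change 0 ≤ ev (C (-c)) x + u x
    rw [hev, eval_C]
    linarith)
  have h3 : ∀ f, Λ (ev f) = L f := by
    intro f
    have := h1 ⟨ev f, ⟨f, rfl⟩⟩
    rw [this]
    exact hL0 _ _ (hσ' ⟨ev f, ⟨f, rfl⟩⟩)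
  let Λp : C_c(K, ℝ) →ₚ[ℝ] ℝ := PositiveLinearMap.mk₀ Λ (fun u hu => h2 u (fun x => hu x))
  let ν := RealRMK.rieszMeasure Λp
  have : IsFiniteMeasure ν := ⟨isCompact_univ.measure_lt_top⟩
  have hKm : MeasurableSet K := hK.measurableSet
  refine ⟨ν.map Subtype.val, inferInstance, ?_, ?_⟩
  · rw [Measure.map_apply measurable_subtype_coe hKm.compl]
    convert measure_empty (μ := ν)
    ext x
    simp
  · intro f
    rw [integral_map measurable_subtype_coe.aemeasurable
      (MvPolynomial.continuous_eval f).aestronglyMeasurable, ← h3]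
    exact (RealRMK.integral_rieszMeasure Λp (ev f)).symm

lemma easy (K : Set (Fin n → ℝ)) (hK : IsCompact K)
    (L : MvPolynomial (Fin n) ℝ →ₗ[ℝ] ℝ) (μ : Measure (Fin n → ℝ)) [IsFiniteMeasure μ]
    (hμ : μ Kᶜ = 0)
    (h : ∀ α : Fin n →₀ ℕ, L (monomial α (1 : ℝ)) = ∫ x, eval x (monomial α (1 : ℝ)) ∂μ)
    (f : MvPolynomial (Fin n) ℝ) (hf : ∀ x ∈ K, 0 ≤ eval x f) : 0 ≤ L f := by
  have hae : ∀ᵐ x ∂μ, x ∈ K := hμ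
  have hint : ∀ f : MvPolynomial (Fin n) ℝ, Integrable (fun x => eval x f) μ := by
    intro f
    obtain ⟨c, hc⟩ := hK.exists_bound_of_continuousOn
      (MvPolynomial.continuous_eval f).continuousOn
    exact Integrable.of_bound (MvPolynomial.continuous_eval f).aestronglyMeasurable c
      (hae.mono hc)
  have hall : ∀ f, L f = ∫ x, eval x f ∂μ := by
    intro f
    induction f using MvPolynomial.induction_on' with
    | monomial α a =>
      have e : (monomial α a : MvPolynomial (Fin n) ℝ) = a • monomial α 1 := by
        rw [smul_monomial, smul_eq_mul, mul_one]
      rw [e, map_smul, h, smul_eq_mul, ← integral_const_mul]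
      simp only [smul_eval]
    | add p q hp hq =>
      rw [map_add, hp, hq, ← integral_add (hint p) (hint q)]
      simp only [map_add]
  rw [hall]
  exact integral_nonneg_of_ae (hae.mono hf)

end Schm

open MeasureTheory MvPolynomial

/-- **Theorem (moment condition for representing measures on compact semialgebraic
sets).** Let `K = {x : g₁(x) ≥ 0, …, g_m(x) ≥ 0}` be compact, let `y = (y_α)` be a real
sequence and `L` the associated linear functional with `L(x^α) = y_α`. Then `y` has a
representing positive finite Borel measure supported in `K` if and only if
`L(f²·g_J) ≥ 0` for every `J ⊆ {1, …, m}` and every polynomial `f`,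
where `g_J = ∏_{j ∈ J} g_j`. -/
theorem representing_measure_iff_moment_condition
    {n m : ℕ} (g : Fin m → MvPolynomial (Fin n) ℝ)
    (K : Set (Fin n → ℝ))
    (hKdef : K = {x : Fin n → ℝ | ∀ j, 0 ≤ eval x (g j)})
    (hKcomp : IsCompact K)
    (y : (Fin n →₀ ℕ) → ℝ)
    (L : MvPolynomial (Fin n) ℝ →ₗ[ℝ] ℝ)
    (hLy : ∀ α : Fin n →₀ ℕ, L (monomial α (1 : ℝ)) = y α) :
    (∃ μ : Measure (Fin n → ℝ), IsFiniteMeasure μ ∧ μ Kᶜ = 0 ∧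
        ∀ α : Fin n →₀ ℕ, y α = ∫ x, eval x (monomial α (1 : ℝ)) ∂μ) ↔
    (∀ (J : Finset (Fin m)) (f : MvPolynomial (Fin n) ℝ),
        0 ≤ L (f ^ 2 * ∏ j ∈ J, g j)) := by
  subst hKdef
  constructor
  · rintro ⟨μ, hfin, hμ, hy⟩ J f
    refine Schm.easy _ hKcomp L μ hμ (fun α => (hLy α).trans (hy α)) _ ?_
    intro x hx
    rw [map_mul, map_pow, map_prod]
    exact mul_nonneg (sq_nonneg _) (Finset.prod_nonneg fun j _ => hx j)
  · intro hL
    obtain ⟨μ, h1, h2, h3⟩ := Schm.exists_measure _ hKcomp L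
      (fun f hf => Schm.L_nonneg g L hKcomp hL f hf)
    exact ⟨μ, h1, h2, fun α => by rw [← hLy, h3]⟩
end

section
/- Let L be a linear functional on the real polynomial ring in n variables satisfying (1) L(1) ≤ 1, (2) for every t ∈ ℕ the matrix (L(x^β x^γ))_{|β|,|γ| ≤ t} is positive semidefinite, and (3) L(x^α) = L(x^α·(x_1² + ... + x_n²)) for all multi-indices α. Then there exists a positive finite Borel measure μ with support contained in the unit sphere S^{n−1} such that L(p) = ∫_{S^{n−1}} p(x) dμ(x) for every polynomial p. -/
open MeasureTheory MvPolynomial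

namespace SphereMoment

variable {n : ℕ}

/-- Positive functionals compatible with the sphere relation. -/
def PS (L : MvPolynomial (Fin n) ℝ →ₗ[ℝ] ℝ) : Prop :=
  (∀ p, 0 ≤ L (p * p)) ∧ ∀ p, L (p * ∑ i, X i ^ 2) = L p

theorem PS.sq_le {L : MvPolynomial (Fin n) ℝ →ₗ[ℝ] ℝ} (h : PS L) (i : Fin n)
    (p : MvPolynomial (Fin n) ℝ) : L ((p * X i) * (p * X i)) ≤ L (p * p) := by
  rw [← h.2 (p * p), Finset.mul_sum, map_sum]
  have := Finset.single_le_sum (f := fun j => L (p * p * X j ^ 2)) (s := Finset.univ)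
    (fun j _ => by
      have := h.1 (p * X j)
      rwa [show p * X j * (p * X j) = p * p * X j ^ 2 by ring] at this) (Finset.mem_univ i)
  rwa [show p * X i * (p * X i) = p * p * X i ^ 2 by ring]

theorem PS.zero {L : MvPolynomial (Fin n) ℝ →ₗ[ℝ] ℝ} (h : PS L) (h0 : L 1 = 0)
    (p : MvPolynomial (Fin n) ℝ) : L p = 0 := by
  have key : ∀ t : ℝ, 0 ≤ 2 * t * L p + L (p * p) := fun t => by
    have := h.1 (t • 1 + p)
    have e : (t • 1 + p) * (t • 1 + p) = (t * t) • (1 : MvPolynomial (Fin n) ℝ)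
        + (2 * t) • p + p * p := by
      simp only [smul_eq_C_mul, map_mul, map_ofNat]; ring
    rw [e, map_add, map_add, map_smul, map_smul, h0] at this
    simpa using this
  by_contra hne
  have h1 := key (-(L (p * p) + 1) / (2 * L p))
  have : 2 * (-(L (p * p) + 1) / (2 * L p)) * L p = -(L (p * p) + 1) := by
    field_simp
  linarith

/-- Multiply the argument by a fixed polynomial. -/
noncomputable def tw (L : MvPolynomial (Fin n) ℝ →ₗ[ℝ] ℝ) (q : MvPolynomial (Fin n) ℝ) :
    MvPolynomial (Fin n) ℝ →ₗ[ℝ] ℝ := L ∘ₗ LinearMap.mulLeft ℝ q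

theorem tw_apply (L : MvPolynomial (Fin n) ℝ →ₗ[ℝ] ℝ) (q p : MvPolynomial (Fin n) ℝ) :
    tw L q p = L (q * p) := rfl

theorem PS.tw {L : MvPolynomial (Fin n) ℝ →ₗ[ℝ] ℝ} (h : PS L) (i : Fin n) (e : ℝ)
    (he : e * e = 1) : PS (tw L (1 + e • X i)) := by
  refine ⟨fun p => ?_, fun p => ?_⟩
  · rw [tw_apply]
    have h1 := h.1 (p * (1 + e • X i))
    have h2 := h.sq_le i p
    have e1 : p * (1 + e • X i) * (p * (1 + e • X i)) =
        (2 : ℝ) • ((1 + e • X i) * (p * p)) - p * p + (e * e) • ((p * X i) * (p * X i)) := by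
      simp only [smul_eq_C_mul, map_mul, map_ofNat]; ring
    rw [e1, he, one_smul, map_add, map_sub, map_smul, smul_eq_mul] at h1
    linarith
  · rw [tw_apply, tw_apply, ← mul_assoc, h.2]

theorem PS.smul {L : MvPolynomial (Fin n) ℝ →ₗ[ℝ] ℝ} (h : PS L) {c : ℝ} (hc : 0 ≤ c) :
    PS (c • L) := by
  refine ⟨fun p => ?_, fun p => ?_⟩
  · exact mul_nonneg hc (h.1 p)
  · simp [h.2]

theorem bound (p : MvPolynomial (Fin n) ℝ) : ∃ C : ℝ, 0 ≤ C ∧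
    ∀ L : MvPolynomial (Fin n) ℝ →ₗ[ℝ] ℝ, PS L → ∀ q, L ((p * q) * (p * q)) ≤ C * L (q * q) := by
  induction p using MvPolynomial.induction_on with
  | C a =>
    refine ⟨a * a, mul_self_nonneg a, fun L _ q => ?_⟩
    rw [show C a * q * (C a * q) = (a * a) • (q * q) by
      simp only [smul_eq_C_mul, map_mul]; ring, map_smul, smul_eq_mul]
  | add p r hp hr =>
    obtain ⟨c, hc, hp⟩ := hp
    obtain ⟨d, hd, hr⟩ := hr
    refine ⟨2 * c + 2 * d, by positivity, fun L hL q => ?_⟩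
    have h1 := hp L hL q
    have h2 := hr L hL q
    have h3 := hL.1 (p * q - r * q)
    have e : (p + r) * q * ((p + r) * q) = (2 : ℝ) • ((p * q) * (p * q))
      + (2 : ℝ) • ((r * q) * (r * q)) - (p * q - r * q) * (p * q - r * q) := by
      simp only [smul_eq_C_mul, map_ofNat]; ring
    rw [e, map_sub, map_add, map_smul, map_smul, smul_eq_mul, smul_eq_mul]
    linarith
  | mul_X p i hp =>
    obtain ⟨c, hc, hp⟩ := hp
    refine ⟨c, hc, fun L hL q => ?_⟩
    have h1 := hp L hL (q * X i)
    have h2 := mul_le_mul_of_nonneg_left (hL.sq_le i q) hc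
    rw [show p * X i * q * (p * X i * q) = p * (q * X i) * (p * (q * X i)) by ring]
    linarith

theorem bound' (p : MvPolynomial (Fin n) ℝ) : ∃ C : ℝ,
    ∀ L : MvPolynomial (Fin n) ℝ →ₗ[ℝ] ℝ, PS L → L 1 = 1 → L p ∈ Set.Icc (-C) C := by
  obtain ⟨C, hC, h⟩ := bound p
  refine ⟨(1 + C) / 2, fun L hL h1 => ?_⟩
  have a := h L hL 1
  simp only [mul_one, h1] at a
  have b := hL.1 (1 + p)
  have c := hL.1 (1 - p)
  rw [show (1 + p) * (1 + p) = 1 + (2 : ℝ) • p + p * p by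
    simp only [smul_eq_C_mul, map_ofNat]; ring, map_add, map_add, map_smul, h1, smul_eq_mul] at b
  rw [show (1 - p) * (1 - p) = 1 - (2 : ℝ) • p + p * p by
    simp only [smul_eq_C_mul, map_ofNat]; ring, map_add, map_sub, map_smul, h1, smul_eq_mul] at c
  constructor <;> linarith

/-- The states, as functions. -/
def K (n : ℕ) : Set (MvPolynomial (Fin n) ℝ → ℝ) :=
  {f | ∃ L : MvPolynomial (Fin n) ℝ →ₗ[ℝ] ℝ, PS L ∧ L 1 = 1 ∧ ⇑L = f}

theorem K_eq : K n = {f | (∀ p q, f (p + q) = f p + f q) ∧ (∀ (c : ℝ) p, f (c • p) = c * f p) ∧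
    (∀ p, 0 ≤ f (p * p)) ∧ (∀ p, f (p * ∑ i, X i ^ 2) = f p) ∧ f 1 = 1} := by
  ext f
  constructor
  · rintro ⟨L, h, h1, rfl⟩
    exact ⟨fun p q => map_add L p q, fun c p => by simp, h.1, h.2, h1⟩
  · rintro ⟨h1, h2, h3, h4, h5⟩
    exact ⟨⟨⟨f, h1⟩, h2⟩, ⟨h3, h4⟩, h5, rfl⟩

theorem K_closed : IsClosed (K n) := by
  rw [K_eq]
  simp only [Set.ofPred_and, Set.ofPred_forall]
  refine .inter (isClosed_iInter fun p => isClosed_iInter fun q => isClosed_eq (by fun_prop) (by fun_prop))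
    (.inter (isClosed_iInter fun p => isClosed_iInter fun q => isClosed_eq (by fun_prop) (by fun_prop))
    (.inter (isClosed_iInter fun p => isClosed_le (by fun_prop) (by fun_prop))
    (.inter (isClosed_iInter fun p => isClosed_eq (by fun_prop) (by fun_prop))
      (isClosed_eq (by fun_prop) (by fun_prop)))))

theorem K_compact : IsCompact (K n) := by
  choose C hC using fun p : MvPolynomial (Fin n) ℝ => bound' p
  refine (isCompact_univ_pi fun p => isCompact_Icc (a := -C p) (b := C p)).of_isClosed_subset
    K_closed ?_
  rintro f ⟨L, hL, h1, rfl⟩ p _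
  exact hC p L hL h1

theorem K_convex : Convex ℝ (K n) := by
  rintro f ⟨L, hL, hL1, rfl⟩ g ⟨M, hM, hM1, rfl⟩ a b ha hb hab
  refine ⟨a • L + b • M, ⟨fun p => ?_, fun p => ?_⟩, ?_, rfl⟩
  · exact add_nonneg ((hL.smul ha).1 p) ((hM.smul hb).1 p)
  · simp [hL.2, hM.2]
  · simp [hL1, hM1, hab]

theorem extreme_mul {L : MvPolynomial (Fin n) ℝ →ₗ[ℝ] ℝ} (hL : PS L) (h1 : L 1 = 1)
    (hx : ⇑L ∈ (K n).extremePoints ℝ) (i : Fin n) (p : MvPolynomial (Fin n) ℝ) :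
    L (X i * p) = L (X i) * L p := by
  have hA := hL.tw i 1 (by norm_num)
  have hB := hL.tw i (-1) (by norm_num)
  have eA : ∀ p, tw L (1 + (1 : ℝ) • X i) p = L p + L (X i * p) := fun p => by
    rw [tw_apply, one_smul, add_mul, one_mul, map_add]
  have eB : ∀ p, tw L (1 + (-1 : ℝ) • X i) p = L p - L (X i * p) := fun p => by
    rw [tw_apply, neg_smul, one_smul, add_mul, one_mul, map_add, neg_mul, map_neg, sub_eq_add_neg]
  have a0 : 0 ≤ 1 + L (X i) := by
    have := hA.1 1
    rwa [eA, mul_one, mul_one, h1] at this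
  have b0 : 0 ≤ 1 - L (X i) := by
    have := hB.1 1
    rwa [eB, mul_one, mul_one, h1] at this
  rcases a0.eq_or_lt with ha | ha
  · have := hA.zero (by rw [eA, mul_one, h1, ← ha]) p
    rw [eA] at this
    have e : L (X i) = -1 := by linarith
    rw [e]; linarith
  rcases b0.eq_or_lt with hb | hb
  · have := hB.zero (by rw [eB, mul_one, h1, ← hb]) p
    rw [eB] at this
    have e : L (X i) = 1 := by linarith
    rw [e]; linarith
  rw [mem_extremePoints_iff_left] at hx
  have := hx.2 (⇑((1 + L (X i))⁻¹ • tw L (1 + (1 : ℝ) • X i)))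
    ⟨_, hA.smul (inv_nonneg.2 a0), by
      rw [LinearMap.smul_apply, eA, mul_one, h1, smul_eq_mul, inv_mul_cancel₀ ha.ne'], rfl⟩
    (⇑((1 - L (X i))⁻¹ • tw L (1 + (-1 : ℝ) • X i)))
    ⟨_, hB.smul (inv_nonneg.2 b0), by
      rw [LinearMap.smul_apply, eB, mul_one, h1, smul_eq_mul, inv_mul_cancel₀ hb.ne'], rfl⟩
    ⟨(1 + L (X i)) / 2, (1 - L (X i)) / 2, by positivity, by positivity, by ring, by
      funext q
      simp only [Pi.add_apply, Pi.smul_apply, LinearMap.smul_apply, eA, eB, smul_eq_mul]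
      field_simp
      ring⟩
  have := congrFun this p
  rw [LinearMap.smul_apply, eA, smul_eq_mul, inv_mul_eq_iff_eq_mul₀ ha.ne'] at this
  linarith

theorem extreme_eval {L : MvPolynomial (Fin n) ℝ →ₗ[ℝ] ℝ} (hL : PS L) (h1 : L 1 = 1)
    (hx : ⇑L ∈ (K n).extremePoints ℝ) (p : MvPolynomial (Fin n) ℝ) :
    L p = eval (fun i => L (X i)) p := by
  induction p using MvPolynomial.induction_on with
  | C a => rw [show (C a : MvPolynomial (Fin n) ℝ) = a • 1 by simp [smul_eq_C_mul], map_smul, h1]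
           simp
  | add p q hp hq => rw [map_add, map_add, hp, hq]
  | mul_X p i hp => rw [mul_comm, extreme_mul hL h1 hx, hp, map_mul, eval_X]

/-- The sphere. -/
abbrev Sph (n : ℕ) : Set (Fin n → ℝ) := {x | (∑ i, x i ^ 2) = 1}

theorem sph_compact : IsCompact (Sph n) := by
  refine (isCompact_univ_pi fun _ : Fin n => isCompact_Icc (a := (-1 : ℝ)) (b := 1)).of_isClosed_subset
    (isClosed_eq (by fun_prop) (by fun_prop)) ?_
  intro x hx i _
  have hx : (∑ i, x i ^ 2) = 1 := hx
  have := Finset.single_le_sum (f := fun j => x j ^ 2) (s := Finset.univ)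
    (fun j _ => sq_nonneg _) (Finset.mem_univ i)
  rw [hx] at this
  exact abs_le.1 ((sq_le_one_iff_abs_le_one _).1 this)

instance : CompactSpace (Sph n) := isCompact_iff_compactSpace.1 sph_compact

theorem cont_eval (p : MvPolynomial (Fin n) ℝ) :
    Continuous fun x : Sph n => eval (x : Fin n → ℝ) p :=
  (MvPolynomial.continuous_eval p).comp continuous_subtype_val

theorem int_eval (p : MvPolynomial (Fin n) ℝ) (ν : Measure (Sph n)) [IsFiniteMeasure ν] :
    Integrable (fun x : Sph n => eval (x : Fin n → ℝ) p) ν :=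
  (BoundedContinuousFunction.mkOfCompact ⟨_, cont_eval p⟩).integrable ν

/-- Moments of a probability measure. -/
noncomputable def mom (ν : ProbabilityMeasure (Sph n)) (p : MvPolynomial (Fin n) ℝ) : ℝ :=
  ∫ x, eval (x : Fin n → ℝ) p ∂(ν : Measure (Sph n))

theorem mom_cont : Continuous (mom (n := n)) :=
  continuous_pi fun p => ProbabilityMeasure.continuous_integral_boundedContinuousFunction
    (BoundedContinuousFunction.mkOfCompact ⟨_, cont_eval p⟩)

theorem mom_convex : Convex ℝ (Set.range (mom (n := n))) := by
  rintro _ ⟨ν, rfl⟩ _ ⟨ρ, rfl⟩ a b ha hb hab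
  have hP : IsProbabilityMeasure (ENNReal.ofReal a • (ν : Measure (Sph n))
      + ENNReal.ofReal b • (ρ : Measure (Sph n))) := ⟨by
    simp [← ENNReal.ofReal_add ha hb, hab]⟩
  refine ⟨⟨_, hP⟩, ?_⟩
  funext p
  simp only [mom, ProbabilityMeasure.coe_mk, Pi.add_apply, Pi.smul_apply]
  rw [integral_add_measure ((int_eval p _).smul_measure ENNReal.ofReal_ne_top)
    ((int_eval p _).smul_measure ENNReal.ofReal_ne_top), integral_smul_measure,
    integral_smul_measure, ENNReal.toReal_ofReal ha, ENNReal.toReal_ofReal hb]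

theorem K_sub : K n ⊆ Set.range (mom (n := n)) := by
  rw [← closure_convexHull_extremePoints K_compact K_convex]
  refine closure_minimal (convexHull_min ?_ mom_convex) (isCompact_range mom_cont).isClosed
  intro f hf
  obtain ⟨L, hL, h1, rfl⟩ := hf.1
  have hm : (fun i => L (X i)) ∈ Sph n := by
    have := extreme_eval hL h1 hf (1 * ∑ i, X i ^ 2)
    rw [hL.2, h1] at this
    simpa using this.symm
  refine ⟨⟨Measure.dirac ⟨_, hm⟩, inferInstance⟩, ?_⟩
  funext p
  simp only [mom, ProbabilityMeasure.coe_mk]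
  rw [integral_dirac, extreme_eval hL h1 hf p]

end SphereMoment

open SphereMoment in
/-- **Proposition (representing measure on the sphere).**
If a linear functional `L` on the polynomial ring satisfies `L(1) ≤ 1`, has positive
semidefinite moment matrices of all orders, and satisfies
`L(x^α) = L(x^α·(x₁² + ⋯ + xₙ²))` for all `α`, then `L` is represented by a positive
finite Borel measure supported on the unit sphere. -/
theorem limit_functional_representing_measure_sphere
    {n : ℕ} (L : MvPolynomial (Fin n) ℝ →ₗ[ℝ] ℝ)
    (h1 : L 1 ≤ 1)
    (h2 : ∀ t : ℕ, ∀ s : Finset (Fin n →₀ ℕ), (∀ β ∈ s, (∑ i, β i) ≤ t) →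
      ∀ c : (Fin n →₀ ℕ) → ℝ,
      0 ≤ ∑ β ∈ s, ∑ γ ∈ s, c β * c γ * L (monomial β (1 : ℝ) * monomial γ (1 : ℝ)))
    (h3 : ∀ α : Fin n →₀ ℕ,
      L (monomial α (1 : ℝ)) = L (monomial α (1 : ℝ) * ∑ i, X i ^ 2))
    (S : Set (Fin n → ℝ)) (hS : S = {x : Fin n → ℝ | (∑ i, x i ^ 2) = 1}) :
    ∃ μ : Measure (Fin n → ℝ), IsFiniteMeasure μ ∧ μ Sᶜ = 0 ∧
      ∀ p : MvPolynomial (Fin n) ℝ, L p = ∫ x, eval x p ∂μ := by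
  have hm : ∀ (β : Fin n →₀ ℕ) (a : ℝ), monomial β a = a • monomial β (1 : ℝ) := fun β a => by
    rw [smul_monomial, smul_eq_mul, mul_one]
  have hPS : PS L := by
    refine ⟨fun p => ?_, fun p => ?_⟩
    · have := h2 (p.support.sup fun β => ∑ i, β i) p.support
        (fun β hβ => Finset.le_sup (f := fun β : Fin n →₀ ℕ => ∑ i, β i) hβ) (fun β => coeff β p)
      convert this using 1
      conv_lhs => rw [p.as_sum]
      rw [Finset.sum_mul_sum, map_sum]
      refine Finset.sum_congr rfl fun β _ => ?_
      rw [map_sum]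
      refine Finset.sum_congr rfl fun γ _ => ?_
      rw [hm β, hm γ, smul_mul_smul_comm, map_smul, smul_eq_mul]
    · induction p using MvPolynomial.induction_on' with
      | monomial β a => rw [hm, smul_mul_assoc, map_smul, map_smul, h3 β]
      | add p q hp hq => rw [add_mul, map_add, map_add, hp, hq]
  have h0 : 0 ≤ L 1 := by simpa using hPS.1 1
  rcases h0.eq_or_lt with h0 | h0
  · exact ⟨0, inferInstance, by simp, fun p => by simp [hPS.zero h0.symm p]⟩
  obtain ⟨ν, hν⟩ := K_sub ⟨(L 1)⁻¹ • L, hPS.smul (inv_nonneg.2 h0.le),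
    by rw [LinearMap.smul_apply, smul_eq_mul, inv_mul_cancel₀ h0.ne'], rfl⟩
  have hmeas : MeasurableSet (Sph n) := sph_compact.isClosed.measurableSet
  refine ⟨ENNReal.ofReal (L 1) • (ν : Measure (Sph n)).map Subtype.val, ?_, ?_, fun p => ?_⟩
  · exact Measure.smul_finite _ ENNReal.ofReal_ne_top
  · subst hS
    rw [Measure.smul_apply, Measure.map_apply measurable_subtype_coe hmeas.compl]
    have : (Subtype.val : Sph n → Fin n → ℝ) ⁻¹' (Sph n)ᶜ = ∅ := by
      exact Set.eq_empty_of_forall_notMem fun x hx => hx x.2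
    rw [this, measure_empty, smul_zero]
  · rw [integral_smul_measure, ENNReal.toReal_ofReal h0.le,
      (MeasurableEmbedding.subtype_coe hmeas).integral_map]
    have := congrFun hν p
    simp only [mom] at this
    rw [this, LinearMap.smul_apply, smul_smul, mul_inv_cancel₀ h0.ne', one_smul]
end

section
/- Let f be a homogeneous polynomial of degree d in n variables with f_min = min_{x ∈ Δ_{n−1}} f(x) and f_max = max_{x ∈ Δ_{n−1}} f(x), and let f_LP^(r+d) be the value of the level-(r+d) LP relaxation of min_{x ∈ Δ_{n−1}} f(x). Then for r + d > d(d−1)/2 + 1, f_min − f_LP^(r+d) ≤ [ d(d−1) / ( 2(r+d−1) − d(d−1) ) ] · C(2d−1, d) · d^d · ( f_max − f_min ), where C(2d−1,d) is the binomial coefficient. -/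
open MvPolynomial

namespace LPBound

open Finset

/-- Evaluation of the form with word coefficients `c` at the counting vector of a word. -/
lemma ev_count {n d N : ℕ} (c : (Fin d → Fin n) → ℝ) (w : Fin N → Fin n) (S : Finset (Fin N)) :
    ∑ u, c u * ∏ j, (∑ k ∈ S, if w k = u j then (1:ℝ) else 0)
      = ∑ p ∈ Fintype.piFinset (fun _ : Fin d => S), c (w ∘ p) := by
  have h : ∀ u : Fin d → Fin n, ∏ j, (∑ k ∈ S, if w k = u j then (1:ℝ) else 0)
      = ∑ p ∈ Fintype.piFinset (fun _ : Fin d => S), if w ∘ p = u then (1:ℝ) else 0 := by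
    intro u
    rw [Finset.prod_univ_sum]
    refine Finset.sum_congr rfl fun p _ => ?_
    rw [Finset.prod_ite_zero]
    simp [funext_iff]
  simp_rw [h, Finset.mul_sum]
  rw [Finset.sum_comm]
  refine Finset.sum_congr rfl fun p _ => ?_
  simp

lemma ryser {d : ℕ} (F : (Fin d → Fin d) → ℝ) :
    ∑ T : Finset (Fin d), (-1:ℝ) ^ #T * ∑ p ∈ Fintype.piFinset (fun _ : Fin d => Tᶜ), F p
      = ∑ σ : Equiv.Perm (Fin d), F σ := by
  have h : ∀ T : Finset (Fin d), (-1:ℝ) ^ #T * ∑ p ∈ Fintype.piFinset (fun _ : Fin d => Tᶜ), F p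
      = ∑ p : Fin d → Fin d, F p * (if T ⊆ (univ.image p)ᶜ then (-1:ℝ) ^ #T else 0) := by
    intro T
    rw [Finset.mul_sum, ← Finset.sum_filter_add_sum_filter_not univ
      (fun p : Fin d → Fin d => T ⊆ (univ.image p)ᶜ)]
    rw [Finset.sum_eq_zero (s := univ.filter (fun p : Fin d → Fin d => ¬ T ⊆ (univ.image p)ᶜ)),
      add_zero]
    · refine Finset.sum_congr ?_ ?_
      · ext p
        simp only [Fintype.mem_piFinset, mem_compl, mem_filter, mem_univ, true_and]
        constructor
        · intro h a ha
          simp only [mem_compl, mem_image, mem_univ, true_and, not_exists]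
          rintro j rfl
          exact h j ha
        · intro h j hj
          have := h hj
          simp at this
      · intro p hp
        rw [mem_filter] at hp
        rw [if_pos hp.2, mul_comm]
    · intro p hp
      rw [mem_filter] at hp
      rw [if_neg hp.2, mul_zero]
  simp_rw [h]
  rw [Finset.sum_comm]
  have h2 : ∀ p : Fin d → Fin d, ∑ T : Finset (Fin d), F p *
      (if T ⊆ (univ.image p)ᶜ then (-1:ℝ) ^ #T else 0)
      = if Function.Bijective p then F p else 0 := by
    intro p
    rw [← Finset.mul_sum, ← Finset.sum_filter]
    have e : univ.filter (fun T : Finset (Fin d) => T ⊆ (univ.image p)ᶜ)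
      = ((univ.image p)ᶜ).powerset := by
      ext T; simp
    rw [e]
    have e2 : ∑ T ∈ ((univ.image p)ᶜ).powerset, (-1:ℝ) ^ #T
        = if (univ.image p)ᶜ = ∅ then 1 else 0 := by
      have := Finset.sum_powerset_neg_one_pow_card (x := (univ.image p)ᶜ)
      have := congrArg (Int.cast : ℤ → ℝ) this
      push_cast at this
      exact this
    rw [e2]
    have e3 : (univ.image p)ᶜ = ∅ ↔ Function.Bijective p := by
      rw [← Finite.surjective_iff_bijective, Finset.compl_eq_empty_iff]
      constructor
      · intro h y
        have : y ∈ univ.image p := by rw [h]; exact mem_univ y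
        simpa using this
      · intro h; exact Finset.image_univ_of_surjective h
    simp [e3]
  simp_rw [h2]
  rw [← Finset.sum_filter]
  symm
  refine Finset.sum_bij (fun σ _ => (σ : Fin d → Fin d)) ?_ ?_ ?_ ?_
  · intro σ _; exact mem_filter.2 ⟨mem_univ _, σ.bijective⟩
  · intro a _ b _ h; exact DFunLike.coe_injective h
  · intro p hp
    rw [mem_filter] at hp
    exact ⟨Equiv.ofBijective p hp.2, mem_univ _, rfl⟩
  · intros; rfl

lemma word_exists {n d : ℕ} (f : MvPolynomial (Fin n) ℝ) (hf : f.IsHomogeneous d) :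
    ∃ c : (Fin d → Fin n) → ℝ, f = ∑ w, c w • ∏ j, (X (w j) : MvPolynomial (Fin n) ℝ) := by
  have key : f ∈ Submodule.span ℝ (Set.range
      (fun w : Fin d → Fin n => ∏ j, (X (w j) : MvPolynomial (Fin n) ℝ))) := by
    rw [f.as_sum]
    refine Submodule.sum_mem _ fun β hβ => ?_
    have e : monomial β (coeff β f) = coeff β f • (monomial β (1:ℝ)) := by
      rw [smul_monomial]; simp
    rw [e]
    refine Submodule.smul_mem _ _ (Submodule.subset_span ?_)
    have hd : β.degree = d := by
      have := hf (mem_support_iff.1 hβ)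
      rwa [Finsupp.degree_eq_weight_one]
    have hcard : (Finsupp.toMultiset β).toList.length = d := by
      rw [Multiset.length_toList, Finsupp.card_toMultiset, ← hd, Finsupp.degree_apply]; rfl
    subst hcard
    refine ⟨fun j => (Finsupp.toMultiset β).toList.get j, ?_⟩
    have e1 : ∏ j, (X ((Finsupp.toMultiset β).toList.get j) : MvPolynomial (Fin n) ℝ)
        = ((Finsupp.toMultiset β).toList.map X).prod := by
      rw [← List.prod_ofFn]
      congr 1
      conv_rhs => rw [← List.ofFn_get (Finsupp.toMultiset β).toList, List.map_ofFn]
      rfl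
    simp only [e1]
    rw [monomial_eq, C_1, one_mul, ← Multiset.prod_coe, ← Multiset.map_coe, Multiset.coe_toList,
      Finsupp.toMultiset_map, Finsupp.prod_toMultiset]
    rw [Finsupp.prod_mapDomain_index (by simp) (by intros; rw [pow_add])]
  rw [Submodule.mem_span_range_iff_exists_fun] at key
  obtain ⟨c, hc⟩ := key
  exact ⟨c, hc.symm⟩

/-- symmetrization -/
noncomputable def sym {n d : ℕ} (c : (Fin d → Fin n) → ℝ) (w : Fin d → Fin n) : ℝ :=
  (1 / (d.factorial : ℝ)) * ∑ σ : Equiv.Perm (Fin d), c (w ∘ σ)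

lemma sym_form {n d : ℕ} (c : (Fin d → Fin n) → ℝ) :
    ∑ w, sym c w • ∏ j, (X (w j) : MvPolynomial (Fin n) ℝ)
      = ∑ w, c w • ∏ j, (X (w j) : MvPolynomial (Fin n) ℝ) := by
  unfold sym
  simp_rw [mul_smul, Finset.sum_smul]
  rw [← Finset.smul_sum, Finset.sum_comm]
  have : ∀ σ : Equiv.Perm (Fin d), ∑ w : Fin d → Fin n, c (w ∘ σ) •
      ∏ j, (X (w j) : MvPolynomial (Fin n) ℝ)
      = ∑ w, c w • ∏ j, (X (w j) : MvPolynomial (Fin n) ℝ) := by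
    intro σ
    refine Fintype.sum_equiv (Equiv.arrowCongr σ.symm (Equiv.refl _)) _ _ fun w => ?_
    congr 1
    simp only [Equiv.arrowCongr_apply, Equiv.coe_refl, Function.comp, id]
    exact (Equiv.prod_comp σ (fun j => (X (w j) : MvPolynomial (Fin n) ℝ))).symm
  simp_rw [this]
  rw [Finset.sum_const, Finset.card_univ, Fintype.card_perm, Fintype.card_fin, ← Nat.cast_smul_eq_nsmul ℝ,
    smul_smul, one_div, inv_mul_cancel₀, one_smul]
  positivity

lemma eval_form {n d : ℕ} (c : (Fin d → Fin n) → ℝ) (x : Fin n → ℝ) :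
    eval x (∑ w, c w • ∏ j, (X (w j) : MvPolynomial (Fin n) ℝ)) = ∑ w, c w * ∏ j, x (w j) := by
  simp [map_sum, smul_eval, map_prod]

lemma two_pow_bound {d : ℕ} (hd : 0 < d) :
    (2:ℝ) ^ d - 1 ≤ (d.factorial : ℝ) * ((2 * d - 1).choose d : ℝ) := by
  rcases Nat.lt_or_ge d 2 with h | h
  · have : d = 1 := by omega
    subst this
    norm_num
  · have h1 : 2 ^ d ≤ d.factorial * (2 * d - 1).choose d := by
      rw [← Nat.descFactorial_eq_factorial_mul_choose]
      calc 2 ^ d ≤ d ^ d := Nat.pow_le_pow_left h d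
        _ = (2 * d - 1 + 1 - d) ^ d := by congr 1; omega
        _ ≤ _ := Nat.pow_sub_le_descFactorial _ _
    have : (2:ℝ) ^ d ≤ (d.factorial : ℝ) * ((2 * d - 1).choose d : ℝ) := by exact_mod_cast h1
    linarith

/-- Bound on the symmetrized (Bernstein) coefficients. -/
lemma bern_bound {n d : ℕ} (hd : 0 < d) (c : (Fin d → Fin n) → ℝ) (m M : ℝ) 
    (h : ∀ x : Fin n → ℝ, (∀ i, 0 ≤ x i) → ∑ i, x i = 1 →
      m ≤ ∑ w, c w * ∏ j, x (w j) ∧ ∑ w, c w * ∏ j, x (w j) ≤ M) (hmM : m ≤ M)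
    (w : Fin d → Fin n) :
    sym c w ≤ m + ((2 * d - 1).choose d : ℝ) * (d : ℝ) ^ d * (M - m) := by
  -- shifted coefficients
  set c' : (Fin d → Fin n) → ℝ := fun u => c u - m with hc'
  have hsum : ∀ x : Fin n → ℝ, ∑ w, c' w * ∏ j, x (w j)
      = ∑ w, c w * ∏ j, x (w j) - m * (∑ i, x i) ^ d := by
    intro x
    simp only [hc', sub_mul, Finset.sum_sub_distrib, ← Finset.mul_sum]
    congr 2
    have := (Finset.prod_univ_sum (fun _ : Fin d => (univ : Finset (Fin n))) (fun _ i => x i))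
    simp only [Fintype.piFinset_univ, Finset.prod_const, Finset.card_univ, Fintype.card_fin] at this
    exact this.symm
  have hsym : sym c' w = sym c w - m := by
    simp only [sym, hc', Finset.sum_sub_distrib, Finset.sum_const, Finset.card_univ,
      Fintype.card_perm, Fintype.card_fin, nsmul_eq_mul]
    field_simp
  have hcone : ∀ S : Finset (Fin d), S.Nonempty →
      |∑ p ∈ Fintype.piFinset (fun _ : Fin d => S), c' (w ∘ p)| ≤ (d:ℝ) ^ d * (M - m) := by
    intro S hS
    have hs : (0:ℝ) < #S := by exact_mod_cast hS.card_pos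
    rw [← ev_count]
    set y : Fin n → ℝ := fun i => (∑ k ∈ S, if w k = i then (1:ℝ) else 0) / #S with hy
    have e : ∑ u, c' u * ∏ j, (∑ k ∈ S, if w k = u j then (1:ℝ) else 0)
        = (#S:ℝ) ^ d * ∑ u, c' u * ∏ j, y (u j) := by
      rw [Finset.mul_sum]
      refine Finset.sum_congr rfl fun u _ => ?_
      simp only [hy, Finset.prod_div_distrib, Finset.prod_const, Finset.card_univ, Fintype.card_fin]
      field_simp
    have hy0 : ∀ i, 0 ≤ y i := fun i => by
      simp only [hy]; positivity
    have hy1 : ∑ i, y i = 1 := by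
      simp only [hy]
      rw [← Finset.sum_div, Finset.sum_comm]
      simp [hs.ne']
    obtain ⟨a, b⟩ := h y hy0 hy1
    rw [e, hsum, hy1, one_pow, mul_one, abs_mul, abs_of_nonneg (by positivity : (0:ℝ) ≤ (#S:ℝ)^d),
      abs_of_nonneg (by linarith)]
    have hS' : (#S : ℝ) ≤ d := by
      have := Finset.card_le_univ S
      rw [Fintype.card_fin] at this
      exact_mod_cast this
    gcongr
  have hmain : ∑ σ : Equiv.Perm (Fin d), c' (w ∘ σ) ≤ ((2:ℝ) ^ d - 1) * ((d:ℝ) ^ d * (M - m)) := by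
    rw [← ryser (fun p => c' (w ∘ p))]
    have : ∀ T : Finset (Fin d), (-1:ℝ) ^ #T *
        ∑ p ∈ Fintype.piFinset (fun _ : Fin d => Tᶜ), c' (w ∘ p) ≤
        if T = univ then 0 else (d:ℝ) ^ d * (M - m) := by
      intro T
      split_ifs with hT
      · subst hT
        have : Nonempty (Fin d) := ⟨⟨0, hd⟩⟩
        rw [Finset.compl_univ, Fintype.piFinset_empty]
        simp
      · refine (le_abs_self _).trans ?_
        rw [abs_mul, abs_pow, abs_neg, abs_one, one_pow, one_mul]
        apply hcone
        rw [Finset.nonempty_iff_ne_empty]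
        simpa using hT
    refine (Finset.sum_le_sum fun T _ => this T).trans (le_of_eq ?_)
    have e : ∀ T : Finset (Fin d), (if T = univ then 0 else (d:ℝ) ^ d * (M - m))
        = (d:ℝ) ^ d * (M - m) - if T = univ then (d:ℝ) ^ d * (M - m) else 0 := by
      intro T; split_ifs <;> simp
    simp_rw [e]
    rw [Finset.sum_sub_distrib]
    simp
    ring
  have hfin : sym c' w ≤ ((2 * d - 1).choose d : ℝ) * (d : ℝ) ^ d * (M - m) := by
    unfold sym
    rw [one_div, inv_mul_le_iff₀ (by positivity)]
    refine hmain.trans ?_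
    have h0 : 0 ≤ (d:ℝ) ^ d * (M - m) := mul_nonneg (by positivity) (by linarith)
    calc _ ≤ ((d.factorial : ℝ) * ((2 * d - 1).choose d : ℝ)) * ((d:ℝ) ^ d * (M - m)) :=
          mul_le_mul_of_nonneg_right (two_pow_bound hd) h0
      _ = _ := by ring
  linarith

lemma desc_bound {d N : ℕ} (h : d ≤ N) :
    (N:ℝ) ^ d * (2 * N - d * (d - 1)) ≤ 2 * N * (N.descFactorial d : ℝ) := by
  induction d with
  | zero => simp
  | succ d ih =>
    have ih := ih (by omega)
    rw [Nat.descFactorial_succ]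
    push_cast [Nat.cast_sub (show d ≤ N by omega)]
    have hN : (d:ℝ) ≤ N := by exact_mod_cast (show d ≤ N by omega)
    have h1 := mul_le_mul_of_nonneg_right ih (sub_nonneg.2 hN)
    have hdd : (0:ℝ) ≤ d ^ 2 * (d - 1) := by
      rcases Nat.eq_zero_or_pos d with h | h
      · subst h; simp
      · have : (1:ℝ) ≤ d := by exact_mod_cast h
        have : (0:ℝ) ≤ d - 1 := by linarith
        positivity
    have h2 : (0:ℝ) ≤ (N:ℝ) ^ d * (d ^ 2 * (d - 1)) := by positivity
    rw [pow_succ]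
    nlinarith

/-- Polynomial identity: words of length `N` with prescribed letters at the positions `ι`. -/
lemma pos_identity {n d r : ℕ} (A : (Fin d → Fin n) → ℝ) (ι : Fin d ↪ Fin (r + d)) :
    (∑ w, A w • ∏ j, (X (w j) : MvPolynomial (Fin n) ℝ)) * (∑ i, X i) ^ r
      = ∑ W : Fin (r + d) → Fin n, A (W ∘ ι) • ∏ k, (X (W k) : MvPolynomial (Fin n) ℝ) := by
  have h : ∀ w : Fin d → Fin n, (∏ j, (X (w j) : MvPolynomial (Fin n) ℝ)) * (∑ i, X i) ^ r
      = ∑ W : Fin (r + d) → Fin n, if W ∘ ι = w then ∏ k, (X (W k) : MvPolynomial (Fin n) ℝ) else 0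
      := by
    intro w
    have := Finset.prod_univ_sum (fun k : Fin (r + d) => univ.filter
      (fun i : Fin n => ∀ j, ι j = k → w j = i)) (fun _ i => (X i : MvPolynomial (Fin n) ℝ))
    rw [← Finset.sum_filter]
    have e : univ.filter (fun W : Fin (r + d) → Fin n => W ∘ ι = w) = 
      Fintype.piFinset (fun k : Fin (r + d) => univ.filter
      (fun i : Fin n => ∀ j, ι j = k → w j = i)) := by
      ext W
      simp only [mem_filter, mem_univ, true_and, Fintype.mem_piFinset, funext_iff, Function.comp]
      constructor
      · rintro h k j rfl; exact (h j).symm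
      · intro h j; exact (h _ j rfl).symm
    rw [e, ← this, ← Finset.prod_mul_prod_compl (univ.map ι), Finset.prod_map]
    congr 1
    · refine Finset.prod_congr rfl fun j _ => ?_
      have : univ.filter (fun i : Fin n => ∀ j', ι j' = ι j → w j' = i) = {w j} := by
        ext i
        simp only [mem_filter, mem_univ, true_and, mem_singleton]
        constructor
        · intro h; exact (h j rfl).symm
        · rintro rfl j' hj'; rw [ι.injective hj']
      rw [this, Finset.sum_singleton]
    · rw [Finset.prod_congr rfl (g := fun _ => ∑ i, (X i : MvPolynomial (Fin n) ℝ))]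
      · rw [Finset.prod_const, Finset.card_compl, Finset.card_map]
        simp
      · intro k hk
        simp only [mem_compl, mem_map, mem_univ, true_and, not_exists] at hk
        congr 1
        ext i
        simp only [mem_filter, mem_univ, true_and, iff_true]
        intro j hj
        exact absurd hj (hk j)
  rw [Finset.sum_mul]
  simp_rw [smul_mul_assoc, h, Finset.smul_sum]
  rw [Finset.sum_comm]
  refine Finset.sum_congr rfl fun W _ => ?_
  simp

lemma word_monomial {n k : ℕ} (w : Fin k → Fin n) :
    ∃ α : Fin n →₀ ℕ, ∑ i, α i = k ∧
      (∏ j, (X (w j) : MvPolynomial (Fin n) ℝ)) = monomial α 1 := by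
  refine ⟨∑ j, Finsupp.single (w j) 1, ?_, ?_⟩
  · simp only [Finsupp.finsetSum_apply]
    rw [Finset.sum_comm]
    simp [Finsupp.single_apply]
  · simp only [X]
    rw [monomial_sum_one]

lemma L_extend {n N : ℕ} (L : MvPolynomial (Fin n) ℝ →ₗ[ℝ] ℝ)
    (hL : ∀ α : Fin n →₀ ℕ, (∑ i, α i) + 1 ≤ N →
        L (monomial α 1) = L (monomial α 1 * ∑ i, X i)) (k : ℕ) :
    ∀ α : Fin n →₀ ℕ, (∑ i, α i) + k ≤ N →
        L (monomial α 1) = L (monomial α 1 * (∑ i, X i) ^ k) := by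
  induction k with
  | zero => intro α _; simp
  | succ k ih =>
    intro α hα
    rw [hL α (by omega), pow_succ', ← mul_assoc, Finset.mul_sum, Finset.sum_mul, map_sum, map_sum]
    refine Finset.sum_congr rfl fun i _ => ?_
    have e : (monomial α 1 * X i : MvPolynomial (Fin n) ℝ)
      = monomial (α + Finsupp.single i 1) 1 := by
      rw [X, monomial_mul, one_mul]
    rw [e]
    apply ih
    simp [Finset.sum_add_distrib, Finsupp.single_apply]
    omega

lemma L_bound {n d r : ℕ} (L : MvPolynomial (Fin n) ℝ →ₗ[ℝ] ℝ) (h1 : L 1 = 1)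
    (hpos : ∀ α : Fin n →₀ ℕ, (∑ i, α i) ≤ r + d → 0 ≤ L (monomial α 1))
    (hL : ∀ α : Fin n →₀ ℕ, (∑ i, α i) + 1 ≤ r + d →
        L (monomial α 1) = L (monomial α 1 * ∑ i, X i))
    (A : (Fin d → Fin n) → ℝ) (m a : ℝ) (hA : ∀ w, A w ≤ a) (hN : 0 < r + d)
    (h : ∀ x : Fin n → ℝ, (∀ i, 0 ≤ x i) → ∑ i, x i = 1 → m ≤ ∑ w, A w * ∏ j, x (w j)) :
    ((r + d : ℕ) : ℝ) ^ d * m - (((r + d : ℕ) : ℝ) ^ d - (r + d).descFactorial d) * a ≤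
      ((r + d).descFactorial d : ℝ) * L (∑ w, A w • ∏ j, (X (w j) : MvPolynomial (Fin n) ℝ)) := by
  set N := r + d with hNdef
  have hN' : (0:ℝ) < N := by exact_mod_cast hN
  set ℓ : (Fin N → Fin n) → ℝ := fun W => L (∏ k, (X (W k) : MvPolynomial (Fin n) ℝ)) with hℓ
  have hℓ0 : ∀ W, 0 ≤ ℓ W := by
    intro W
    obtain ⟨α, hα, e⟩ := word_monomial W
    simp only [hℓ, e]
    exact hpos α hα.le
  have hℓ1 : ∑ W, ℓ W = 1 := by
    have e0 := L_extend L hL N 0 (by simp)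
    have e1 : (monomial 0 1 : MvPolynomial (Fin n) ℝ) = 1 := rfl
    rw [e1, h1, one_mul] at e0
    rw [e0, ← map_sum]
    congr 1
    have := (Finset.prod_univ_sum (fun _ : Fin N => (univ : Finset (Fin n)))
      (fun _ i => (X i : MvPolynomial (Fin n) ℝ)))
    simp only [Fintype.piFinset_univ, Finset.prod_const, Finset.card_univ, Fintype.card_fin] at this
    exact this.symm
  have hι : ∀ ι : Fin d ↪ Fin N, L (∑ w, A w • ∏ j, (X (w j) : MvPolynomial (Fin n) ℝ))
      = ∑ W, A (W ∘ ι) * ℓ W := by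
    intro ι
    have e := congrArg L (pos_identity A ι)
    rw [map_sum] at e
    simp only [map_smul, smul_eq_mul] at e
    rw [← e, Finset.sum_mul, map_sum, map_sum]
    refine Finset.sum_congr rfl fun w _ => ?_
    rw [smul_mul_assoc, map_smul, map_smul]
    congr 1
    obtain ⟨α, hα, e⟩ := word_monomial w
    rw [e]
    exact L_extend L hL r α (by omega)
  have hcard : ((r + d).descFactorial d : ℝ) = (Fintype.card (Fin d ↪ Fin N) : ℝ) := by
    rw [Fintype.card_embedding_eq]; simp [hNdef]
  have hsum : (N.descFactorial d : ℝ) * L (∑ w, A w • ∏ j, (X (w j) : MvPolynomial (Fin n) ℝ))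
      = ∑ W, (∑ ι : Fin d ↪ Fin N, A (W ∘ ι)) * ℓ W := by
    simp_rw [Finset.sum_mul]
    rw [Finset.sum_comm]
    simp_rw [← hι]
    rw [Finset.sum_const, Finset.card_univ, nsmul_eq_mul, hcard]
  rw [hsum]
  have hW : ∀ W : Fin N → Fin n, (N:ℝ) ^ d * m - ((N:ℝ) ^ d - N.descFactorial d) * a ≤
      ∑ ι : Fin d ↪ Fin N, A (W ∘ ι) := by
    intro W
    have e := ev_count A W univ
    set y : Fin n → ℝ := fun i => (∑ k, if W k = i then (1:ℝ) else 0) / N with hy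
    have e' : ∑ u, A u * ∏ j, (∑ k, if W k = u j then (1:ℝ) else 0)
        = (N:ℝ) ^ d * ∑ u, A u * ∏ j, y (u j) := by
      rw [Finset.mul_sum]
      refine Finset.sum_congr rfl fun u _ => ?_
      simp only [hy, Finset.prod_div_distrib, Finset.prod_const, Finset.card_univ, Fintype.card_fin]
      field_simp
    have hy0 : ∀ i, 0 ≤ y i := fun i => by
      simp only [hy]; positivity
    have hy1 : ∑ i, y i = 1 := by
      simp only [hy]
      rw [← Finset.sum_div, Finset.sum_comm]
      simp [hN'.ne']
    have hm := h y hy0 hy1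
    rw [e', Fintype.piFinset_univ] at e
    have hm2 : (N:ℝ) ^ d * m ≤ ∑ p : Fin d → Fin N, A (W ∘ p) := by
      rw [← e]; gcongr
    have hinj : ∑ p ∈ univ.filter (fun p : Fin d → Fin N => Function.Injective p), A (W ∘ p)
        = ∑ ι : Fin d ↪ Fin N, A (W ∘ ι) := by
      symm
      refine Finset.sum_bij (fun σ _ => (σ : Fin d → Fin N)) ?_ ?_ ?_ ?_
      · intro σ _; simp [σ.injective]
      · intro a _ b _ h; exact DFunLike.coe_injective h
      · intro p hp
        rw [mem_filter] at hp
        exact ⟨⟨p, hp.2⟩, mem_univ _, rfl⟩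
      · intros; rfl
    have hinj1 : (#(univ.filter (fun p : Fin d → Fin N => Function.Injective p)) : ℝ)
        = N.descFactorial d := by
      rw [hcard, ← Finset.card_univ]
      congr 1
      symm
      refine Finset.card_bij (fun σ _ => (σ : Fin d → Fin N)) ?_ ?_ ?_
      · intro σ _; simp [σ.injective]
      · intro a _ b _ h; exact DFunLike.coe_injective h
      · intro p hp
        rw [mem_filter] at hp
        exact ⟨⟨p, hp.2⟩, mem_univ _, rfl⟩
    have hcc : (#(univ.filter (fun p : Fin d → Fin N => ¬ Function.Injective p)) : ℝ)
        = (N:ℝ) ^ d - N.descFactorial d := by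
      have := Finset.card_filter_add_card_filter_not (s := (univ : Finset (Fin d → Fin N)))
        (fun p => Function.Injective p)
      have := congrArg (Nat.cast : ℕ → ℝ) this
      push_cast at this
      rw [hinj1, Finset.card_univ, Fintype.card_fun, Fintype.card_fin, Fintype.card_fin] at this
      push_cast at this
      linarith
    have hnon : ∑ p ∈ univ.filter (fun p : Fin d → Fin N => ¬ Function.Injective p), A (W ∘ p)
        ≤ ((N:ℝ) ^ d - N.descFactorial d) * a := by
      rw [← hcc, ← nsmul_eq_mul]
      exact Finset.sum_le_card_nsmul _ _ _ (fun p _ => hA _)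
    have hsplit := Finset.sum_filter_add_sum_filter_not univ
      (fun p : Fin d → Fin N => Function.Injective p) (fun p => A (W ∘ p))
    rw [hinj] at hsplit
    linarith
  calc _ = ∑ W, ((N:ℝ) ^ d * m - ((N:ℝ) ^ d - N.descFactorial d) * a) * ℓ W := by
        rw [← Finset.mul_sum, hℓ1, mul_one]
    _ ≤ _ := Finset.sum_le_sum fun W _ => mul_le_mul_of_nonneg_right (hW W) (hℓ0 W)

end LPBound

/-- **Theorem (error bound for the LP relaxation of polynomial minimization over the
simplex).** For a homogeneous polynomial `f` of degree `d` with minimum `f_min` and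
maximum `f_max` over the simplex, and `r + d > d(d-1)/2 + 1`,
`f_min - f_LP^(r+d) ≤ [d(d-1)/(2(r+d-1) - d(d-1))]·C(2d-1,d)·d^d·(f_max - f_min)`. -/
theorem lp_relaxation_error_bound_simplex
    {n d r : ℕ} (hn : 0 < n)
    (f : MvPolynomial (Fin n) ℝ) (hf : f.IsHomogeneous d)
    (Δ : Set (Fin n → ℝ)) (hΔ : Δ = {x : Fin n → ℝ | (∀ i, 0 ≤ x i) ∧ ∑ i, x i = 1})
    (fmin fmax : ℝ)
    (hfmin : fmin = sInf ((fun x => eval x f) '' Δ))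
    (hfmax : fmax = sSup ((fun x => eval x f) '' Δ))
    (fLP : ℝ)
    (hfLP : fLP = sInf ((fun L => L f) '' {L : MvPolynomial (Fin n) ℝ → ℝ |
      (∀ q q', L (q + q') = L q + L q') ∧ (∀ (c : ℝ) q, L (c • q) = c * L q) ∧
      L 1 = 1 ∧
      (∀ α : Fin n →₀ ℕ, (∑ i, α i) ≤ r + d → 0 ≤ L (monomial α 1)) ∧
      (∀ α : Fin n →₀ ℕ, (∑ i, α i) + 1 ≤ r + d →
        L (monomial α 1) = L (monomial α 1 * ∑ i, X i))}))
    (hr : ((r : ℝ) + (d : ℝ)) > (d : ℝ) * ((d : ℝ) - 1) / 2 + 1) :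
    fmin - fLP ≤
      ((d : ℝ) * ((d : ℝ) - 1) / (2 * ((r : ℝ) + (d : ℝ) - 1) - (d : ℝ) * ((d : ℝ) - 1)))
        * ((2 * d - 1).choose d : ℝ) * (d : ℝ) ^ d * (fmax - fmin) := by
  classical
  have hΔ' : Δ = stdSimplex ℝ (Fin n) := hΔ
  have hcomp : IsCompact ((fun x => eval x f) '' Δ) := by
    rw [hΔ']
    exact (isCompact_stdSimplex ℝ (Fin n)).image (MvPolynomial.continuous_eval f)
  have hlb : ∀ x : Fin n → ℝ, (∀ i, 0 ≤ x i) → ∑ i, x i = 1 →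
      fmin ≤ eval x f ∧ eval x f ≤ fmax := by
    intro x hx hx1
    have hm : eval x f ∈ (fun x => eval x f) '' Δ := ⟨x, by rw [hΔ]; exact ⟨hx, hx1⟩, rfl⟩
    rw [hfmin, hfmax]
    exact ⟨csInf_le hcomp.bddBelow hm, le_csSup hcomp.bddAbove hm⟩
  set v : Fin n → ℝ := Pi.single ⟨0, hn⟩ 1 with hv
  have hv0 : ∀ i, 0 ≤ v i := by
    intro i
    rw [hv, Pi.single_apply]
    split_ifs <;> norm_num
  have hv1 : ∑ i, v i = 1 := by
    rw [hv]; simp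
  have hmM : fmin ≤ fmax := (hlb v hv0 hv1).1.trans (hlb v hv0 hv1).2
  obtain ⟨c, hc⟩ := LPBound.word_exists f hf
  have hAf : f = ∑ w, LPBound.sym c w • ∏ j, (X (w j) : MvPolynomial (Fin n) ℝ) := by
    rw [LPBound.sym_form, ← hc]
  set K : ℝ := ((2 * d - 1).choose d : ℝ) * (d : ℝ) ^ d with hK
  have hK0 : 0 ≤ K := by positivity
  have hA : ∀ w, LPBound.sym c w ≤ fmin + K * (fmax - fmin) := by
    intro w
    rcases Nat.eq_zero_or_pos d with h0 | h0
    · subst h0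
      have e : eval v f = LPBound.sym c w := by
        rw [hAf, LPBound.eval_form]
        simp [Subsingleton.elim default w]
      have := (hlb v hv0 hv1).2
      rw [e] at this
      simp only [hK]
      norm_num
      exact this
    · refine LPBound.bern_bound h0 c fmin fmax ?_ hmM w
      intro x hx hx1
      rw [← LPBound.eval_form, ← hc]
      exact hlb x hx hx1
  have hd0 : (0:ℝ) ≤ (d:ℝ) * (d - 1) := by
    rcases Nat.eq_zero_or_pos d with h | h
    · subst h; simp
    · have : (1:ℝ) ≤ d := by exact_mod_cast h
      exact mul_nonneg (by positivity) (by linarith)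
  set N : ℕ := r + d with hN
  have hNr : (N:ℝ) = r + d := by rw [hN]; push_cast; ring
  have hNpos : 0 < N := by
    have : (0:ℝ) < N := by rw [hNr]; linarith
    exact_mod_cast this
  have hNpos' : (0:ℝ) < N := by exact_mod_cast hNpos
  rw [← hNr] at hr ⊢
  have hD : 0 < (N.descFactorial d : ℝ) := by
    have : 0 < N.descFactorial d := Nat.descFactorial_pos.2 (by omega)
    exact_mod_cast this
  have hdesc := LPBound.desc_bound (show d ≤ N by omega)
  rw [mul_assoc, mul_assoc, ← mul_assoc ((2 * d - 1).choose d : ℝ), ← hK]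
  set Q : ℝ := (d : ℝ) * ((d : ℝ) - 1) / (2 * ((N : ℝ) - 1) - (d : ℝ) * ((d : ℝ) - 1)) with hQ
  have hden : 0 < 2 * ((N : ℝ) - 1) - (d : ℝ) * ((d : ℝ) - 1) := by linarith
  have hQ1 : (N:ℝ) ^ d - N.descFactorial d ≤ N.descFactorial d * Q := by
    rw [hQ, ← mul_div_assoc, le_div_iff₀ hden]
    have hP : (N.descFactorial d : ℝ) ≤ (N:ℝ) ^ d := by
      exact_mod_cast Nat.descFactorial_le_pow N d
    nlinarith
  have hE : 0 ≤ K * (fmax - fmin) := mul_nonneg hK0 (by linarith)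
  suffices h : fmin - Q * (K * (fmax - fmin)) ≤ fLP by linarith
  rw [hfLP]
  apply le_csInf
  · refine Set.Nonempty.image _ ⟨fun p => eval v p, ?_, ?_, ?_, ?_, ?_⟩
    · intro q q'; simp
    · intro a q; simp [smul_eval]
    · simp
    · intro α _
      simp only [eval_monomial, one_mul]
      exact Finset.prod_nonneg fun i _ => pow_nonneg (hv0 i) _
    · intro α _
      simp only [map_mul, map_sum, eval_X, hv1, mul_one]
  · rintro _ ⟨L, ⟨hadd, hsmul, hL1, hpos, hext⟩, rfl⟩
    let L' : MvPolynomial (Fin n) ℝ →ₗ[ℝ] ℝ :=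
      { toFun := L, map_add' := hadd, map_smul' := hsmul }
    have hb := LPBound.L_bound (r := r) L' hL1 hpos hext (LPBound.sym c) fmin
      (fmin + K * (fmax - fmin)) hA hNpos (by
        intro x hx hx1
        rw [← LPBound.eval_form, ← hAf]
        exact (hlb x hx hx1).1)
    rw [← hAf, ← hN] at hb
    change _ ≤ _ * L f at hb
    change _ ≤ L f
    have h3 := mul_le_mul_of_nonneg_right hQ1 hE
    have h4 : (N.descFactorial d : ℝ) * (fmin - Q * (K * (fmax - fmin))) ≤
        N.descFactorial d * L f := by
      nlinarith
    exact le_of_mul_le_mul_left h4 hD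
end
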